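/- arXiv:2402.07612 — 4 statements merged into one kernel-verified Lean document; each statement's English description precedes it below -/
import Mathlib

section
/- Let Ω ⊆ ℂ be open and connected, F holomorphic on Ω with F ≢ 0, and a ∈ Ω an equilibrium of order m ≥ 2. Then for every ε > 0 such that the closed ε-ball around a is contained in Ω, there exist nonconstant solutions γ₊ : [0,∞) → Ω and γ₋ : (−∞,0] → Ω of ẋ = F(x), both with image contained in { x : 0 < |x − a| < ε }, such that γ₊(t) → a as t → ∞ and γ₋(t) → a as t → −∞. In particular a is neither an attracting node/focus, nor a repelling node/focus, nor a center. -/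
open Set Filter Topology

/-- A solution of `ẋ = F(x)` on the set `s ⊆ ℝ`, staying in `Ω`. -/
def IsSolOn (F : ℂ → ℂ) (Ω : Set ℂ) (s : Set ℝ) (γ : ℝ → ℂ) : Prop :=
  ∀ t ∈ s, γ t ∈ Ω ∧ HasDerivWithinAt γ (F (γ t)) s t

theorem global_sol (v : ℂ → ℂ) (K L : NNReal) (hv : LipschitzWith K v) (hL : ∀ u, ‖v u‖ ≤ L)
    (u₀ : ℂ) : ∃ u : ℝ → ℂ, u 0 = u₀ ∧ ∀ t, HasDerivAt u (v (u t)) t := by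
  have key : ∀ n : ℕ, ∃ α : ℝ → ℂ, α 0 = u₀ ∧
      ∀ t ∈ Ioo (-((n : ℝ) + 1)) (n + 1), HasDerivAt α (v (α t)) t := by
    intro n
    have hn : (0 : ℝ) ≤ n := Nat.cast_nonneg n
    have hmem : (0 : ℝ) ∈ Icc (-((n : ℝ) + 1)) (n + 1) := ⟨by linarith, by linarith⟩
    have hpl : IsPicardLindelof (fun _ => v) (⟨0, hmem⟩ : Icc (-((n : ℝ) + 1)) (n + 1)) u₀
        (L * (n + 1)) 0 L K := by
      refine IsPicardLindelof.of_time_independent (fun x _ => hL x) hv.lipschitzOnWith ?_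
      simp
    obtain ⟨α, h0, h1⟩ := hpl.exists_eq_forall_mem_Icc_hasDerivWithinAt₀
    exact ⟨α, h0, fun t ht => (h1 t (Ioo_subset_Icc_self ht)).hasDerivAt (Icc_mem_nhds ht.1 ht.2)⟩
  choose α h0 h1 using key
  have huniq : ∀ n k : ℕ, n ≤ k → EqOn (α n) (α k) (Ioo (-((n : ℝ) + 1)) (n + 1)) := by
    intro n k hnk
    have hn : (0 : ℝ) ≤ n := Nat.cast_nonneg n
    have hnk' : (n : ℝ) ≤ k := by exact_mod_cast hnk
    refine ODE_solution_unique_of_mem_Ioo (v := fun _ => v) (s := fun _ => univ) (K := K) (t₀ := 0)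
      (fun t _ => hv.lipschitzOnWith) ⟨by linarith, by linarith⟩
      (fun t ht => ⟨h1 n t ht, trivial⟩)
      (fun t ht => ⟨h1 k t ⟨by linarith [ht.1], by linarith [ht.2]⟩, trivial⟩) ?_
    rw [h0, h0]
  have hmem : ∀ t : ℝ, t ∈ Ioo (-((⌈|t|⌉₊ : ℝ) + 1)) (⌈|t|⌉₊ + 1) := by
    intro t
    have h := Nat.le_ceil |t|
    have h2 := abs_le.1 h
    exact ⟨by linarith [h2.1], by linarith [h2.2]⟩
  have hall : ∀ (n : ℕ) (t : ℝ), t ∈ Ioo (-((n : ℝ) + 1)) (n + 1) → α ⌈|t|⌉₊ t = α n t := by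
    intro n t ht
    rcases le_total n ⌈|t|⌉₊ with h | h
    · exact (huniq _ _ h ht).symm
    · exact huniq _ _ h (hmem t)
  refine ⟨fun t => α ⌈|t|⌉₊ t, h0 _, fun t => ?_⟩
  refine (h1 ⌈|t|⌉₊ t (hmem t)).congr_of_eventuallyEq ?_
  filter_upwards [Ioo_mem_nhds (hmem t).1 (hmem t).2] with s hs
  exact hall _ s hs

theorem proj_lip (R : ℝ) : LipschitzWith 2 (fun u : ℂ => (⟨max u.re R, u.im⟩ : ℂ)) := by
  refine LipschitzWith.of_dist_le_mul fun x y => ?_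
  rw [Complex.dist_eq, Complex.dist_eq]
  refine (Complex.norm_le_abs_re_add_abs_im _).trans ?_
  have h1 : |max x.re R - max y.re R| ≤ |x.re - y.re| := abs_max_sub_max_le_abs _ _ _
  have h2 := Complex.abs_re_le_norm (x - y)
  have h3 := Complex.abs_im_le_norm (x - y)
  simp only [Complex.sub_re, Complex.sub_im] at *
  push_cast
  linarith

theorem forward_sol (F g : ℂ → ℂ) (a : ℂ) (p : ℕ) (hp : 1 ≤ p) (hg : AnalyticAt ℂ g a)
    (hga : g a ≠ 0) (hFg : ∀ᶠ z in 𝓝 a, F z = (z - a) ^ (p + 1) * g z) (ε : ℝ) (hε : 0 < ε) :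
    ∃ γ : ℝ → ℂ, (∀ t ∈ Ici (0 : ℝ), HasDerivAt γ (F (γ t)) t) ∧
        (∀ t ∈ Ici (0 : ℝ), γ t ≠ a ∧ dist (γ t) a < ε) ∧
        (∃ t ∈ Ici (0 : ℝ), ∃ s ∈ Ici (0 : ℝ), γ t ≠ γ s) ∧
        Tendsto γ atTop (nhds a) := by
  have hp0 : (p : ℂ) ≠ 0 := by exact_mod_cast (by omega : p ≠ 0)
  have hpR : (0 : ℝ) < p := by exact_mod_cast hp
  obtain ⟨b, hb⟩ := IsAlgClosed.exists_pow_nat_eq (-((p : ℂ) * g a)⁻¹) hp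
  have hb0 : b ≠ 0 := by
    rintro rfl
    rw [zero_pow (by omega)] at hb
    exact (neg_ne_zero.2 (inv_ne_zero (mul_ne_zero hp0 hga))) hb.symm
  obtain ⟨q, hq⟩ : ∃ q : ℝ, q = (p : ℝ)⁻¹ := ⟨_, rfl⟩
  have hq0 : 0 < q := by rw [hq]; positivity
  have hq1 : q ≤ 1 := by rw [hq]; exact inv_le_one_of_one_le₀ (by exact_mod_cast hp)
  obtain ⟨K, s, hs, hK⟩ := (hg.contDiffAt (n := 1)).exists_lipschitzOnWith
  have hclose : ∀ᶠ z in 𝓝 a, ‖g z / g a - 1‖ < 1 / 2 := by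
    have : Tendsto (fun z => g z / g a - 1) (𝓝 a) (𝓝 (g a / g a - 1)) :=
      (hg.continuousAt.tendsto.div_const _).sub_const _
    rw [div_self hga, sub_self] at this
    exact (this.norm.eventually_lt_const (by simp))
  obtain ⟨δ₀, hδ₀, hball⟩ := Metric.eventually_nhds_iff_ball.1 ((hFg.and hclose).and hs)
  obtain ⟨δ, hδ, hδε, hδδ⟩ : ∃ δ > 0, δ ≤ ε ∧ δ ≤ δ₀ :=
    ⟨min ε δ₀, lt_min hε hδ₀, min_le_left _ _, min_le_right _ _⟩
  have hlim : Tendsto (fun R : ℝ => ‖b‖ * R ^ (-q)) atTop (𝓝 0) := by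
    simpa using (tendsto_rpow_neg_atTop hq0).const_mul ‖b‖
  obtain ⟨R, hRδ, hR1⟩ := ((hlim.eventually_lt_const hδ).and (eventually_ge_atTop 1)).exists
  set φ : ℂ → ℂ := fun u => b * u ^ (-(q : ℂ)) with hφ
  have hu0 : ∀ u : ℂ, R ≤ u.re → u ≠ 0 := by
    rintro u hu rfl
    simp at hu
    linarith
  have hnorm : ∀ u : ℂ, ‖φ u‖ = ‖b‖ * ‖u‖ ^ (-q) := by
    intro u
    rw [hφ]
    simp only [norm_mul]
    rw [← Complex.ofReal_neg, Complex.norm_cpow_real]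
  have hnorm_le : ∀ (u : ℂ) (x : ℝ), 0 < x → x ≤ u.re → ‖φ u‖ ≤ ‖b‖ * x ^ (-q) := by
    intro u x hx hxu
    rw [hnorm]
    gcongr ?_ * ?_
    exact Real.rpow_le_rpow_of_nonpos hx (hxu.trans (Complex.re_le_norm u)) (by linarith)
  have hφlt : ∀ u : ℂ, R ≤ u.re → ‖φ u‖ < δ := fun u hu =>
    (hnorm_le u R (by linarith) hu).trans_lt hRδ
  have hφ0 : ∀ u : ℂ, R ≤ u.re → φ u ≠ 0 := by
    intro u hu
    exact mul_ne_zero hb0 (by simp [Complex.cpow_eq_zero_iff, hu0 u hu])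
  have hφd : ∀ u : ℂ, R ≤ u.re → HasDerivAt φ (b * (-(q : ℂ) * u ^ (-(q : ℂ) - 1))) u := by
    intro u hu
    have hsl : u ∈ Complex.slitPlane := Or.inl (by linarith)
    exact ((Complex.hasStrictDerivAt_cpow_const hsl).hasDerivAt).const_mul b
  have hφd' : ∀ u : ℂ, R ≤ u.re → b * (-(q : ℂ) * u ^ (-(q : ℂ) - 1)) = -(q : ℂ) * φ u / u := by
    intro u hu
    rw [Complex.cpow_sub _ _ (hu0 u hu), Complex.cpow_one, hφ]
    ring
  have hφp : ∀ u : ℂ, R ≤ u.re → φ u ^ p = b ^ p / u := by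
    intro u hu
    rw [hφ]
    simp only [mul_pow]
    rw [← Complex.cpow_nat_mul, hq]
    push_cast
    rw [mul_neg, mul_inv_cancel₀ hp0, Complex.cpow_neg_one, div_eq_mul_inv]
  have hconv : Convex ℝ {u : ℂ | R ≤ u.re} := convex_halfSpace_re_ge R
  have hφlip : LipschitzOnWith δ.toNNReal φ {u : ℂ | R ≤ u.re} := by
    refine hconv.lipschitzOnWith_of_nnnorm_hasDerivWithin_le
      (fun u hu => (hφd u hu).hasDerivWithinAt) fun u hu => ?_
    rw [← NNReal.coe_le_coe, coe_nnnorm, Real.coe_toNNReal _ hδ.le, hφd' u hu, norm_div, norm_mul,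
      norm_neg, Complex.norm_real, Real.norm_of_nonneg hq0.le]
    have h1 : 1 ≤ ‖u‖ := hR1.trans ((show R ≤ u.re from hu).trans (Complex.re_le_norm u))
    have h2 := hφlt u hu
    rw [div_le_iff₀ (by linarith)]
    have h3 : 0 ≤ ‖φ u‖ := norm_nonneg _
    nlinarith
  set π : ℂ → ℂ := fun u => ⟨max u.re R, u.im⟩ with hπ
  have hπR : ∀ u, R ≤ (π u).re := fun u => le_max_right _ _
  have hπid : ∀ u : ℂ, R ≤ u.re → π u = u := by
    intro u hu
    apply Complex.ext <;> simp [hπ, hu]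
  have hφin : ∀ u : ℂ, R ≤ u.re → a + φ u ∈ Metric.ball a δ₀ := by
    intro u hu
    simpa using (hφlt u hu).trans_le hδδ
  set v : ℂ → ℂ := fun u => g (a + φ (π u)) / g a with hv
  have hv1 : ∀ u, ‖v u - 1‖ < 1 / 2 := fun u => (hball _ (hφin _ (hπR u))).1.2
  have hvlip : LipschitzWith (‖g a‖₊⁻¹ * (K * (δ.toNNReal * 2))) v := by
    refine LipschitzWith.of_dist_le_mul fun x y => ?_
    have e1 := (proj_lip R).dist_le_mul x y
    have e2 := hφlip.dist_le_mul _ (hπR x) _ (hπR y)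
    have e3 := hK.dist_le_mul _ (hball _ (hφin _ (hπR x))).2 _ (hball _ (hφin _ (hπR y))).2
    rw [dist_add_left] at e3
    have e4 : dist (v x) (v y) = ‖g a‖⁻¹ * dist (g (a + φ (π x))) (g (a + φ (π y))) := by
      rw [dist_eq_norm, dist_eq_norm, hv]
      simp only
      rw [← sub_div, norm_div, div_eq_inv_mul]
    rw [e4]
    push_cast
    calc _ ≤ ‖g a‖⁻¹ * (K * (δ.toNNReal * (2 * dist x y))) := by
          gcongr
          refine e3.trans ?_
          gcongr
          refine e2.trans ?_
          gcongr
          exact e1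
      _ = _ := by ring
  obtain ⟨u, hu00, hud⟩ := global_sol v _ 2 hvlip (fun x => by
    have h1 := hv1 x
    have h2 : ‖v x‖ ≤ ‖v x - 1‖ + ‖(1 : ℂ)‖ := by simpa using norm_add_le (v x - 1) 1
    rw [norm_one] at h2
    push_cast
    linarith) (R : ℂ)
  have hmono : Monotone (fun t => (u t).re - t / 2) := by
    have hd : ∀ t, HasDerivAt (fun t => (u t).re - t / 2) ((v (u t)).re - 1 / 2) t := by
      intro t
      have h1 : HasDerivAt (fun t => (u t).re) ((v (u t)).re) t :=
        (Complex.reCLM.hasFDerivAt.comp_hasDerivAt t (hud t))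
      exact h1.sub ((hasDerivAt_id t).div_const 2)
    refine monotone_of_deriv_nonneg (fun t => (hd t).differentiableAt) fun t => ?_
    rw [(hd t).deriv]
    have h1 := (Complex.abs_re_le_norm (v (u t) - 1)).trans_lt (hv1 (u t))
    have h2 := (abs_lt.1 h1).1
    simp at h2
    linarith
  have hre : ∀ t : ℝ, 0 ≤ t → R + t / 2 ≤ (u t).re := by
    intro t ht
    have := hmono ht
    simp [hu00] at this
    linarith
  have hreR : ∀ t : ℝ, 0 ≤ t → R ≤ (u t).re := fun t ht => by linarith [hre t ht]
  have htend : Tendsto (fun t => a + φ (u t)) atTop (𝓝 a) := by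
    have h0 : Tendsto (fun t => φ (u t)) atTop (𝓝 0) := by
      have hlin : Tendsto (fun t : ℝ => R + t / 2) atTop atTop :=
        tendsto_atTop_add_const_left _ _ (tendsto_id.atTop_div_const (by norm_num))
      refine squeeze_zero_norm' ?_ (hlim.comp hlin)
      filter_upwards [eventually_ge_atTop 0] with t ht
      exact hnorm_le _ _ (by linarith) (hre t ht)
    simpa using h0.const_add a
  have hne : ∀ t : ℝ, 0 ≤ t → a + φ (u t) ≠ a := fun t ht => by
    simpa using hφ0 _ (hreR t ht)
  refine ⟨fun t => a + φ (u t), ?_, ?_, ?_, htend⟩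
  · intro t ht
    have hR := hreR t ht
    have h1 : HasDerivAt (fun t => a + φ (u t)) _ t :=
      ((hφd _ hR).comp t (hud t)).const_add a
    convert h1 using 1
    rw [(hball _ (hφin _ hR)).1.1, hφd' _ hR, add_sub_cancel_left, pow_succ, hφp _ hR, hb, hv, hq]
    simp only
    rw [hπid _ hR]
    push_cast
    field_simp
  · intro t ht
    refine ⟨hne t ht, ?_⟩
    simpa using (hφlt _ (hreR t ht)).trans_le hδε
  · by_contra! hcon
    have hc : Tendsto (fun t => a + φ (u t)) atTop (𝓝 (a + φ (u 0))) := by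
      refine tendsto_const_nhds.congr' ?_
      filter_upwards [eventually_ge_atTop 0] with t ht
      exact hcon 0 self_mem_Ici t ht
    exact hne 0 le_rfl (tendsto_nhds_unique hc htend)

/-- near an equilibrium `a` of order `m ≥ 2` of a holomorphic flow, every
closed `ε`-ball inside `Ω` contains a nonconstant forward orbit tending to `a` and a
nonconstant backward orbit tending to `a`, both staying in the punctured ball. -/
theorem stmt_10 (Ω : Set ℂ) (hΩ : IsOpen Ω) (hconn : IsConnected Ω)
    (F : ℂ → ℂ) (hF : DifferentiableOn ℂ F Ω) (hF0 : ∃ z ∈ Ω, F z ≠ 0)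
    (a : ℂ) (ha : a ∈ Ω) (m : ℕ) (hm : 2 ≤ m)
    (hlow : ∀ k < m, iteratedDeriv k F a = 0) (hord : iteratedDeriv m F a ≠ 0) :
    ∀ ε > 0, Metric.closedBall a ε ⊆ Ω →
      (∃ γ : ℝ → ℂ, IsSolOn F Ω (Ici 0) γ ∧
        (∀ t ∈ Ici (0 : ℝ), γ t ≠ a ∧ dist (γ t) a < ε) ∧
        (∃ t ∈ Ici (0 : ℝ), ∃ s ∈ Ici (0 : ℝ), γ t ≠ γ s) ∧
        Tendsto γ atTop (nhds a)) ∧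
      (∃ γ : ℝ → ℂ, IsSolOn F Ω (Iic 0) γ ∧
        (∀ t ∈ Iic (0 : ℝ), γ t ≠ a ∧ dist (γ t) a < ε) ∧
        (∃ t ∈ Iic (0 : ℝ), ∃ s ∈ Iic (0 : ℝ), γ t ≠ γ s) ∧
        Tendsto γ atBot (nhds a)) := by
  intro ε hε hsub
  have hFa : AnalyticAt ℂ F a := hF.analyticAt (hΩ.mem_nhds ha)
  obtain ⟨p, rfl⟩ : ∃ p, m = p + 1 := ⟨m - 1, by omega⟩
  have hp : 1 ≤ p := by omega
  obtain ⟨g, hg, hga, hFg⟩ := hFa.analyticOrderAt_eq_natCast.1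
    ((analyticOrderAt_eq_nat_iff_iteratedDeriv_eq_zero hFa).2 ⟨hlow, hord⟩)
  simp only [smul_eq_mul] at hFg
  constructor
  · obtain ⟨γ, h1, h2, h3, h4⟩ := forward_sol F g a p hp hg hga hFg ε hε
    exact ⟨γ, fun t ht => ⟨hsub (h2 t ht).2.le, (h1 t ht).hasDerivWithinAt⟩, h2, h3, h4⟩
  · obtain ⟨γ, h1, h2, ⟨t, ht, s, hs, hts⟩, h4⟩ :=
      forward_sol (fun z => -F z) (fun z => -g z) a p hp hg.neg (neg_ne_zero.2 hga)
        (by filter_upwards [hFg] with z hz; rw [hz]; ring) ε hε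
    have hneg : ∀ t ∈ Iic (0 : ℝ), -t ∈ Ici (0 : ℝ) := fun t ht =>
      mem_Ici.2 (neg_nonneg.2 (mem_Iic.1 ht))
    refine ⟨fun t => γ (-t), fun t ht => ⟨hsub (h2 _ (hneg t ht)).2.le, ?_⟩,
      fun t ht => h2 _ (hneg t ht), ⟨-t, mem_Iic.2 (neg_nonpos.2 (mem_Ici.1 ht)), -s,
        mem_Iic.2 (neg_nonpos.2 (mem_Ici.1 hs)), by simpa using hts⟩,
      h4.comp tendsto_neg_atBot_atTop⟩
    have := (h1 _ (hneg t ht)).scomp t (hasDerivAt_neg t)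
    simp only [neg_smul, one_smul, neg_neg] at this
    exact this.hasDerivWithinAt
end

section
/- Let Ω ⊆ ℂ be open and connected, F holomorphic on Ω with F ≢ 0, and a ∈ Ω an equilibrium of order m ≥ 2. Let ε > 0 be such that the closed ε-ball around a is contained in Ω and contains no zero of F other than a. Then there exists a nonconstant solution γ : ℝ → Ω of ẋ = F(x) with image contained in { x : 0 < |x − a| < ε } such that γ(t) → a as t → ∞ and γ(t) → a as t → −∞; that is, every such neighborhood of a contains a homoclinic orbit of a. -/
open Set Filter Topology

lemma local_sol (G : ℂ → ℂ) (hG : LocallyLipschitz G) (L : NNReal) (hb : ∀ x, ‖G x‖ ≤ L)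
    (x₀ : ℂ) (T : ℝ) : ∃ v : ℝ → ℂ, v 0 = x₀ ∧
      (0 < T → ∀ t ∈ Icc (-T) T, HasDerivWithinAt v (G (v t)) (Icc (-T) T) t) := by
  by_cases hT : 0 < T
  · obtain ⟨K, hK⟩ := (hG.locallyLipschitzOn (s := Metric.closedBall x₀ ((L * T.toNNReal : NNReal) : ℝ))).exists_lipschitzOnWith_of_compact
      (isCompact_closedBall _ _)
    have h0 : (0:ℝ) ∈ Icc (-T) T := ⟨by linarith, hT.le⟩
    have := IsPicardLindelof.of_time_independent (f := G) (tmin := -T) (tmax := T) (t₀ := ⟨0, h0⟩)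
      (x₀ := x₀) (a := L * T.toNNReal) (r := 0) (L := L) (K := K) (fun x _ => hb x) hK
      (by simp [hT.le])
    obtain ⟨v, hv0, hv⟩ := this.exists_eq_forall_mem_Icc_hasDerivWithinAt₀
    exact ⟨v, hv0, fun _ => hv⟩
  · exact ⟨fun _ => x₀, rfl, fun h => absurd h hT⟩

lemma global_sol_s11 (G : ℂ → ℂ) (hG : LocallyLipschitz G) (L : NNReal) (hb : ∀ x, ‖G x‖ ≤ L)
    (x₀ : ℂ) : ∃ v : ℝ → ℂ, v 0 = x₀ ∧ ∀ t, HasDerivAt v (G (v t)) t := by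
  choose γ h0 h1 using local_sol G hG L hb x₀
  have hd : ∀ T, 0 < T → ∀ t ∈ Ioo (-T) T, HasDerivAt (γ T) (G (γ T t)) t := fun T hT t ht =>
    (h1 T hT t (Ioo_subset_Icc_self ht)).hasDerivAt (Icc_mem_nhds ht.1 ht.2)
  have hc : ∀ T, 0 < T → ContinuousOn (γ T) (Icc (-T) T) := fun T hT t ht =>
    (h1 T hT t ht).continuousWithinAt
  have heq : ∀ T S, 0 < T → T ≤ S → EqOn (γ T) (γ S) (Ioo (-T) T) := by
    intro T S hT hTS
    have hS : 0 < S := hT.trans_le hTS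
    have hcpt : IsCompact (γ T '' Icc (-T) T ∪ γ S '' Icc (-S) S) :=
      (isCompact_Icc.image_of_continuousOn (hc T hT)).union
        (isCompact_Icc.image_of_continuousOn (hc S hS))
    obtain ⟨K, hK⟩ := (hG.locallyLipschitzOn
      (s := γ T '' Icc (-T) T ∪ γ S '' Icc (-S) S)).exists_lipschitzOnWith_of_compact hcpt
    refine ODE_solution_unique_of_mem_Ioo (v := fun _ => G) (K := K) (t₀ := 0)
      (s := fun _ => γ T '' Icc (-T) T ∪ γ S '' Icc (-S) S) (fun _ _ => hK)
      ⟨by linarith, hT⟩ ?_ ?_ (by rw [h0, h0])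
    · exact fun t ht => ⟨hd T hT t ht, Or.inl ⟨t, Ioo_subset_Icc_self ht, rfl⟩⟩
    · intro t ht
      have : t ∈ Ioo (-S) S := ⟨by linarith [ht.1], by linarith [ht.2]⟩
      exact ⟨hd S hS t this, Or.inr ⟨t, Ioo_subset_Icc_self this, rfl⟩⟩
  refine ⟨fun t => γ (|t| + 1) t, h0 _, fun t => ?_⟩
  have key : ∀ s ∈ Ioo (-(|t|+1)) (|t|+1), γ (|s|+1) s = γ (|t|+1) s := by
    intro s hs
    rcases le_total (|s|+1) (|t|+1) with h | h
    · exact heq _ _ (by positivity) h (abs_lt.mp (lt_add_one _))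
    · exact (heq _ _ (by positivity) h hs).symm
  have ht : t ∈ Ioo (-(|t|+1)) (|t|+1) := abs_lt.mp (lt_add_one _)
  refine (hd (|t|+1) (by positivity) t ht).congr_of_eventuallyEq ?_
  filter_upwards [Ioo_mem_nhds ht.1 ht.2] with s hs using key s hs

/-- drift -/
lemma drift (v : ℝ → ℂ) (v' : ℝ → ℂ) (hv : ∀ t, HasDerivAt v (v' t) t)
    (hb : ∀ t, ‖v' t - Complex.I‖ ≤ 1/4) (t : ℝ) : ‖v t - v 0 - t * Complex.I‖ ≤ 1/4 * |t| := by
  have h : ∀ s, HasDerivAt (fun s : ℝ => v s - s * Complex.I) (v' s - Complex.I) s := by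
    intro s
    have := (Complex.ofRealCLM.hasDerivAt (x := s)).mul_const Complex.I
    exact (hv s).sub (by simpa using this)
  have := (convex_univ (𝕜 := ℝ) (E := ℝ)).norm_image_sub_le_of_norm_hasDerivWithin_le
    (fun s _ => (h s).hasDerivWithinAt) (fun s _ => hb s) (mem_univ 0) (mem_univ t)
  simp only [Complex.ofReal_zero, zero_mul, sub_zero, Real.norm_eq_abs] at this
  rwa [sub_right_comm] at this

lemma flow_w (H : ℂ → ℂ) (R : ℝ)
    (hH : ∀ v ∈ Complex.slitPlane, R < ‖v‖ → DifferentiableAt ℂ H v)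
    (hbd : ∀ v ∈ Complex.slitPlane, R < ‖v‖ → ‖H v - Complex.I‖ ≤ 1/4) :
    ∃ v : ℝ → ℂ, ∀ t, v t ∈ Complex.slitPlane ∧ R < ‖v t‖ ∧ 3/4*|t| ≤ ‖v t‖ ∧
      HasDerivAt v (H (v t)) t := by
  set R₁ := max R 0 with hR₁
  have hR0 : 0 ≤ R₁ := le_max_right _ _
  have hRR : R ≤ R₁ := le_max_left _ _
  set K := R₁ + R₁ ^ 2 + 1 with hK
  let l : ℂ → ℝ := fun v => v.re + v.im ^ 2 - K
  have hlC : ContDiff ℝ 1 l := by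
    have h1 : ContDiff ℝ 1 (fun v : ℂ => v.re) := Complex.reCLM.contDiff
    have h2 : ContDiff ℝ 1 (fun v : ℂ => v.im) := Complex.imCLM.contDiff
    exact (h1.add (h2.pow 2)).sub contDiff_const
  have hgood : ∀ v, -1 < l v → v ∈ Complex.slitPlane ∧ R < ‖v‖ := by
    intro v hv
    have hv' : R₁ + R₁ ^ 2 < v.re + v.im ^ 2 := by simp only [l, hK] at hv; linarith
    constructor
    · rw [Complex.mem_slitPlane_iff]
      by_cases h : v.im = 0
      · left; rw [h] at hv'; nlinarith
      · exact Or.inr h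
    · by_contra! hcon
      have h1 := Complex.re_le_norm v
      have h2 := abs_le.mp (Complex.abs_im_le_norm v)
      have h3 : v.im ^ 2 ≤ R₁ ^ 2 := sq_le_sq' (by linarith) (by linarith)
      linarith
  have hopen : IsOpen {v | -1 < l v} := isOpen_lt continuous_const hlC.continuous
  have hHC : ∀ v, -1 < l v → ContDiffAt ℝ 1 H v := by
    intro v hv
    have hd : DifferentiableOn ℂ H {v | -1 < l v} := fun w hw =>
      (hH w (hgood w hw).1 (hgood w hw).2).differentiableWithinAt
    have := (hd.analyticAt (hopen.mem_nhds hv)).contDiffAt (n := 1)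
    exact this.restrict_scalars ℝ
  let G : ℂ → ℂ := fun v => Complex.I + Real.smoothTransition (l v) • (H v - Complex.I)
  have hGC : ContDiff ℝ 1 G := by
    rw [contDiff_iff_contDiffAt]
    intro v
    by_cases hv : -1 < l v
    · exact contDiffAt_const.add
        (((Real.smoothTransition.contDiff (n := 1)).contDiffAt.comp v hlC.contDiffAt).smul
          ((hHC v hv).sub contDiffAt_const))
    · have hv0 : l v < 0 := by linarith
      have : G =ᶠ[𝓝 v] fun _ => Complex.I := by
        filter_upwards [(isOpen_lt hlC.continuous continuous_const).mem_nhds hv0] with w hw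
        have hw' : l w ≤ 0 := le_of_lt hw
        simp [G, Real.smoothTransition.zero_of_nonpos hw']
      exact contDiffAt_const.congr_of_eventuallyEq this
  have hGb : ∀ v, ‖G v - Complex.I‖ ≤ 1/4 := by
    intro v
    simp only [G, add_sub_cancel_left, norm_smul, Real.norm_eq_abs]
    by_cases hv : -1 < l v
    · have h1 := hbd v (hgood v hv).1 (hgood v hv).2
      have h2 := Real.smoothTransition.nonneg (l v)
      have h3 := Real.smoothTransition.le_one (l v)
      rw [abs_of_nonneg h2]
      nlinarith [norm_nonneg (H v - Complex.I)]
    · rw [Real.smoothTransition.zero_of_nonpos (by linarith)]; norm_num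
  have hGb2 : ∀ v, ‖G v‖ ≤ (2 : NNReal) := by
    intro v
    have := norm_add_le (G v - Complex.I) Complex.I
    simp only [sub_add_cancel, Complex.norm_I] at this
    have h2 := hGb v
    push_cast
    linarith
  obtain ⟨v, hv0, hv⟩ := global_sol_s11 G hGC.locallyLipschitz 2 hGb2 ((K + 2 : ℝ) : ℂ)
  refine ⟨v, fun t => ?_⟩
  have hd := drift v _ hv (fun t => hGb _) t
  rw [hv0] at hd
  have hre := (Complex.abs_re_le_norm _).trans hd
  have him := (Complex.abs_im_le_norm _).trans hd
  simp at hre him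
  have ht : 3/4*|t| ≤ |(v t).im| := by
    have := abs_sub_abs_le_abs_sub t (v t).im
    rw [abs_sub_comm] at this
    linarith
  have hl : 1 ≤ l (v t) := by
    have h1 := (abs_le.mp hre).1
    simp only [l]
    have h2 := sq_abs (v t).im
    nlinarith [sq_nonneg (|(v t).im| - 1/6)]
  obtain ⟨h1, h2⟩ := hgood (v t) (by linarith)
  refine ⟨h1, h2, ht.trans (Complex.abs_im_le_norm _), ?_⟩
  have : G (v t) = H (v t) := by simp [G, Real.smoothTransition.one_of_one_le hl]
  rw [← this]; exact hv t

theorem homoclinic_aux (Ω : Set ℂ) (hΩ : IsOpen Ω)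
    (F : ℂ → ℂ) (hF : DifferentiableOn ℂ F Ω)
    (a : ℂ) (ha : a ∈ Ω) (m : ℕ) (hm : 2 ≤ m)
    (hlow : ∀ k < m, iteratedDeriv k F a = 0) (hord : iteratedDeriv m F a ≠ 0)
    (ε : ℝ) (hε : 0 < ε) :
    ∃ γ : ℝ → ℂ, (∀ t, HasDerivAt γ (F (γ t)) t) ∧
      (∀ t : ℝ, γ t ≠ a ∧ dist (γ t) a < ε) ∧
      Tendsto γ atTop (nhds a) ∧ Tendsto γ atBot (nhds a) := by
  have hFa : AnalyticAt ℂ F a := hF.analyticAt (hΩ.mem_nhds ha)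
  obtain ⟨g, hg, hga, hFg⟩ := hFa.analyticOrderAt_eq_natCast.mp
    ((analyticOrderAt_eq_nat_iff_iteratedDeriv_eq_zero hFa).mpr ⟨hlow, hord⟩)
  obtain ⟨n, rfl⟩ : ∃ n, m = n + 1 := ⟨m - 1, by omega⟩
  have hn : n ≠ 0 := by omega
  have hnC : (n : ℂ) ≠ 0 := by exact_mod_cast hn
  obtain ⟨b, hb⟩ := IsAlgClosed.exists_pow_nat_eq (-Complex.I / (n * g a)) (Nat.pos_of_ne_zero hn)
  have hb0 : b ≠ 0 := by
    rintro rfl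
    rw [zero_pow hn, eq_comm, div_eq_zero_iff] at hb
    simp [hga, hnC] at hb
  have hbI : -n * b ^ n * g a = Complex.I := by
    rw [hb]; field_simp
  -- a small ball
  have hcont : ∀ᶠ z in 𝓝 a, ‖Complex.I * g z / g a - Complex.I‖ ≤ 1/4 := by
    have hc : ContinuousAt (fun z => ‖Complex.I * g z / g a - Complex.I‖) a :=
      (((continuousAt_const.mul hg.continuousAt).div_const _).sub continuousAt_const).norm
    have h0 : ‖Complex.I * g a / g a - Complex.I‖ < 1/4 := by
      rw [mul_div_assoc, div_self hga]; norm_num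
    exact (hc.eventually_lt continuousAt_const h0).mono fun z hz => hz.le
  obtain ⟨δ₀, hδ₀, hball⟩ := Metric.eventually_nhds_iff.mp
    (hFg.and (hg.eventually_analyticAt.and hcont))
  obtain ⟨δ, hδ, hδε, hδδ⟩ : ∃ δ > 0, δ ≤ ε ∧ δ ≤ δ₀ :=
    ⟨min ε δ₀, lt_min hε hδ₀, min_le_left _ _, min_le_right _ _⟩
  let p : ℂ → ℂ := fun v => Complex.exp (-Complex.log v / n)
  have hpn : ∀ v, v ≠ 0 → p v ^ n = 1 / v := by
    intro v hv
    simp only [p]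
    rw [← Complex.exp_nat_mul, mul_div_cancel₀ _ hnC, Complex.exp_neg, Complex.exp_log hv, one_div]
  have hp0 : ∀ v, p v ≠ 0 := fun v => Complex.exp_ne_zero _
  have hsmall : ∀ η > 0, ∀ v, v ≠ 0 → ‖b‖ ^ n / η ^ n < ‖v‖ → ‖b * p v‖ < η := by
    intro η hη v hv hlt
    by_contra! hcon
    have h1 := pow_le_pow_left₀ hη.le hcon n
    rw [norm_mul, mul_pow, ← norm_pow (p v), hpn v hv, norm_div, norm_one, mul_one_div,
      le_div_iff₀ (norm_pos_iff.mpr hv)] at h1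
    rw [div_lt_iff₀ (by positivity)] at hlt
    linarith
  have hpd : ∀ v ∈ Complex.slitPlane, HasDerivAt p (p v * (-(v⁻¹) / n)) v := by
    intro v hv
    exact (((Complex.hasDerivAt_log hv).neg).div_const _).cexp
  have hzd : ∀ v ∈ Complex.slitPlane, HasDerivAt (fun v => a + b * p v)
      (b * (p v * (-(v⁻¹) / n))) v := fun v hv => ((hpd v hv).const_mul b).const_add a
  have hz : ∀ v ∈ Complex.slitPlane, ‖b‖ ^ n / δ ^ n < ‖v‖ → dist (a + b * p v) a < δ := by
    intro v hv hR
    rw [dist_self_add_left]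
    exact hsmall δ hδ v (Complex.slitPlane_ne_zero hv) hR
  obtain ⟨v, hv⟩ := flow_w (fun v => Complex.I * g (a + b * p v) / g a) (‖b‖ ^ n / δ ^ n)
    (fun v hv hR => by
      have h1 := (hball (lt_of_lt_of_le (hz v hv hR) hδδ)).2.1.differentiableAt
      have h2 := (hzd v hv).differentiableAt
      have h3 : DifferentiableAt ℂ (fun v => g (a + b * p v)) v :=
        DifferentiableAt.comp v h1 h2
      exact (h3.const_mul _).div_const _)
    (fun v hv hR => (hball (lt_of_lt_of_le (hz v hv hR) hδδ)).2.2)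
  have hlim : ∀ f : Filter ℝ, Tendsto (fun t : ℝ => |t|) f atTop →
      Tendsto (fun t => a + b * p (v t)) f (𝓝 a) := by
    intro f hf
    rw [Metric.tendsto_nhds]
    intro η hη
    filter_upwards [hf.eventually_gt_atTop (4/3 * (‖b‖ ^ n / η ^ n))] with t ht
    rw [dist_self_add_left]
    exact hsmall η hη _ (Complex.slitPlane_ne_zero (hv t).1) (by linarith [(hv t).2.2.1])
  refine ⟨fun t => a + b * p (v t), fun t => ?_, fun t => ⟨?_, ?_⟩, hlim _ tendsto_abs_atTop_atTop,
    hlim _ tendsto_abs_atBot_atTop⟩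
  · obtain ⟨h1, h2, h3, h4⟩ := hv t
    have h5 := (hzd _ h1).scomp t h4
    have hv0 := Complex.slitPlane_ne_zero h1
    refine h5.congr_deriv ?_
    rw [(hball (lt_of_lt_of_le (hz _ h1 h2) hδδ)).1, smul_eq_mul, smul_eq_mul, add_sub_cancel_left,
      mul_pow, pow_succ (p (v t)), hpn _ hv0, ← hbI]
    field_simp
    ring
  · simp [hb0, hp0]
  · exact (hz _ (hv t).1 (hv t).2.1).trans_le hδε

/-- every closed `ε`-ball around an equilibrium `a` of order `m ≥ 2` of a
holomorphic flow that lies in `Ω` and contains no other zero of `F` contains a homoclinic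
orbit of `a` inside the punctured ball. -/
theorem stmt_11 (Ω : Set ℂ) (hΩ : IsOpen Ω) (hconn : IsConnected Ω)
    (F : ℂ → ℂ) (hF : DifferentiableOn ℂ F Ω) (hF0 : ∃ z ∈ Ω, F z ≠ 0)
    (a : ℂ) (ha : a ∈ Ω) (m : ℕ) (hm : 2 ≤ m)
    (hlow : ∀ k < m, iteratedDeriv k F a = 0) (hord : iteratedDeriv m F a ≠ 0)
    (ε : ℝ) (hε : 0 < ε) (hball : Metric.closedBall a ε ⊆ Ω)
    (honly : ∀ z ∈ Metric.closedBall a ε, F z = 0 → z = a) :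
    ∃ γ : ℝ → ℂ, IsSolOn F Ω univ γ ∧
      (∀ t : ℝ, γ t ≠ a ∧ dist (γ t) a < ε) ∧
      (∃ t s : ℝ, γ t ≠ γ s) ∧
      Tendsto γ atTop (nhds a) ∧ Tendsto γ atBot (nhds a) := by
  obtain ⟨γ, h1, h2, h3, h4⟩ := homoclinic_aux Ω hΩ F hF a ha m hm hlow hord ε hε
  refine ⟨γ, fun t _ => ⟨hball (Metric.mem_closedBall.mpr (h2 t).2.le),
    (h1 t).hasDerivWithinAt⟩, h2, ?_, h3, h4⟩
  by_contra! hcon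
  have hc : γ = fun _ => γ 0 := funext fun t => hcon t 0
  rw [hc] at h3
  exact (h2 0).1 (tendsto_nhds_unique tendsto_const_nhds h3)
end

section
/- Let Ω ⊆ ℂ be open and connected, F holomorphic on Ω with F ≢ 0, and a ∈ Ω with F(a) = 0. Suppose there exists δ > 0 with the closed δ-ball around a contained in Ω such that either (i) for every y with 0 < |y − a| < δ there exists a solution γ : [0,∞) → Ω of ẋ = F(x) with γ(0) = y and γ(t) → a as t → ∞, or (ii) for every such y there exists a solution γ : (−∞,0] → Ω with γ(0) = y and γ(t) → a as t → −∞. Then F′(a) ≠ 0; that is, stable and unstable nodes and foci of holomorphic flows have order 1. -/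
open Set Filter Topology

/-- A tube around a finite piece of a trajectory with bounds for `F` up to second order. -/
lemma tube (Ω : Set ℂ) (hΩ : IsOpen Ω) (F : ℂ → ℂ) (hF : DifferentiableOn ℂ F Ω)
    (γ : ℝ → ℂ) (hγ : IsSolOn F Ω (Ici 0) γ) (T : ℝ) :
    ∃ ρ > 0, ∃ L ≥ 0, ∃ M ≥ 0, ∀ t ∈ Icc 0 T, ‖deriv F (γ t)‖ ≤ L ∧ ∀ u, ‖u - γ t‖ ≤ ρ →
      ‖F u - F (γ t)‖ ≤ L * ‖u - γ t‖ ∧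
      ‖F u - F (γ t) - deriv F (γ t) * (u - γ t)‖ ≤ M * ‖u - γ t‖ ^ 2 := by
  have hc : ContinuousOn γ (Icc 0 T) := fun t ht =>
    ((hγ t ht.1).2.continuousWithinAt).mono Icc_subset_Ici_self
  have hK : IsCompact (γ '' Icc 0 T) := isCompact_Icc.image_of_continuousOn hc
  have hKΩ : γ '' Icc 0 T ⊆ Ω := by
    rintro _ ⟨t, ht, rfl⟩; exact (hγ t ht.1).1
  obtain ⟨ρ, hρ, hsub⟩ := hK.exists_cthickening_subset_open hΩ hKΩ
  have hCc : IsCompact (Metric.cthickening ρ (γ '' Icc 0 T)) := hK.cthickening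
  have hF1 : DifferentiableOn ℂ (deriv F) Ω := hF.deriv hΩ
  have hF2 : DifferentiableOn ℂ (deriv (deriv F)) Ω := hF1.deriv hΩ
  obtain ⟨L, hL⟩ := hCc.exists_bound_of_continuousOn (hF1.continuousOn.mono hsub)
  obtain ⟨M, hM⟩ := hCc.exists_bound_of_continuousOn (hF2.continuousOn.mono hsub)
  refine ⟨ρ, hρ, max L 0, le_max_right _ _, max M 0, le_max_right _ _, fun t ht => ?_⟩
  have hball : Metric.closedBall (γ t) ρ ⊆ Metric.cthickening ρ (γ '' Icc 0 T) :=
    Metric.closedBall_subset_cthickening (mem_image_of_mem _ ht) ρ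
  have hmem : γ t ∈ Metric.closedBall (γ t) ρ := Metric.mem_closedBall_self hρ.le
  refine ⟨(hL _ (hball hmem)).trans (le_max_left _ _), fun u hu => ?_⟩
  have huB : u ∈ Metric.closedBall (γ t) ρ := by simpa [dist_eq_norm] using hu
  have hd : ∀ x ∈ Metric.closedBall (γ t) ρ, HasDerivAt F (deriv F x) x := fun x hx =>
    (hF.differentiableAt (hΩ.mem_nhds (hsub (hball hx)))).hasDerivAt
  have hd1 : ∀ x ∈ Metric.closedBall (γ t) ρ, HasDerivAt (deriv F) (deriv (deriv F) x) x :=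
    fun x hx => (hF1.differentiableAt (hΩ.mem_nhds (hsub (hball hx)))).hasDerivAt
  refine ⟨?_, ?_⟩
  · exact (convex_closedBall (γ t) ρ).norm_image_sub_le_of_norm_hasDerivWithin_le
      (fun x hx => (hd x hx).hasDerivWithinAt)
      (fun x hx => (hL x (hball hx)).trans (le_max_left _ _)) hmem huB
  · have hs : Metric.closedBall (γ t) ‖u - γ t‖ ⊆ Metric.closedBall (γ t) ρ :=
      Metric.closedBall_subset_closedBall hu
    have h1 : ∀ x ∈ Metric.closedBall (γ t) ‖u - γ t‖,
        ‖deriv F x - deriv F (γ t)‖ ≤ max M 0 * ‖u - γ t‖ := by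
      intro x hx
      have := (convex_closedBall (γ t) ρ).norm_image_sub_le_of_norm_hasDerivWithin_le
        (fun x hx => (hd1 x hx).hasDerivWithinAt)
        (fun x hx => (hM x (hball hx)).trans (le_max_left _ 0)) hmem (hs hx)
      refine this.trans (mul_le_mul_of_nonneg_left ?_ (le_max_right _ _))
      simpa [dist_eq_norm] using hx
    have h2 := (convex_closedBall (γ t) ‖u - γ t‖).norm_image_sub_le_of_norm_hasDerivWithin_le
      (f := fun x => F x - deriv F (γ t) * x) (f' := fun x => deriv F x - deriv F (γ t))
      (fun x hx => by
        have := (hd x (hs hx)).sub ((hasDerivAt_id x).const_mul (deriv F (γ t)))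
        rw [mul_one] at this
        exact this.hasDerivWithinAt) h1
      (Metric.mem_closedBall_self (norm_nonneg _)) (y := u) (by simp [dist_eq_norm])
    calc _ = ‖(F u - deriv F (γ t) * u) - (F (γ t) - deriv F (γ t) * γ t)‖ := by
          congr 1; ring
      _ ≤ _ := h2
      _ = _ := by ring

lemma gron (Ω : Set ℂ) (hΩ : IsOpen Ω) (F : ℂ → ℂ) (hF : DifferentiableOn ℂ F Ω)
    (γ : ℝ → ℂ) (hγ : IsSolOn F Ω (Ici 0) γ) (T : ℝ) (hT : 0 ≤ T) (e : ℝ → ℂ) (he0 : e 0 = 1)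
    (he : ∀ t ∈ Ici (0:ℝ), HasDerivWithinAt e (deriv F (γ t) * e t) (Ici 0) t) :
    ∃ ε > 0, ∃ C > 0, ∀ η, IsSolOn F Ω (Ici 0) η → ∀ b, 0 < b → b ≤ ε → ‖η 0 - γ 0‖ ≤ b →
      ∀ t ∈ Icc 0 T, ‖η t - γ t‖ ≤ C * b ∧
        ‖η t - γ t - (η 0 - γ 0) * e t‖ ≤ C * b ^ 2 := by
  obtain ⟨ρ, hρ, L, hL, M, hM, H⟩ := tube Ω hΩ F hF γ hγ T
  set C := Real.exp ((L + 1) * T) with hC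
  have hC1 : 1 ≤ C := Real.one_le_exp (by positivity)
  have hCt : ∀ t ∈ Icc 0 T, Real.exp ((L + 1) * t) ≤ C := fun t ht =>
    Real.exp_le_exp.2 (mul_le_mul_of_nonneg_left ht.2 (by linarith))
  have hB : ∀ β : ℝ, ∀ x, HasDerivAt (fun t => β * Real.exp ((L + 1) * t))
      ((L + 1) * (β * Real.exp ((L + 1) * x))) x := by
    intro β x
    have := (((hasDerivAt_id x).const_mul (L + 1)).exp).const_mul β
    refine this.congr_deriv ?_
    simp only [id, mul_one]; ring
  have hIci : ∀ (f : ℝ → ℂ) (f' : ℂ) t, 0 ≤ t → HasDerivWithinAt f f' (Ici 0) t →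
      HasDerivWithinAt f f' (Ici t) t := fun f f' t ht h => h.mono (Ici_subset_Ici.2 ht)
  refine ⟨ρ / C, by positivity, C * (M * C ^ 2 + 1), by positivity, fun η hη b hb hbε h0 => ?_⟩
  have hbC : b * C ≤ ρ := (le_div_iff₀ (by positivity)).1 hbε
  have hd : ∀ t ∈ Ici (0:ℝ), HasDerivWithinAt (fun t => η t - γ t) (F (η t) - F (γ t)) (Ici 0) t :=
    fun t ht => (hη t ht).2.sub (hγ t ht).2
  have hw : ∀ t ∈ Ici (0:ℝ), HasDerivWithinAt (fun t => η t - γ t - (η 0 - γ 0) * e t)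
      (F (η t) - F (γ t) - (η 0 - γ 0) * (deriv F (γ t) * e t)) (Ici 0) t :=
    fun t ht => (hd t ht).sub ((he t ht).const_mul _)
  have A : ∀ t ∈ Icc 0 T, ‖η t - γ t‖ ≤ b * Real.exp ((L + 1) * t) := by
    intro t ht
    refine image_norm_le_of_norm_deriv_right_lt_deriv_boundary
      (f := fun t => η t - γ t) (a := 0) (b := T)
      (fun t ht => ((hd t ht.1).continuousWithinAt).mono Icc_subset_Ici_self)
      (fun t ht => hIci _ _ t ht.1 (hd t ht.1)) (by simpa using h0) (hB b) ?_ ht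
    intro x hx hxe
    have hx' : x ∈ Icc 0 T := Ico_subset_Icc_self hx
    have hpos : 0 < b * Real.exp ((L + 1) * x) := by positivity
    have hle : ‖η x - γ x‖ ≤ ρ := by
      rw [hxe]; exact (mul_le_mul_of_nonneg_left (hCt x hx') hb.le).trans hbC
    have := ((H x hx').2 _ hle).1
    rw [hxe] at this
    linarith
  have A' : ∀ t ∈ Icc 0 T, ‖η t - γ t‖ ≤ b * C := fun t ht =>
    (A t ht).trans (mul_le_mul_of_nonneg_left (hCt t ht) hb.le)
  have Bd : ∀ t ∈ Icc 0 T, ‖η t - γ t - (η 0 - γ 0) * e t‖ ≤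
      ((M * C ^ 2 + 1) * b ^ 2) * Real.exp ((L + 1) * t) := by
    intro t ht
    refine image_norm_le_of_norm_deriv_right_lt_deriv_boundary
      (f := fun t => η t - γ t - (η 0 - γ 0) * e t) (a := 0) (b := T)
      (fun t ht => ((hw t ht.1).continuousWithinAt).mono Icc_subset_Ici_self)
      (fun t ht => hIci _ _ t ht.1 (hw t ht.1)) ?_ (hB _) ?_ ht
    · simp [he0]; positivity
    intro x hx hxe
    have hx' : x ∈ Icc 0 T := Ico_subset_Icc_self hx
    have hle : ‖η x - γ x‖ ≤ ρ := (A' x hx').trans hbC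
    have h1 := ((H x hx').2 _ hle).2
    have h2 : ‖deriv F (γ x) * (η x - γ x - (η 0 - γ 0) * e x)‖ ≤
        L * (((M * C ^ 2 + 1) * b ^ 2) * Real.exp ((L + 1) * x)) := by
      rw [norm_mul]
      rw [hxe]
      exact mul_le_mul_of_nonneg_right (H x hx').1 (by positivity)
    have h3 : M * ‖η x - γ x‖ ^ 2 ≤ M * (b * C) ^ 2 :=
      mul_le_mul_of_nonneg_left (pow_le_pow_left₀ (norm_nonneg _) (A' x hx') 2) hM
    have h4 : 1 ≤ Real.exp ((L + 1) * x) := Real.one_le_exp (mul_nonneg (by linarith) hx.1)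
    have h5 : M * (b * C) ^ 2 < ((M * C ^ 2 + 1) * b ^ 2) * Real.exp ((L + 1) * x) := by
      calc M * (b * C) ^ 2 < (M * C ^ 2 + 1) * b ^ 2 := by nlinarith [pow_pos hb 2]
        _ ≤ _ := le_mul_of_one_le_right (by positivity) h4
    calc _ = ‖(F (η x) - F (γ x) - deriv F (γ x) * (η x - γ x)) +
          deriv F (γ x) * (η x - γ x - (η 0 - γ 0) * e x)‖ := by congr 1; ring
      _ ≤ _ := norm_add_le _ _
      _ < _ := by linarith
  intro t ht
  have hX : 0 ≤ M * C ^ 2 := by positivity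
  refine ⟨(A' t ht).trans ?_, (Bd t ht).trans ?_⟩
  · have : 0 ≤ C * b := by positivity
    nlinarith
  · have := mul_le_mul_of_nonneg_left (hCt t ht)
      (show 0 ≤ (M * C ^ 2 + 1) * b ^ 2 by positivity)
    linarith

lemma sol_const (F : ℂ → ℂ) (Ω : Set ℂ) (y : ℂ) (hy : y ∈ Ω) (h : F y = 0) :
    IsSolOn F Ω (Ici 0) (fun _ => y) := fun t _ =>
  ⟨hy, by simpa [h] using hasDerivWithinAt_const t (Ici (0:ℝ)) y⟩

lemma core (Ω : Set ℂ) (hΩ : IsOpen Ω) (F : ℂ → ℂ) (hF : DifferentiableOn ℂ F Ω)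
    (a : ℂ) (ha : a ∈ Ω) (hFa : F a = 0) (hd : deriv F a = 0) (δ : ℝ) (hδ : 0 < δ)
    (hball : Metric.closedBall a δ ⊆ Ω)
    (hyp : ∀ y : ℂ, 0 < dist y a → dist y a < δ →
          ∃ γ : ℝ → ℂ, IsSolOn F Ω (Ici 0) γ ∧ γ 0 = y ∧ Tendsto γ atTop (nhds a)) : False := by
  -- nonvanishing
  have hne : ∀ y, 0 < dist y a → dist y a < δ → F y ≠ 0 := by
    intro y h1 h2 h0
    obtain ⟨η, hη, hη0, hlim⟩ := hyp y h1 h2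
    have hyΩ : y ∈ Ω := hball h2.le
    have hconst : ∀ t, 0 ≤ t → η t = y := by
      intro t ht
      obtain ⟨ε, hε, C, hC, H⟩ := gron Ω hΩ F hF (fun _ => y) (sol_const F Ω y hyΩ h0) t ht
        (fun s => Complex.exp (deriv F y * s)) (by simp) (fun s _ => by
          have h1 : HasDerivAt (fun z : ℂ => Complex.exp (deriv F y * z))
              (deriv F y * Complex.exp (deriv F y * s)) (s : ℂ) := by
            have := ((hasDerivAt_id (s : ℂ)).const_mul (deriv F y)).cexp
            rw [mul_one, mul_comm] at this
            exact this
          exact h1.comp_ofReal.hasDerivWithinAt)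
      have hz : ‖η t - y‖ ≤ 0 := by
        refine le_of_forall_pos_le_add fun κ hκ => ?_
        have := (H η hη (min ε (κ / C)) (lt_min hε (by positivity)) (min_le_left _ _)
          (by simp [hη0]; exact ⟨hε.le, by positivity⟩) t ⟨ht, le_rfl⟩).1
        have h3 : C * min ε (κ / C) ≤ κ := by
          calc _ ≤ C * (κ / C) := mul_le_mul_of_nonneg_left (min_le_right _ _) hC.le
            _ = κ := by field_simp
        linarith
      exact sub_eq_zero.1 (norm_le_zero_iff.1 hz)
    have : Tendsto η atTop (nhds y) := by
      refine tendsto_const_nhds.congr' ?_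
      filter_upwards [eventually_ge_atTop 0] with t ht using (hconst t ht).symm
    have := tendsto_nhds_unique this hlim
    simp [this] at h1
  have hS : ∀ y, ∃ γ : ℝ → ℂ, dist y a < δ → (IsSolOn F Ω (Ici 0) γ ∧ γ 0 = y ∧
      Tendsto γ atTop (nhds a) ∧ ∃ e : ℝ → ℂ, e 0 = 1 ∧ (y = a → ∀ t, e t = 1) ∧
      ∀ t ∈ Ici (0:ℝ), HasDerivWithinAt e (deriv F (γ t) * e t) (Ici 0) t) := by
    intro y
    by_cases hy : dist y a < δ
    swap
    · exact ⟨fun _ => 0, fun h => absurd h hy⟩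
    by_cases hya : y = a
    · refine ⟨fun _ => a, fun _ => ⟨sol_const F Ω a ha hFa, hya.symm, tendsto_const_nhds,
        fun _ => 1, rfl, fun _ _ => rfl, fun t _ => ?_⟩⟩
      simpa [hd] using hasDerivWithinAt_const t (Ici (0:ℝ)) (1:ℂ)
    · have hpos : 0 < dist y a := dist_pos.2 hya
      have hFy := hne y hpos hy
      obtain ⟨γ, hγ, h0, hl⟩ := hyp y hpos hy
      refine ⟨γ, fun _ => ⟨hγ, h0, hl, fun t => F (γ t) / F y, by simp [h0, hFy],
        fun h => absurd h hya, fun t ht => ?_⟩⟩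
      have h1 : HasDerivAt F (deriv F (γ t)) (γ t) :=
        (hF.differentiableAt (hΩ.mem_nhds (hγ t ht).1)).hasDerivAt
      have h2 := (h1.hasFDerivAt.restrictScalars ℝ).comp_hasDerivWithinAt t (hγ t ht).2
      have h3 := h2.div_const (F y)
      refine h3.congr_deriv ?_
      simp [mul_div_assoc]
      ring
  choose S hS using hS
  have G : ∀ y, dist y a < δ → ∀ T, 0 ≤ T → ∃ e : ℂ, (y = a → e = 1) ∧
      ∃ ε > 0, ∃ C > 0, ∀ η, IsSolOn F Ω (Ici 0) η → ∀ b, 0 < b → b ≤ ε → ‖η 0 - y‖ ≤ b →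
      (∀ t ∈ Icc 0 T, ‖η t - S y t‖ ≤ C * b) ∧
        ‖η T - S y T - (η 0 - y) * e‖ ≤ C * b ^ 2 := by
    intro y hy T hT
    obtain ⟨h1, h2, h3, e, he0, hea, he⟩ := hS y hy
    obtain ⟨ε, hε, C, hC, H⟩ := gron Ω hΩ F hF (S y) h1 T hT e he0 he
    rw [h2] at H
    exact ⟨e T, fun h => hea h T, ε, hε, C, hC, fun η hη b hb hbε h0 =>
      ⟨fun t ht => (H η hη b hb hbε h0 t ht).1, (H η hη b hb hbε h0 T ⟨hT, le_rfl⟩).2⟩⟩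
  -- uniqueness
  have U : ∀ y, dist y a < δ → ∀ η, IsSolOn F Ω (Ici 0) η → η 0 = y → ∀ t, 0 ≤ t → η t = S y t := by
    intro y hy η hη hη0 t ht
    obtain ⟨e, -, ε, hε, C, hC, H⟩ := G y hy t ht
    have hz : ‖η t - S y t‖ ≤ 0 := by
      refine le_of_forall_pos_le_add fun κ hκ => ?_
      have := (H η hη (min ε (κ / C)) (lt_min hε (by positivity)) (min_le_left _ _)
        (by simp [hη0]; exact ⟨hε.le, by positivity⟩)).1 t ⟨ht, le_rfl⟩
      have h3 : C * min ε (κ / C) ≤ κ := by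
        calc _ ≤ C * (κ / C) := mul_le_mul_of_nonneg_left (min_le_right _ _) hC.le
          _ = κ := by field_simp
      linarith
    exact sub_eq_zero.1 (norm_le_zero_iff.1 hz)
  -- semigroup
  have SG : ∀ y, dist y a < δ → ∀ τ, 0 ≤ τ → dist (S y τ) a < δ → ∀ t, 0 ≤ t →
      S y (t + τ) = S (S y τ) t := by
    intro y hy τ hτ hyτ t ht
    refine U (S y τ) hyτ (fun t => S y (t + τ)) ?_ (by simp) t ht
    intro s hs
    have hs' : (0:ℝ) ≤ s := hs
    obtain ⟨h1, h2⟩ := (hS y hy).1 (s + τ) (show (0:ℝ) ≤ s + τ by linarith)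
    refine ⟨h1, ?_⟩
    have h4 : HasDerivWithinAt (fun s : ℝ => s + τ) 1 (Ici 0) s :=
      ((hasDerivAt_id s).add_const τ).hasDerivWithinAt
    have h5 := HasDerivWithinAt.scomp s h2 h4
      (fun x hx => show (0:ℝ) ≤ x + τ by have : (0:ℝ) ≤ x := hx; linarith)
    simpa [Function.comp_def] using h5
  -- derivative of the time-T map
  have D : ∀ T, 0 ≤ T → ∀ y, dist y a < δ → ∃ e : ℂ, (y = a → e = 1) ∧
      HasDerivAt (fun z => S z T) e y := by
    intro T hT y hy
    obtain ⟨e, he, ε, hε, C, hC, H⟩ := G y hy T hT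
    refine ⟨e, he, ?_⟩
    have key : ∀ᶠ z in 𝓝 y, ‖S z T - S y T - (z - y) * e‖ ≤ C * ‖‖z - y‖ ^ 2‖ := by
      filter_upwards [Metric.ball_mem_nhds y hε, Metric.isOpen_ball.mem_nhds
        (show y ∈ Metric.ball a δ from hy)] with z hz hzδ
      by_cases hzy : z = y
      · simp [hzy]
      obtain ⟨h1, h2, -⟩ := hS z hzδ
      have := (H (S z) h1 ‖z - y‖ (norm_pos_iff.2 (sub_ne_zero.2 hzy))
        (by rw [← dist_eq_norm]; exact (Metric.mem_ball.1 hz).le) (by rw [h2])).2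
      rw [h2] at this
      rwa [norm_pow, norm_norm]
    rw [hasDerivAt_iff_isLittleO]
    refine (Asymptotics.IsBigO.of_bound C key).trans_isLittleO ?_
    exact Asymptotics.isLittleO_pow_sub_sub y one_lt_two
  -- uniform bound
  set r := δ / 2 with hr
  have hr0 : 0 < r := by positivity
  have hrδ : r < δ := by linarith
  have B : ∃ M, ∀ z, dist z a ≤ r → ∀ t, 0 ≤ t → ‖S z t‖ ≤ M := by
    have loc : ∀ y, dist y a ≤ r → ∃ ε > 0, ∃ τ ≥ 1, ∃ M, ∀ z, dist z a ≤ r → dist z y < ε →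
        dist (S z τ) a ≤ r ∧ ∀ t ∈ Icc 0 τ, ‖S z t‖ ≤ M := by
      intro y hy
      have hyδ : dist y a < δ := hy.trans_lt hrδ
      obtain ⟨h1, h2, h3, -⟩ := hS y hyδ
      obtain ⟨τ, hτ, hτ1⟩ := ((h3.eventually (Metric.ball_mem_nhds a (half_pos hr0))).and
        (eventually_ge_atTop 1)).exists
      obtain ⟨e, -, ε, hε, C, hC, H⟩ := G y hyδ τ (by linarith)
      have hcont : ContinuousOn (S y) (Icc 0 τ) := fun t ht =>
        ((h1 t ht.1).2.continuousWithinAt).mono Icc_subset_Ici_self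
      obtain ⟨M, hM⟩ := isCompact_Icc.exists_bound_of_continuousOn hcont
      have hb : 0 < min ε (r / 2 / C) := lt_min hε (by positivity)
      refine ⟨min ε (r / 2 / C), hb, τ, hτ1, M + r / 2, fun z hz hzy => ?_⟩
      obtain ⟨g1, g2, -⟩ := hS z (hz.trans_lt hrδ)
      have hH := (H (S z) g1 _ hb (min_le_left _ _) (by rw [g2, ← dist_eq_norm]; exact hzy.le)).1
      have h3 : C * min ε (r / 2 / C) ≤ r / 2 := by
        calc _ ≤ C * (r / 2 / C) := mul_le_mul_of_nonneg_left (min_le_right _ _) hC.le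
          _ = r / 2 := by field_simp
      constructor
      · have := (hH τ ⟨by linarith, le_rfl⟩).trans h3
        rw [← dist_eq_norm] at this
        have h5 : dist (S y τ) a < r / 2 := hτ
        linarith [dist_triangle (S z τ) (S y τ) a]
      · intro t ht
        have := (hH t ht).trans h3
        have h6 : ‖S z t‖ ≤ ‖S z t - S y t‖ + ‖S y t‖ := by
          simpa using norm_add_le (S z t - S y t) (S y t)
        linarith [hM t ht]
    choose! ε hε τ hτ M hM using loc
    obtain ⟨t, ht, hcov⟩ := (isCompact_closedBall a r).elim_nhds_subcover
      (fun y => Metric.ball y (ε y)) (fun y hy => Metric.ball_mem_nhds y (hε y hy))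
    refine ⟨∑ y ∈ t, |M y|, ?_⟩
    have main : ∀ n : ℕ, ∀ z, dist z a ≤ r → ∀ s : ℝ, 0 ≤ s → s ≤ n → ‖S z s‖ ≤ ∑ y ∈ t, |M y| := by
      intro n
      induction n with
      | zero =>
        intro z hz s hs hsn
        obtain ⟨y, hy, hzy⟩ := mem_iUnion₂.1 (hcov (show z ∈ Metric.closedBall a r from hz))
        have h := (hM y (ht y hy) z hz hzy).2 s ⟨hs, by
          have := hτ y (ht y hy); simp at hsn; linarith⟩
        exact h.trans ((le_abs_self _).trans
          (Finset.single_le_sum (f := fun y => |M y|) (fun _ _ => abs_nonneg _) hy))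
      | succ n ih =>
        intro z hz s hs hsn
        obtain ⟨y, hy, hzy⟩ := mem_iUnion₂.1 (hcov (show z ∈ Metric.closedBall a r from hz))
        have h := hM y (ht y hy) z hz hzy
        have hτy := hτ y (ht y hy)
        by_cases hsτ : s ≤ τ y
        · exact (h.2 s ⟨hs, hsτ⟩).trans ((le_abs_self _).trans
            (Finset.single_le_sum (f := fun y => |M y|) (fun _ _ => abs_nonneg _) hy))
        · push Not at hsτ
          have := SG z (hz.trans_lt hrδ) (τ y) (by linarith) (h.1.trans_lt hrδ) (s - τ y)
            (by linarith)
          rw [sub_add_cancel] at this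
          rw [this]
          push_cast at hsn
          exact ih _ h.1 _ (by linarith) (by linarith)
    intro z hz s hs
    obtain ⟨n, hn⟩ := exists_nat_ge s
    exact main n z hz s hs hn
  obtain ⟨M, hM⟩ := B
  -- Cauchy formula and dominated convergence
  have hdiff : ∀ n : ℕ, DifferentiableOn ℂ (fun z => S z n - a) (Metric.ball a δ) := by
    intro n z hz
    obtain ⟨e, -, he⟩ := D n n.cast_nonneg z hz
    exact (he.sub_const a).differentiableAt.differentiableWithinAt
  have hder : ∀ n : ℕ, deriv (fun z => S z n - a) a = 1 := by
    intro n
    obtain ⟨e, he1, he⟩ := D n n.cast_nonneg a (by simpa using hδ)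
    rw [← he1 rfl]
    exact (he.sub_const a).deriv
  have hsub : Metric.closedBall a r ⊆ Metric.ball a δ := Metric.closedBall_subset_ball hrδ
  have hcm : ∀ θ, circleMap a r θ ∈ Metric.closedBall a r := fun θ =>
    circleMap_mem_closedBall a hr0.le θ
  have hint : Tendsto (fun n : ℕ => ∮ z in C(a, r), ((z - a) ^ 2)⁻¹ • (S z n - a)) atTop
      (𝓝 (∫ θ in (0:ℝ)..2 * Real.pi, (0:ℂ))) := by
    unfold circleIntegral
    refine intervalIntegral.tendsto_integral_filter_of_dominated_convergence
      (fun _ => r * ((r ^ 2)⁻¹ * (M + ‖a‖))) ?_ ?_ ?_ ?_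
    · refine Eventually.of_forall fun n => ?_
      refine (Continuous.aestronglyMeasurable ?_)
      have c1 : Continuous (fun θ => S (circleMap a r θ) n - a) :=
        (hdiff n).continuousOn.comp_continuous (continuous_circleMap a r)
          (fun θ => hsub (hcm θ))
      have c2 : Continuous (fun θ => ((circleMap a r θ - a) ^ 2)⁻¹) := by
        refine Continuous.inv₀ (by fun_prop) fun θ => ?_
        exact pow_ne_zero 2 (sub_ne_zero.2 (circleMap_ne_center hr0.ne'))
      have c3 : Continuous (fun θ => deriv (circleMap a r) θ) := by
        simp only [deriv_circleMap]; fun_prop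
      exact c3.smul (c2.smul c1)
    · refine Eventually.of_forall fun n => Eventually.of_forall fun θ _ => ?_
      have h1 := hM _ (hcm θ) n n.cast_nonneg
      have h2 : ‖S (circleMap a r θ) n - a‖ ≤ M + ‖a‖ := (norm_sub_le _ _).trans (by linarith)
      rw [norm_smul, norm_smul]
      have h3 : ‖deriv (circleMap a r) θ‖ = r := by simp [deriv_circleMap, abs_of_pos hr0]
      have h4 : ‖((circleMap a r θ - a) ^ 2)⁻¹‖ = (r ^ 2)⁻¹ := by
        simp [circleMap, abs_of_pos hr0]
      rw [h3, h4]
      gcongr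
    · exact intervalIntegrable_const
    · refine Eventually.of_forall fun θ _ => ?_
      have h1 := (hS _ (hsub (hcm θ))).2.2.1.comp (tendsto_natCast_atTop_atTop (R := ℝ))
      have h2 : Tendsto (fun n : ℕ => S (circleMap a r θ) n - a) atTop (𝓝 0) := by
        have := h1.sub_const a
        simpa using this
      have h3 := (h2.const_smul (((circleMap a r θ - a) ^ 2)⁻¹)).const_smul
        (deriv (circleMap a r) θ)
      simpa only [smul_zero] using h3
  have hfin := hint.const_smul ((2 * Real.pi * Complex.I : ℂ)⁻¹)
  have heq : ∀ n : ℕ, ((2 * Real.pi * Complex.I : ℂ)⁻¹ •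
      ∮ z in C(a, r), ((z - a) ^ 2)⁻¹ • (S z n - a)) = 1 := by
    intro n
    rw [← hder n]
    exact Complex.two_pi_I_inv_smul_circleIntegral_sub_sq_inv_smul_of_differentiable
      Metric.isOpen_ball hsub (hdiff n) (Metric.mem_ball_self hr0)
  simp only [heq] at hfin
  have := tendsto_nhds_unique hfin tendsto_const_nhds
  simp at this

/-- if all orbits through a punctured `δ`-ball around an equilibrium `a` of
a holomorphic flow tend to `a` forward in time (or all backward in time), then
`F'(a) ≠ 0`; i.e. stable/unstable nodes and foci have order 1. -/
theorem stmt_13 (Ω : Set ℂ) (hΩ : IsOpen Ω) (hconn : IsConnected Ω)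
    (F : ℂ → ℂ) (hF : DifferentiableOn ℂ F Ω) (hF0 : ∃ z ∈ Ω, F z ≠ 0)
    (a : ℂ) (ha : a ∈ Ω) (hFa : F a = 0)
    (hyp : ∃ δ > 0, Metric.closedBall a δ ⊆ Ω ∧
      ((∀ y : ℂ, 0 < dist y a → dist y a < δ →
          ∃ γ : ℝ → ℂ, IsSolOn F Ω (Ici 0) γ ∧ γ 0 = y ∧ Tendsto γ atTop (nhds a)) ∨
       (∀ y : ℂ, 0 < dist y a → dist y a < δ →
          ∃ γ : ℝ → ℂ, IsSolOn F Ω (Iic 0) γ ∧ γ 0 = y ∧ Tendsto γ atBot (nhds a)))) :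
    deriv F a ≠ 0 := by
  intro hd
  obtain ⟨δ, hδ, hball, h | h⟩ := hyp
  · exact core Ω hΩ F hF a ha hFa hd δ hδ hball h
  · refine core Ω hΩ (fun z => -F z) hF.neg a ha (by simp [hFa]) ?_ δ hδ hball ?_
    · rw [deriv.fun_neg, hd, neg_zero]
    intro y h1 h2
    obtain ⟨γ, hγ, h0, hl⟩ := h y h1 h2
    refine ⟨fun t => γ (-t), fun t ht => ?_, by simpa using h0, hl.comp tendsto_neg_atTop_atBot⟩
    have ht' : -t ∈ Iic (0:ℝ) := by simpa using ht
    refine ⟨(hγ _ ht').1, ?_⟩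
    have h4 : HasDerivWithinAt (fun s : ℝ => -s) (-1) (Ici 0) t :=
      (hasDerivAt_neg t).hasDerivWithinAt
    have h5 := HasDerivWithinAt.scomp t (hγ _ ht').2 h4
      (fun x hx => show -x ≤ (0:ℝ) by have : (0:ℝ) ≤ x := hx; linarith)
    simpa [Function.comp_def] using h5
end

section
/- Poincaré–Bendixson theorem for holomorphic flows: Let Ω ⊆ ℂ be open and simply connected, F holomorphic on Ω with F ≢ 0, K ⊆ Ω compact, and γ : [0,∞) → ℂ a solution of ẋ = F(x) with γ(t) ∈ K for all t ≥ 0. Then either there exists T > 0 with γ(t + T) = γ(t) for all t ≥ 0 (the orbit is periodic), or there exists a ∈ Ω with F(a) = 0 and γ(t) → a as t → ∞ (the positive limit set consists of exactly one equilibrium). -/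
open Set Filter Topology

lemma pb_lip {Ω : Set ℂ} (hΩ : IsOpen Ω) {F : ℂ → ℂ} (hF : DifferentiableOn ℂ F Ω)
    {C : Set ℂ} (hC : IsCompact C) (hCΩ : C ⊆ Ω) : ∃ k, LipschitzOnWith k F C := by
  apply LocallyLipschitzOn.exists_lipschitzOnWith_of_compact hC
  intro x hx
  have h1 : ContDiffAt ℂ 1 F x := (hF.contDiffOn hΩ).contDiffAt (hΩ.mem_nhds (hCΩ hx))
  obtain ⟨k, t, ht, hl⟩ := h1.exists_lipschitzOnWith
  exact ⟨k, t, mem_nhdsWithin_of_mem_nhds ht, hl⟩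

lemma pb_uniq {Ω : Set ℂ} (hΩ : IsOpen Ω) {F : ℂ → ℂ} (hF : DifferentiableOn ℂ F Ω)
    {α β : ℝ → ℂ} {a b : ℝ}
    (hα : ∀ t ∈ Icc a b, α t ∈ Ω ∧ HasDerivWithinAt α (F (α t)) (Icc a b) t)
    (hβ : ∀ t ∈ Icc a b, β t ∈ Ω ∧ HasDerivWithinAt β (F (β t)) (Icc a b) t)
    {t₀ : ℝ} (ht₀ : t₀ ∈ Icc a b) (h0 : α t₀ = β t₀) : EqOn α β (Icc a b) := by
  have cα : ContinuousOn α (Icc a b) := fun t ht => (hα t ht).2.continuousWithinAt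
  have cβ : ContinuousOn β (Icc a b) := fun t ht => (hβ t ht).2.continuousWithinAt
  obtain ⟨k, hk⟩ := pb_lip hΩ hF (C := α '' Icc a b ∪ β '' Icc a b)
    ((isCompact_Icc.image_of_continuousOn cα).union (isCompact_Icc.image_of_continuousOn cβ))
    (by rintro _ (⟨t, ht, rfl⟩ | ⟨t, ht, rfl⟩); exacts [(hα t ht).1, (hβ t ht).1])
  rw [← Icc_union_Icc_eq_Icc ht₀.1 ht₀.2]
  apply EqOn.union
  · have hs : Icc a t₀ ⊆ Icc a b := Icc_subset_Icc_right ht₀.2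
    have key : ∀ t ∈ Ioc a t₀, Icc a b ∈ 𝓝[Iic t] t := fun t ht => by
      refine mem_nhdsWithin.2 ⟨Ioi a, isOpen_Ioi, ht.1, fun x hx => ⟨le_of_lt hx.1, le_trans hx.2 (ht.2.trans ht₀.2)⟩⟩
    exact ODE_solution_unique_of_mem_Icc_left (v := fun _ => F) (s := fun _ => α '' Icc a b ∪ β '' Icc a b) (K := k)
      (fun t ht => hk) (cα.mono hs)
      (fun t ht => (hα t (hs (Ioc_subset_Icc_self ht))).2.mono_of_mem_nhdsWithin (key t ht))
      (fun t ht => Or.inl ⟨t, hs (Ioc_subset_Icc_self ht), rfl⟩) (cβ.mono hs)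
      (fun t ht => (hβ t (hs (Ioc_subset_Icc_self ht))).2.mono_of_mem_nhdsWithin (key t ht))
      (fun t ht => Or.inr ⟨t, hs (Ioc_subset_Icc_self ht), rfl⟩) h0
  · have hs : Icc t₀ b ⊆ Icc a b := Icc_subset_Icc_left ht₀.1
    have key : ∀ t ∈ Ico t₀ b, Icc a b ∈ 𝓝[Ici t] t := fun t ht => by
      refine mem_nhdsWithin.2 ⟨Iio b, isOpen_Iio, ht.2, fun x hx => ⟨le_trans (ht₀.1.trans ht.1) hx.2, le_of_lt hx.1⟩⟩
    exact ODE_solution_unique_of_mem_Icc_right (v := fun _ => F) (s := fun _ => α '' Icc a b ∪ β '' Icc a b) (K := k)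
      (fun t ht => hk) (cα.mono hs)
      (fun t ht => (hα t (hs (Ico_subset_Icc_self ht))).2.mono_of_mem_nhdsWithin (key t ht))
      (fun t ht => Or.inl ⟨t, hs (Ico_subset_Icc_self ht), rfl⟩) (cβ.mono hs)
      (fun t ht => (hβ t (hs (Ico_subset_Icc_self ht))).2.mono_of_mem_nhdsWithin (key t ht))
      (fun t ht => Or.inr ⟨t, hs (Ico_subset_Icc_self ht), rfl⟩) h0

/-- Flow box. -/
lemma pb_box {Ω : Set ℂ} (hΩ : IsOpen Ω) {F : ℂ → ℂ} (hF : DifferentiableOn ℂ F Ω)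
    {q : ℂ} (hq : q ∈ Ω) (hFq : F q ≠ 0) :
    ∃ R > 0, ∃ ψ : ℂ → ℂ, ψ 0 = q ∧
      (∀ z ∈ Metric.ball (0:ℂ) R, ψ z ∈ Ω ∧ F (ψ z) ≠ 0 ∧ ‖F (ψ z)‖ ≤ 2 * ‖F q‖ ∧ HasDerivAt ψ (F (ψ z)) z) ∧
      (∀ x ∈ Metric.ball (0:ℂ) R, ∀ y ∈ Metric.ball (0:ℂ) R,
        ‖ψ x - ψ y - F q * (x - y)‖ ≤ ‖F q‖ / 2 * ‖x - y‖) ∧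
      (∀ V ⊆ Metric.ball (0:ℂ) R, IsOpen V → IsOpen (ψ '' V)) := by
  have hcF : ContinuousAt F q := hF.continuousOn.continuousAt (hΩ.mem_nhds hq)
  have hpos : 0 < ‖F q‖ := norm_pos_iff.2 hFq
  have e1 : ∀ᶠ z in 𝓝 q, z ∈ Ω ∧ F z ≠ 0 ∧ ‖F z‖ ≤ 2 * ‖F q‖ := by
    filter_upwards [hΩ.mem_nhds hq, hcF.eventually_ne hFq,
      hcF.norm.eventually_le_const (show ‖F q‖ < 2 * ‖F q‖ by linarith)] with z h1 h2 h3
    exact ⟨h1, h2, h3⟩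
  obtain ⟨r, hr, hball⟩ := Metric.eventually_nhds_iff_ball.1 e1
  have hd : DifferentiableOn ℂ (fun z => (F z)⁻¹) (Metric.ball q r) :=
    (hF.mono fun z hz => (hball z hz).1).inv fun z hz => (hball z hz).2.1
  obtain ⟨h, hh0, hh⟩ := hd.isExactOn_ball.with_val_at q 0
  have hdiff : DifferentiableOn ℂ h (Metric.ball q r) := fun z hz => (hh z hz).differentiableAt.differentiableWithinAt
  have hcd : ContDiffAt ℂ 1 h q := (hdiff.contDiffOn Metric.isOpen_ball).contDiffAt (Metric.ball_mem_nhds q hr)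
  have hst : HasStrictDerivAt h (F q)⁻¹ q := by
    have := hcd.hasStrictDerivAt one_ne_zero
    rwa [(hh q (Metric.mem_ball_self hr)).deriv] at this
  let e0 := (hst.hasStrictFDerivAt_equiv (inv_ne_zero hFq)).toOpenPartialHomeomorph h
  have he0 : (e0 : ℂ → ℂ) = h := rfl
  have hq0 : q ∈ e0.source := (hst.hasStrictFDerivAt_equiv (inv_ne_zero hFq)).mem_toOpenPartialHomeomorph_source
  have h0t : (0:ℂ) ∈ e0.target := by
    have := e0.map_source hq0
    rwa [he0, hh0] at this
  have hs0 : e0.symm 0 = q := by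
    have := e0.left_inv hq0
    rwa [he0, hh0] at this
  have hcs : ContinuousAt e0.symm 0 := e0.symm.continuousAt h0t
  have hst' : HasStrictDerivAt e0.symm (F q) 0 := by
    have := (hst.hasStrictFDerivAt_equiv (inv_ne_zero hFq)).to_localInverse
    have h2 := hst.to_localInverse (inv_ne_zero hFq)
    rw [inv_inv, hh0] at h2
    exact h2
  have hlo := hst'.hasStrictFDerivAt.isLittleO.def (half_pos hpos)
  rw [nhds_prod_eq] at hlo
  obtain ⟨s, hs, hs'⟩ := Filter.mem_prod_self_iff.1 hlo
  have e2 : ∀ᶠ z in 𝓝 (0:ℂ), z ∈ e0.target ∧ e0.symm z ∈ Metric.ball q r ∧ z ∈ s := by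
    have : e0.symm ⁻¹' (Metric.ball q r) ∈ 𝓝 (0:ℂ) := hcs.preimage_mem_nhds (by rw [hs0]; exact Metric.ball_mem_nhds q hr)
    filter_upwards [e0.open_target.mem_nhds h0t, this, hs] with z h1 h2 h3 using ⟨h1, h2, h3⟩
  obtain ⟨R, hR, hRb⟩ := Metric.eventually_nhds_iff_ball.1 e2
  refine ⟨R, hR, e0.symm, hs0, fun z hz => ?_, fun x hx y hy => ?_, fun V hV hVo => ?_⟩
  · obtain ⟨h1, h2, h3⟩ := hRb z hz
    obtain ⟨h4, h5, h6⟩ := hball _ h2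
    refine ⟨h4, h5, h6, ?_⟩
    have := e0.hasDerivAt_symm h1 (inv_ne_zero h5) (hh _ h2)
    rwa [inv_inv] at this
  · have := hs' (mk_mem_prod (hRb x hx).2.2 (hRb y hy).2.2)
    rw [Set.mem_ofPred_eq] at this
    simpa [smul_eq_mul, mul_comm] using this
  · exact e0.symm.isOpen_image_of_subset_source hVo (fun z hz => (hRb z (hV hz)).1)

/-- Parametric integrals of holomorphic functions are holomorphic. -/
lemma pb_hol {a b : ℝ} (hab : a ≤ b) {v : ℝ → ℂ} (hv : IntervalIntegrable v MeasureTheory.volume a b)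
    {Φ : ℝ → ℂ → ℂ} {W : Set ℂ}
    (hΦ : ∀ t ∈ Icc a b, DifferentiableOn ℂ (Φ t) W)
    (hm : ∀ z ∈ W, ContinuousOn (fun t => Φ t z) (Icc a b))
    (hb : ∀ z ∈ W, ∃ r > 0, ∃ M : ℝ, Metric.ball z r ⊆ W ∧ ∀ t ∈ Icc a b, ∀ y ∈ Metric.ball z r, ‖Φ t y‖ ≤ M) :
    DifferentiableOn ℂ (fun z => ∫ t in a..b, v t * Φ t z) W := by
  intro z hz
  obtain ⟨r, hr, M, hrW, hM⟩ := hb z hz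
  apply DifferentiableAt.differentiableWithinAt
  have hI : uIoc a b ⊆ Icc a b := by rw [uIoc_of_le hab]; exact Ioc_subset_Icc_self
  have hmeas : ∀ y ∈ W, MeasureTheory.AEStronglyMeasurable (fun t => Φ t y) (MeasureTheory.volume.restrict (uIoc a b)) := by
    intro y hy
    exact ((hm y hy).mono hI).aestronglyMeasurable measurableSet_uIoc
  have hvm : MeasureTheory.AEStronglyMeasurable v (MeasureTheory.volume.restrict (uIoc a b)) :=
    (intervalIntegrable_iff.1 hv).aestronglyMeasurable
  have hdAt : ∀ t ∈ Icc a b, ∀ y ∈ Metric.ball z r, HasDerivAt (Φ t) (deriv (Φ t) y) y := fun t ht y hy =>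
    (((hΦ t ht).mono hrW).differentiableAt (Metric.isOpen_ball.mem_nhds hy)).hasDerivAt
  have hderiv : MeasureTheory.AEStronglyMeasurable (fun t => deriv (Φ t) z) (MeasureTheory.volume.restrict (uIoc a b)) := by
    let u : ℕ → ℂ := fun n => ((r / 2 / (n + 1) : ℝ) : ℂ)
    have hupos : ∀ n : ℕ, 0 < r / 2 / (n + 1) := fun n => by positivity
    have hu0 : Tendsto (fun n : ℕ => r / 2 / ((n:ℝ) + 1)) atTop (𝓝 0) :=
      tendsto_const_nhds.div_atTop (tendsto_atTop_add_const_right _ _ tendsto_natCast_atTop_atTop)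
    have hu : Tendsto u atTop (𝓝 0) := by
      have := (Complex.continuous_ofReal.tendsto 0).comp hu0
      rw [Complex.ofReal_zero] at this
      exact this
    have hult : ∀ n, z + u n ∈ Metric.ball z r := fun n => by
      rw [Metric.mem_ball, dist_eq_norm]
      simp only [add_sub_cancel_left, u, Complex.norm_real, Real.norm_eq_abs, abs_of_pos (hupos n)]
      have : r / 2 / ((n:ℝ) + 1) ≤ r / 2 := div_le_self (by positivity) (by linarith [n.cast_nonneg (α := ℝ)])
      linarith
    refine aestronglyMeasurable_of_tendsto_ae atTop (f := fun n t => (u n)⁻¹ * (Φ t (z + u n) - Φ t z)) ?_ ?_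
    · intro n
      exact ((hmeas _ (hrW (hult n))).sub (hmeas z hz)).const_mul _
    · refine (MeasureTheory.ae_restrict_iff' measurableSet_uIoc).2 (Eventually.of_forall fun t ht => ?_)
      have h1 := (hdAt t (hI ht) z (Metric.mem_ball_self hr)).tendsto_slope_zero
      have h2 : Tendsto u atTop (𝓝[≠] 0) := tendsto_nhdsWithin_iff.2 ⟨hu, Eventually.of_forall fun n => by
        simp only [mem_compl_iff, mem_singleton_iff, u, Complex.ofReal_eq_zero]
        exact (hupos n).ne'⟩
      exact h1.comp h2
  refine (intervalIntegral.hasDerivAt_integral_of_dominated_loc_of_deriv_le (s := Metric.ball z (r/2))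
    (F := fun z t => v t * Φ t z) (F' := fun z t => v t * deriv (Φ t) z) (bound := fun t => ‖v t‖ * (M / (r/2)))
    (Metric.ball_mem_nhds z (half_pos hr)) ?_ ?_ ?_ ?_ ?_ ?_).2.differentiableAt
  · filter_upwards [Metric.ball_mem_nhds z hr] with y hy using hvm.mul (hmeas y (hrW hy))
  · rw [intervalIntegrable_iff] at hv ⊢
    refine (hv.norm.mul_const M).mono' (hvm.mul (hmeas z hz)) ?_
    refine (MeasureTheory.ae_restrict_iff' measurableSet_uIoc).2 (Eventually.of_forall fun t ht => ?_)
    rw [norm_mul]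
    exact mul_le_mul_of_nonneg_left (hM t (hI ht) z (Metric.mem_ball_self hr)) (norm_nonneg _)
  · exact hvm.mul hderiv
  · refine Eventually.of_forall fun t ht y hy => ?_
    rw [norm_mul]
    refine mul_le_mul_of_nonneg_left ?_ (norm_nonneg _)
    have hsub : Metric.closedBall y (r/2) ⊆ Metric.ball z r := fun x hx => by
      rw [Metric.mem_ball] at hy ⊢
      rw [Metric.mem_closedBall] at hx
      linarith [dist_triangle x y z]
    -- shrink slightly
    refine Complex.norm_deriv_le_of_forall_mem_sphere_norm_le (half_pos hr) ?_ fun x hx => hM t (hI ht) x (hsub (Metric.sphere_subset_closedBall hx))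
    exact (((hΦ t (hI ht)).mono (hsub.trans hrW)).diffContOnCl_ball Subset.rfl)
  · exact hv.norm.mul_const _
  · refine Eventually.of_forall fun t ht y hy => ?_
    exact (hdAt t (hI ht) y (Metric.ball_subset_ball (by linarith) hy)).const_mul _

structure CLoop where
  a : ℝ
  b : ℝ
  hab : a ≤ b
  σ : ℝ → ℂ
  v : ℝ → ℂ
  c : ℝ
  cont : ContinuousOn σ (Icc a b)
  closed : σ b = σ a
  int : IntervalIntegrable v MeasureTheory.volume a b
  der : ∀ t ∈ Ioo a b \ {c}, HasDerivAt σ (v t) t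
  vcont : ∀ t ∈ Ioo a b \ {c}, ContinuousAt v t

namespace CLoop
variable (L : CLoop)

def img : Set ℂ := L.σ '' Icc L.a L.b

noncomputable def integ (f : ℂ → ℂ) : ℂ := ∫ t in L.a..L.b, L.v t * f (L.σ t)

noncomputable def wind (w : ℂ) : ℂ := L.integ fun z => (z - w)⁻¹

lemma img_compact : IsCompact L.img := isCompact_Icc.image_of_continuousOn L.cont

lemma img_preconn : IsPreconnected L.img := isPreconnected_Icc.image _ L.cont

lemma img_nonempty : L.img.Nonempty := ⟨L.σ L.a, _, ⟨le_refl _, L.hab⟩, rfl⟩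

lemma mem_img {t : ℝ} (ht : t ∈ Icc L.a L.b) : L.σ t ∈ L.img := ⟨t, ht, rfl⟩

lemma integrable {f : ℂ → ℂ} (hf : ContinuousOn f L.img) :
    IntervalIntegrable (fun t => L.v t * f (L.σ t)) MeasureTheory.volume L.a L.b := by
  apply L.int.mul_continuousOn
  rw [uIcc_of_le L.hab]
  exact hf.comp L.cont fun t ht => L.mem_img ht

lemma integ_eq_zero {U : Set ℂ} {f G : ℂ → ℂ} (hU : L.img ⊆ U) (hf : ContinuousOn f L.img)
    (hG : ∀ z ∈ U, HasDerivAt G (f z) z) : L.integ f = 0 := by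
  unfold integ
  rw [MeasureTheory.integral_eq_of_hasDerivAt_off_countable_of_le (fun t => G (L.σ t)) _ L.hab
    (countable_singleton L.c) ?_ ?_ (L.integrable hf), L.closed, sub_self]
  · intro t ht
    exact ((hG _ (hU (L.mem_img ht))).continuousAt.comp_continuousWithinAt (L.cont t ht))
  · intro t ht
    have := (hG _ (hU (L.mem_img (Ioo_subset_Icc_self ht.1)))).scomp t (L.der t ht)
    rw [smul_eq_mul] at this
    exact this

lemma sub_ne {w : ℂ} (hw : w ∉ L.img) {z : ℂ} (hz : z ∈ L.img) : z - w ≠ 0 := fun h =>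
  hw (by rw [← sub_eq_zero.1 h]; exact hz)

lemma wind_diff : DifferentiableOn ℂ L.wind L.imgᶜ := by
  unfold wind integ
  refine pb_hol L.hab L.int (Φ := fun t w => (L.σ t - w)⁻¹) ?_ ?_ ?_
  · intro t ht w hw
    have : L.σ t - w ≠ 0 := fun h => hw (by rw [← sub_eq_zero.1 h]; exact L.mem_img ht)
    exact ((differentiableAt_const _).sub differentiableAt_id).inv this |>.differentiableWithinAt
  · intro w hw
    exact (L.cont.sub continuousOn_const).inv₀ fun t ht => L.sub_ne hw (L.mem_img ht)
  · intro w hw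
    obtain ⟨r, hr, hb⟩ := Metric.isOpen_iff.1 L.img_compact.isClosed.isOpen_compl w hw
    refine ⟨r/2, half_pos hr, (r/2)⁻¹, (Metric.ball_subset_ball (by linarith)).trans hb, fun t ht y hy => ?_⟩
    rw [norm_inv]
    refine inv_anti₀ (half_pos hr) ?_
    by_contra! h
    refine hb (a := L.σ t) ?_ (L.mem_img ht)
    rw [Metric.mem_ball] at hy ⊢
    rw [← dist_eq_norm] at h
    linarith [dist_triangle (L.σ t) y w]

lemma wind_int {w : ℂ} (hw : w ∉ L.img) : ∃ n : ℤ, L.wind w = n * (2 * Real.pi * Complex.I) := by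
  rw [← Complex.exp_eq_one_iff]
  have hne : ∀ t ∈ Icc L.a L.b, L.σ t - w ≠ 0 := fun t ht h => hw (by rw [← sub_eq_zero.1 h]; exact L.mem_img ht)
  have hcf : ContinuousOn (fun z : ℂ => (z - w)⁻¹) L.img :=
    (continuousOn_id.sub continuousOn_const).inv₀ fun z hz => L.sub_ne hw hz
  have hinteg := L.integrable hcf
  set P : ℝ → ℂ := fun x => ∫ t in L.a..x, L.v t * (L.σ t - w)⁻¹ with hP
  have key := MeasureTheory.integral_eq_of_hasDerivAt_off_countable_of_le
    (fun t => Complex.exp (-P t) * (L.σ t - w)) (fun _ => 0) L.hab (countable_singleton L.c) ?_ ?_ (by simp)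
  · have h0 : P L.a = 0 := by simp [hP]
    have h1 : P L.b = L.wind w := rfl
    simp only [intervalIntegral.integral_zero, h0, h1, L.closed, neg_zero, Complex.exp_zero, one_mul] at key
    have h2 : L.σ L.a - w ≠ 0 := hne _ ⟨le_refl _, L.hab⟩
    have h3 : (Complex.exp (-L.wind w) - 1) * (L.σ L.a - w) = 0 := by rw [sub_mul, one_mul, ← key]
    have h4 := sub_eq_zero.1 ((mul_eq_zero.1 h3).resolve_right h2)
    rw [Complex.exp_neg, inv_eq_one] at h4
    exact h4
  · have hc : ContinuousOn P (Icc L.a L.b) := by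
      have := intervalIntegral.continuousOn_primitive_interval' hinteg (left_mem_uIcc)
      rwa [uIcc_of_le L.hab] at this
    exact hc.neg.cexp.mul (L.cont.sub continuousOn_const)
  · intro t ht
    have hσ := L.der t ht
    have hn := hne t (Ioo_subset_Icc_self ht.1)
    have hct : ContinuousAt (fun t => L.v t * (L.σ t - w)⁻¹) t :=
      (L.vcont t ht).mul ((hσ.continuousAt.sub continuousAt_const).inv₀ hn)
    have hPd : HasDerivAt P (L.v t * (L.σ t - w)⁻¹) t := by
      refine intervalIntegral.integral_hasDerivAt_right ?_ ?_ hct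
      · refine hinteg.mono_set ?_
        rw [uIcc_of_le L.hab, uIcc_of_le ht.1.1.le]
        exact Icc_subset_Icc_right ht.1.2.le
      · refine ContinuousAt.stronglyMeasurableAtFilter (s := Ioo L.a L.b \ {L.c}) (isOpen_Ioo.sdiff isClosed_singleton) ?_ t ht
        intro x hx
        exact (L.vcont x hx).mul (((L.der x hx).continuousAt.sub continuousAt_const).inv₀ (hne x (Ioo_subset_Icc_self hx.1)))
    have := (hPd.neg.cexp).mul (hσ.sub_const w)
    refine this.congr_deriv ?_
    have hx : L.v t * (L.σ t - w)⁻¹ * (L.σ t - w) = L.v t := by rw [mul_assoc, inv_mul_cancel₀ hn, mul_one]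
    linear_combination (-Complex.exp (-P t)) * hx

end CLoop

lemma pb_compl_open (L : CLoop) : IsOpen L.imgᶜ := L.img_compact.isClosed.isOpen_compl

namespace CLoop
variable (L : CLoop)

open Classical in
noncomputable def num (w : ℂ) : ℤ := if h : w ∉ L.img then (L.wind_int h).choose else 0

lemma num_spec {w : ℂ} (hw : w ∉ L.img) : L.wind w = L.num w * (2 * Real.pi * Complex.I) := by
  unfold num
  rw [dif_pos hw]
  exact (L.wind_int hw).choose_spec

lemma two_pi_I_ne : (2 * Real.pi * Complex.I : ℂ) ≠ 0 := Complex.two_pi_I_ne_zero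

lemma num_cont : ContinuousOn L.num L.imgᶜ := by
  have h1 : ContinuousOn (fun w => (L.wind w / (2 * Real.pi * Complex.I)).re) L.imgᶜ :=
    Complex.continuous_re.comp_continuousOn (L.wind_diff.continuousOn.div_const _)
  have h2 : ContinuousOn (fun w => ((L.num w : ℤ) : ℝ)) L.imgᶜ := by
    refine h1.congr fun w hw => ?_
    beta_reduce
    rw [L.num_spec hw, mul_div_assoc, div_self two_pi_I_ne, mul_one]
    exact (Complex.intCast_re _).symm
  exact (Int.isClosedEmbedding_coe_real.isEmbedding.isInducing.continuousOn_iff).2 h2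

lemma num_eventually {w : ℂ} (hw : w ∉ L.img) : ∀ᶠ z in 𝓝 w, z ∉ L.img ∧ L.num z = L.num w := by
  have h := L.num_cont.continuousAt ((pb_compl_open L).mem_nhds hw)
  filter_upwards [(pb_compl_open L).mem_nhds hw, h.preimage_mem_nhds ((isOpen_discrete {L.num w}).mem_nhds rfl)] with z h1 h2
  exact ⟨h1, h2⟩

lemma num_const {A : Set ℂ} (hA : IsPreconnected A) (hAi : A ⊆ L.imgᶜ) {x y : ℂ} (hx : x ∈ A) (hy : y ∈ A) :
    L.num x = L.num y := by
  have := (hA.image _ (L.num_cont.mono hAi)).subsingleton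
  exact this ⟨x, hx, rfl⟩ ⟨y, hy, rfl⟩

lemma num_zero_of_wind {w : ℂ} (hw : w ∉ L.img) (h : L.wind w = 0) : L.num w = 0 := by
  rw [L.num_spec hw] at h
  exact_mod_cast (mul_eq_zero.1 h).resolve_right two_pi_I_ne

lemma wind_zero_of_ball {R : ℝ} (hR : L.img ⊆ Metric.ball 0 R) {w : ℂ} (hw : w ∉ Metric.ball (0:ℂ) R) :
    L.wind w = 0 := by
  have hd : DifferentiableOn ℂ (fun z : ℂ => (z - w)⁻¹) (Metric.ball 0 R) := by
    intro z hz
    have hne : z - w ≠ 0 := fun h => hw (by rw [← sub_eq_zero.1 h]; exact hz)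
    exact ((differentiableAt_id.sub (differentiableAt_const w)).inv hne).differentiableWithinAt
  obtain ⟨G, hG⟩ := hd.isExactOn_ball
  exact L.integ_eq_zero hR (hd.continuousOn.mono hR) hG

lemma wind_zero_of_sc {Ω : Set ℂ} (hΩ : IsOpen Ω) (hsc : SimplyConnectedSpace Ω) (hi : L.img ⊆ Ω)
    {w : ℂ} (hw : w ∉ Ω) : L.wind w = 0 := by
  have hne : ∀ z ∈ Ω, z - w ≠ 0 := fun z hz h => hw (by rw [← sub_eq_zero.1 h]; exact hz)
  obtain ⟨ℓ, hℓc, hℓ⟩ := Complex.exists_continuousOn_eqOn_exp_comp (U := Ω) hsc hΩ (g := fun z => z - w)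
    (by fun_prop) (by rintro ⟨z, hz, h⟩; exact hne z hz h)
  refine L.integ_eq_zero (G := ℓ) hi ?_ ?_
  · exact ContinuousOn.inv₀ (by fun_prop) fun z hz => hne z (hi hz)
  · intro z hz
    have h1 : HasDerivAt (fun u => Complex.exp u + w) (Complex.exp (ℓ z)) (ℓ z) := (Complex.hasDerivAt_exp _).add_const w
    have h2 := HasDerivAt.of_local_left_inverse (f := fun u => Complex.exp u + w) (g := ℓ) (a := z)
      (hℓc.continuousAt (hΩ.mem_nhds hz)) h1 (Complex.exp_ne_zero _) ?_
    · have : Complex.exp (ℓ z) = z - w := hℓ hz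
      rwa [this] at h2
    · filter_upwards [hΩ.mem_nhds hz] with y hy
      have : Complex.exp (ℓ y) = y - w := hℓ hy
      simp [this]

lemma closure_level (hloc : ∀ q ∈ L.img, ∃ A B : Set ℂ, IsPreconnected A ∧ IsPreconnected B ∧ A ⊆ L.imgᶜ ∧
      B ⊆ L.imgᶜ ∧ A ∪ B ∪ L.img ∈ 𝓝 q ∧ ∀ᶠ q' in 𝓝 q, q' ∈ L.img → q' ∈ closure A ∧ q' ∈ closure B)
    {w : ℂ} (hw : w ∉ L.img) {q : ℂ} (hq : q ∈ L.img) :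
    q ∈ closure {z | z ∉ L.img ∧ L.num z = L.num w} := by
  set S : Set ℂ := {z | z ∉ L.img ∧ L.num z = L.num w} with hS
  have hSo : IsOpen S := by
    rw [isOpen_iff_mem_nhds]
    intro z hz
    filter_upwards [L.num_eventually hz.1] with y hy
    exact ⟨hy.1, hy.2.trans hz.2⟩
  have hne : (L.img ∩ closure S).Nonempty := by
    by_contra hcon
    rw [not_nonempty_iff_eq_empty] at hcon
    have hcl : IsClosed S := by
      apply isClosed_of_closure_subset
      intro z hz
      have hz' : z ∉ L.img := fun h => by
        have : z ∈ L.img ∩ closure S := ⟨h, hz⟩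
        rw [hcon] at this; exact this
      obtain ⟨y, hy, hyS⟩ := (mem_closure_iff_nhds.1 hz) _ (L.num_eventually hz')
      exact ⟨hz', hy.2.symm.trans hyS.2⟩
    rcases isClopen_iff.1 ⟨hcl, hSo⟩ with h | h
    · have : w ∈ S := ⟨hw, rfl⟩
      rw [h] at this; exact this
    · obtain ⟨z, hz⟩ := L.img_nonempty
      have : z ∈ S := h ▸ mem_univ z
      exact this.1 hz
  let O : Set ℂ := interior {z | z ∈ L.img → z ∈ closure S}
  have hO : ∀ z ∈ L.img, z ∈ closure S → z ∈ O := by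
    intro z hz hzS
    obtain ⟨A, B, hA, hB, hAi, hBi, hnb, hcl⟩ := hloc z hz
    obtain ⟨y, hy, hyS⟩ := (mem_closure_iff_nhds.1 hzS) _ hnb
    rw [mem_interior_iff_mem_nhds]
    rcases hy with (hy | hy) | hy
    · have : A ⊆ S := fun x hx => ⟨hAi hx, (L.num_const hA hAi hx hy).trans hyS.2⟩
      filter_upwards [hcl] with x hx hxi
      exact closure_mono this (hx hxi).1
    · have : B ⊆ S := fun x hx => ⟨hBi hx, (L.num_const hB hBi hx hy).trans hyS.2⟩
      filter_upwards [hcl] with x hx hxi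
      exact closure_mono this (hx hxi).2
    · exact absurd hy hyS.1
  by_contra hqS
  obtain ⟨z0, hz0, hz0S⟩ := hne
  obtain ⟨x, hx, hxO, hxS⟩ := L.img_preconn O (closure S)ᶜ isOpen_interior isClosed_closure.isOpen_compl
    (fun z hz => by
      by_cases h : z ∈ closure S
      · exact Or.inl (hO z hz h)
      · exact Or.inr h) ⟨z0, hz0, hO z0 hz0 hz0S⟩ ⟨q, hq, hqS⟩
  exact hxS (interior_subset hxO hx)

/-- All winding numbers are bounded by the jump at one point. -/
lemma num_bound (hloc : ∀ q ∈ L.img, ∃ A B : Set ℂ, IsPreconnected A ∧ IsPreconnected B ∧ A ⊆ L.imgᶜ ∧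
      B ⊆ L.imgᶜ ∧ A ∪ B ∪ L.img ∈ 𝓝 q ∧ ∀ᶠ q' in 𝓝 q, q' ∈ L.img → q' ∈ closure A ∧ q' ∈ closure B)
    {q : ℂ} (hq : q ∈ L.img) {A B : Set ℂ} (hA : IsPreconnected A) (hB : IsPreconnected B) (hAi : A ⊆ L.imgᶜ)
    (hBi : B ⊆ L.imgᶜ) (hnb : A ∪ B ∪ L.img ∈ 𝓝 q) {x y : ℂ} (hx : x ∈ A) (hy : y ∈ B)
    {w : ℂ} (hw : w ∉ L.img) : |L.num w| ≤ |L.num x - L.num y| := by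
  have key : ∀ w, w ∉ L.img → L.num w = L.num x ∨ L.num w = L.num y := by
    intro w hw
    obtain ⟨z, hz, hzS⟩ := (mem_closure_iff_nhds.1 (L.closure_level hloc hw hq)) _ hnb
    rcases hz with (hz | hz) | hz
    · exact Or.inl (hzS.2.symm.trans (L.num_const hA hAi hz hx))
    · exact Or.inr (hzS.2.symm.trans (L.num_const hB hBi hz hy))
    · exact absurd hz hzS.1
  obtain ⟨R, hR⟩ := L.img_compact.isBounded.subset_ball (0:ℂ)
  have hR' : ((|R| : ℝ) : ℂ) ∉ Metric.ball (0:ℂ) R := by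
    rw [mem_ball_zero_iff, Complex.norm_real, Real.norm_eq_abs, abs_abs]
    exact not_lt.2 (le_abs_self R)
  have hi : ((|R| : ℝ) : ℂ) ∉ L.img := fun h => hR' (hR h)
  have h0 := L.num_zero_of_wind hi (L.wind_zero_of_ball hR hR')
  have h1 := key _ hi
  rw [h0] at h1
  rcases key w hw with h | h <;> rcases h1 with h1 | h1 <;> rw [h, ← h1] <;> simp

end CLoop

lemma pb_dslope_symm (f : ℂ → ℂ) (a b : ℂ) : dslope f a b = dslope f b a := by
  by_cases h : a = b
  · rw [h]
  · rw [dslope_of_ne _ (Ne.symm h), dslope_of_ne _ h, slope_comm]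

lemma pb_dslope_bound {U : Set ℂ} (hU : IsOpen U) {f : ℂ → ℂ} (hf : DifferentiableOn ℂ f U)
    {C : Set ℂ} (hC : IsCompact C) (hCU : C ⊆ U) {z : ℂ} (hz : z ∈ U) :
    ∃ r > 0, ∃ M : ℝ, Metric.ball z r ⊆ U ∧ ∀ s ∈ C, ∀ y ∈ Metric.ball z r, ‖dslope f s y‖ ≤ M := by
  obtain ⟨r0, hr0, hrU⟩ := Metric.nhds_basis_closedBall.mem_iff.1 (hU.mem_nhds hz)
  obtain ⟨r, hr, rfl⟩ : ∃ r, 0 < r ∧ 3 * r = r0 := ⟨r0 / 3, by positivity, by ring⟩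
  obtain ⟨M, hM⟩ := (hC.union (isCompact_closedBall z (3*r))).exists_bound_of_continuousOn
    (hf.continuousOn.mono (union_subset hCU hrU))
  obtain ⟨D, hD⟩ := (isCompact_closedBall z (3*r)).exists_bound_of_continuousOn
    ((hf.deriv hU).continuousOn.mono hrU)
  have hsub : Metric.ball z r ⊆ Metric.closedBall z (3*r) := fun y hy => by
    rw [Metric.mem_ball] at hy; rw [Metric.mem_closedBall]; linarith
  refine ⟨r, hr, max D (2 * M / r), hsub.trans hrU, fun s hs y hy => ?_⟩
  by_cases hys : y = s
  · subst hys
    rw [dslope_same]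
    exact (hD _ (hsub hy)).trans (le_max_left _ _)
  have hpos : 0 < ‖y - s‖ := norm_pos_iff.2 (sub_ne_zero.2 hys)
  rw [dslope_of_ne _ hys, slope_def_field, norm_div, div_le_iff₀ hpos]
  by_cases hs2 : dist s z < 2 * r
  · have := (convex_closedBall z (3*r)).norm_image_sub_le_of_norm_deriv_le (f := f) (C := D) (x := s) (y := y)
      (fun x hx => hf.differentiableAt (hU.mem_nhds (hrU hx))) hD
      (by rw [Metric.mem_closedBall]; linarith) (hsub hy)
    exact this.trans (mul_le_mul_of_nonneg_right (le_max_left _ _) hpos.le)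
  · have h1 : r ≤ ‖y - s‖ := by
      rw [← dist_eq_norm]
      rw [Metric.mem_ball] at hy
      linarith [dist_triangle s y z, dist_comm s y]
    have h2 := hM s (Or.inl hs)
    have h3 := hM y (Or.inr (hsub hy))
    have h4 : ‖f y - f s‖ ≤ 2 * M := (norm_sub_le _ _).trans (by linarith)
    have h5 : 2 * M = 2 * M / r * r := by field_simp
    have h6 : 0 ≤ 2 * M / r := div_nonneg (by linarith [norm_nonneg (f s)]) hr.le
    calc ‖f y - f s‖ ≤ 2 * M / r * r := h5 ▸ h4
      _ ≤ 2 * M / r * ‖y - s‖ := mul_le_mul_of_nonneg_left h1 h6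
      _ ≤ _ := mul_le_mul_of_nonneg_right (le_max_right _ _) hpos.le

namespace CLoop
variable (L : CLoop)

lemma dix_h {U : Set ℂ} (hU : IsOpen U) {f : ℂ → ℂ} (hf : DifferentiableOn ℂ f U) (hi : L.img ⊆ U) :
    DifferentiableOn ℂ (fun z => L.integ fun s => dslope f s z) U := by
  unfold integ
  refine pb_hol L.hab L.int (Φ := fun t z => dslope f (L.σ t) z) ?_ ?_ ?_
  · intro t ht
    exact (Complex.differentiableOn_dslope (hU.mem_nhds (hi (L.mem_img ht)))).2 hf
  · intro z hz
    simp_rw [fun t => pb_dslope_symm f (L.σ t) z]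
    have := ((Complex.differentiableOn_dslope (hU.mem_nhds hz)).2 hf).continuousOn
    exact this.comp L.cont fun t ht => hi (L.mem_img ht)
  · intro z hz
    obtain ⟨r, hr, M, h1, h2⟩ := pb_dslope_bound hU hf L.img_compact hi hz
    exact ⟨r, hr, M, h1, fun t ht => h2 _ (L.mem_img ht)⟩

lemma dix_k {f : ℂ → ℂ} (hf : ContinuousOn f L.img) :
    DifferentiableOn ℂ (fun z => L.integ fun s => f s * (s - z)⁻¹) L.imgᶜ := by
  unfold integ
  have hfc : ContinuousOn (fun t => f (L.σ t)) (Icc L.a L.b) := hf.comp L.cont fun t ht => L.mem_img ht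
  refine pb_hol L.hab L.int (Φ := fun t w => f (L.σ t) * (L.σ t - w)⁻¹) ?_ ?_ ?_
  · intro t ht w hw
    have : L.σ t - w ≠ 0 := L.sub_ne hw (L.mem_img ht)
    exact (((differentiableAt_const _).sub differentiableAt_id).inv this).const_mul _ |>.differentiableWithinAt
  · intro w hw
    exact hfc.mul ((L.cont.sub continuousOn_const).inv₀ fun t ht => L.sub_ne hw (L.mem_img ht))
  · intro w hw
    obtain ⟨r, hr, hb⟩ := Metric.isOpen_iff.1 L.img_compact.isClosed.isOpen_compl w hw
    obtain ⟨M, hM⟩ := L.img_compact.exists_bound_of_continuousOn hf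
    refine ⟨r/2, half_pos hr, M * (r/2)⁻¹, (Metric.ball_subset_ball (by linarith)).trans hb, fun t ht y hy => ?_⟩
    have hMt := hM _ (L.mem_img ht)
    rw [norm_mul, norm_inv]
    refine mul_le_mul hMt ?_ (by positivity) ((norm_nonneg _).trans hMt)
    refine inv_anti₀ (half_pos hr) ?_
    by_contra! h
    refine hb (a := L.σ t) ?_ (L.mem_img ht)
    rw [Metric.mem_ball] at hy ⊢
    rw [← dist_eq_norm] at h
    linarith [dist_triangle (L.σ t) y w]

lemma dix_eq {f : ℂ → ℂ} (hf : ContinuousOn f L.img) {z : ℂ} (hz : z ∉ L.img) :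
    (L.integ fun s => dslope f s z) = (L.integ fun s => f s * (s - z)⁻¹) - f z * L.wind z := by
  have hcf : ContinuousOn (fun s : ℂ => (s - z)⁻¹) L.img :=
    (continuousOn_id.sub continuousOn_const).inv₀ fun s hs => L.sub_ne hz hs
  have i1 := L.integrable (f := fun s => f s * (s - z)⁻¹) (hf.mul hcf)
  have i2 := (L.integrable hcf).const_mul (f z)
  unfold wind integ
  beta_reduce
  rw [← intervalIntegral.integral_const_mul, ← intervalIntegral.integral_sub i1 i2]
  apply intervalIntegral.integral_congr
  intro t ht
  rw [uIcc_of_le L.hab] at ht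
  have hne := L.sub_ne hz (L.mem_img ht)
  have hne' : z - L.σ t ≠ 0 := by rw [← neg_sub]; exact neg_ne_zero.2 hne
  simp only [dslope_of_ne f (sub_ne_zero.1 hne'), slope_def_field, Pi.mul_apply]
  rw [show z - L.σ t = -(L.σ t - z) by ring]
  field_simp
  ring

lemma dix_lim {f : ℂ → ℂ} (hf : ContinuousOn f L.img) :
    Tendsto (fun z => L.integ fun s => f s * (s - z)⁻¹) (cocompact ℂ) (𝓝 0) := by
  obtain ⟨M, hM⟩ := L.img_compact.exists_bound_of_continuousOn hf
  obtain ⟨R, hR⟩ := L.img_compact.isBounded.subset_ball (0:ℂ)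
  have hM0 : 0 ≤ M := by
    obtain ⟨z, hz⟩ := L.img_nonempty
    exact (norm_nonneg _).trans (hM z hz)
  have hlim : Tendsto (fun z : ℂ => (∫ t in L.a..L.b, ‖L.v t‖) * (M * (‖z‖ - R)⁻¹)) (cocompact ℂ) (𝓝 0) := by
    have h1 : Tendsto (fun z : ℂ => (‖z‖ - R)⁻¹) (cocompact ℂ) (𝓝 0) :=
      tendsto_inv_atTop_zero.comp (tendsto_atTop_add_const_right _ (-R) (tendsto_norm_cocompact_atTop (E := ℂ)))
    simpa using (h1.const_mul M).const_mul (∫ t in L.a..L.b, ‖L.v t‖)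
  refine squeeze_zero_norm' ?_ hlim
  filter_upwards [(tendsto_norm_cocompact_atTop (E := ℂ)).eventually_gt_atTop R] with z hz
  unfold integ
  rw [← intervalIntegral.integral_mul_const]
  refine intervalIntegral.norm_integral_le_of_norm_le L.hab ?_ (L.int.norm.mul_const _)
  refine Eventually.of_forall fun t ht => ?_
  have hm := L.mem_img (Ioc_subset_Icc_self ht)
  rw [norm_mul, norm_mul, norm_inv]
  refine mul_le_mul_of_nonneg_left (mul_le_mul (hM _ hm) ?_ (by positivity) hM0) (norm_nonneg _)
  refine inv_anti₀ (by linarith) ?_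
  have := hR hm
  rw [mem_ball_zero_iff] at this
  have h2 := norm_sub_norm_le z (L.σ t)
  rw [norm_sub_rev] at h2
  linarith

/-- Dixon: the homology version of Cauchy for two loops. -/
lemma dixon (L₁ L₂ : CLoop) {U : Set ℂ} (hU : IsOpen U) {f : ℂ → ℂ} (hf : DifferentiableOn ℂ f U)
    (h1 : L₁.img ⊆ U) (h2 : L₂.img ⊆ U) (hw : ∀ w ∉ U, L₁.num w = L₂.num w) : L₁.integ f = L₂.integ f := by
  have main : ∀ g : ℂ → ℂ, DifferentiableOn ℂ g U → ∀ z ∈ U,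
      (L₁.integ fun s => dslope g s z) = (L₂.integ fun s => dslope g s z) := by
    intro g hg
    have g1 := hg.continuousOn.mono h1
    have g2 := hg.continuousOn.mono h2
    let h := fun z => (L₁.integ fun s => dslope g s z) - (L₂.integ fun s => dslope g s z)
    let k := fun z => (L₁.integ fun s => g s * (s - z)⁻¹) - (L₂.integ fun s => g s * (s - z)⁻¹)
    classical
    let H : ℂ → ℂ := fun z => if z ∈ U then h z else k z
    let V : Set ℂ := {z | z ∉ L₁.img ∧ z ∉ L₂.img ∧ L₁.num z = L₂.num z}
    have hVo : IsOpen V := by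
      rw [isOpen_iff_mem_nhds]
      rintro z ⟨hz1, hz2, hz⟩
      filter_upwards [L₁.num_eventually hz1, L₂.num_eventually hz2] with y hy1 hy2
      exact ⟨hy1.1, hy2.1, by rw [hy1.2, hy2.2, hz]⟩
    have hHV : ∀ z ∈ V, H z = k z := by
      rintro z ⟨hz1, hz2, hz⟩
      by_cases hzU : z ∈ U
      · simp only [H, if_pos hzU, h, k]
        rw [L₁.dix_eq g1 hz1, L₂.dix_eq g2 hz2, L₁.num_spec hz1, L₂.num_spec hz2, hz]
        ring
      · simp only [H, if_neg hzU]
    have hdh : DifferentiableOn ℂ h U := (L₁.dix_h hU hg h1).sub (L₂.dix_h hU hg h2)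
    have hdk : DifferentiableOn ℂ k V := ((L₁.dix_k g1).mono fun z hz => hz.1).sub
      ((L₂.dix_k g2).mono fun z hz => hz.2.1)
    have hH : Differentiable ℂ H := by
      intro z
      by_cases hzU : z ∈ U
      · refine (hdh.differentiableAt (hU.mem_nhds hzU)).congr_of_eventuallyEq ?_
        filter_upwards [hU.mem_nhds hzU] with y hy
        simp only [H, if_pos hy]
      · have hzV : z ∈ V := ⟨fun hh => hzU (h1 hh), fun hh => hzU (h2 hh), hw z hzU⟩
        refine (hdk.differentiableAt (hVo.mem_nhds hzV)).congr_of_eventuallyEq ?_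
        filter_upwards [hVo.mem_nhds hzV] with y hy
        exact hHV y hy
    have hlim : Tendsto H (cocompact ℂ) (𝓝 0) := by
      have hk : Tendsto k (cocompact ℂ) (𝓝 0) := by
        simpa using (L₁.dix_lim g1).sub (L₂.dix_lim g2)
      obtain ⟨R, hR⟩ := (L₁.img_compact.union L₂.img_compact).isBounded.subset_ball (0:ℂ)
      refine hk.congr' ?_
      filter_upwards [(tendsto_norm_cocompact_atTop (E := ℂ)).eventually_ge_atTop R] with z hz
      have hzR : z ∉ Metric.ball (0:ℂ) R := by rw [mem_ball_zero_iff]; exact not_lt.2 hz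
      have a1 : L₁.img ⊆ Metric.ball 0 R := subset_union_left.trans hR
      have a2 : L₂.img ⊆ Metric.ball 0 R := subset_union_right.trans hR
      have b1 : z ∉ L₁.img := fun hh => hzR (a1 hh)
      have b2 : z ∉ L₂.img := fun hh => hzR (a2 hh)
      refine (hHV z ⟨b1, b2, ?_⟩).symm
      rw [L₁.num_zero_of_wind b1 (L₁.wind_zero_of_ball a1 hzR), L₂.num_zero_of_wind b2 (L₂.wind_zero_of_ball a2 hzR)]
    intro z hz
    have := hH.apply_eq_of_tendsto_cocompact z hlim
    simp only [H, if_pos hz, h] at this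
    exact sub_eq_zero.1 this
  obtain ⟨z0, hz0, hz0i⟩ : ∃ z ∈ U, z ∉ L₁.img ∪ L₂.img := by
    by_contra! hcon
    have hUe : U = L₁.img ∪ L₂.img := Subset.antisymm hcon (union_subset h1 h2)
    have hcomp := L₁.img_compact.union L₂.img_compact
    rcases isClopen_iff.1 ⟨hUe ▸ hcomp.isClosed, hU⟩ with h | h
    · obtain ⟨z, hz⟩ := L₁.img_nonempty
      have := h1 hz
      rw [h] at this; exact this
    · rw [← hUe, h] at hcomp
      exact noncompact_univ ℂ hcomp
  have hz1 : z0 ∉ L₁.img := fun h => hz0i (Or.inl h)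
  have hz2 : z0 ∉ L₂.img := fun h => hz0i (Or.inr h)
  have hg : DifferentiableOn ℂ (fun w => f w * (w - z0)) U := hf.mul (by fun_prop)
  have := main _ hg z0 hz0
  rw [L₁.dix_eq (hg.continuousOn.mono h1) hz1, L₂.dix_eq (hg.continuousOn.mono h2) hz2] at this
  simp only [sub_self, mul_zero, zero_mul, sub_zero] at this
  have e : ∀ L : CLoop, z0 ∉ L.img → (L.integ fun s => f s * (s - z0) * (s - z0)⁻¹) = L.integ f := by
    intro L hL
    unfold integ
    apply intervalIntegral.integral_congr
    intro t ht
    rw [uIcc_of_le L.hab] at ht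
    simp only
    rw [mul_assoc (f _), mul_inv_cancel₀ (L.sub_ne hL (L.mem_img ht)), mul_one]
  rw [e _ hz1, e _ hz2] at this
  exact this

end CLoop

/-- open rectangle -/
def pbQ (ρ δ : ℝ) : Set ℂ := {z | |z.re| < ρ ∧ |z.im| < δ}

lemma pbQ_open (ρ δ : ℝ) : IsOpen (pbQ ρ δ) := by
  have h1 : IsOpen {z : ℂ | |z.re| < ρ} := isOpen_lt (by fun_prop) (by fun_prop)
  have h2 : IsOpen {z : ℂ | |z.im| < δ} := isOpen_lt (by fun_prop) (by fun_prop)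
  exact h1.inter h2

/-- one side of a graph -/
def pbSide (ρ δ : ℝ) (g : ℝ → ℝ) (e : ℝ) : Set ℂ := {z | z ∈ pbQ ρ δ ∧ 0 < e * (z.im - g z.re)}

lemma pbSide_preconn {ρ δ : ℝ} {g : ℝ → ℝ} (hg : Continuous g) (hgδ : ∀ x, |g x| < δ) {e : ℝ}
    (he : e = 1 ∨ e = -1) : IsPreconnected (pbSide ρ δ g e) := by
  have h : pbSide ρ δ g e = (fun p : ℝ × ℝ => ((p.1 : ℂ) + ((g p.1 + p.2 * (e * δ - g p.1) : ℝ) : ℂ) * Complex.I)) ''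
      (Ioo (-ρ) ρ ×ˢ Ioo 0 1) := by
    ext z
    constructor
    · rintro ⟨⟨h1, h2⟩, h3⟩
      have h4 := abs_lt.1 (hgδ z.re)
      have h5 := abs_lt.1 h2
      have hD : 0 < e * (e * δ - g z.re) := by
        rcases he with rfl | rfl <;> linarith
      have hD' : e * δ - g z.re ≠ 0 := fun h => by rw [h, mul_zero] at hD; exact lt_irrefl _ hD
      refine ⟨(z.re, (z.im - g z.re) / (e * δ - g z.re)), ⟨abs_lt.1 h1, ?_, ?_⟩, ?_⟩
      · have : (z.im - g z.re) / (e * δ - g z.re) = (e * (z.im - g z.re)) / (e * (e * δ - g z.re)) := by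
          rcases he with rfl | rfl <;> field_simp
        simp only [this]; positivity
      · have : (z.im - g z.re) / (e * δ - g z.re) = (e * (z.im - g z.re)) / (e * (e * δ - g z.re)) := by
          rcases he with rfl | rfl <;> field_simp
        simp only [this]
        rw [div_lt_one hD]
        rcases he with rfl | rfl <;> linarith
      · simp only [div_mul_cancel₀ _ hD', add_sub_cancel]
        exact Complex.re_add_im z
    · rintro ⟨⟨x, s⟩, ⟨h1, h2, h3⟩, rfl⟩
      simp only at h1 h2 h3
      have h4 := abs_lt.1 (hgδ x)
      simp only [pbSide, pbQ, mem_ofPred_eq, Complex.add_re, Complex.ofReal_re, Complex.mul_re, Complex.I_re,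
        mul_zero, Complex.ofReal_im, Complex.I_im, mul_one, sub_self, add_zero, Complex.add_im, Complex.mul_im, zero_add]
      refine ⟨⟨abs_lt.2 h1, abs_lt.2 ⟨?_, ?_⟩⟩, ?_⟩ <;> rcases he with rfl | rfl <;> nlinarith
  rw [h]
  refine ((isPreconnected_Ioo).prod isPreconnected_Ioo).image _ (Continuous.continuousOn ?_)
  fun_prop

lemma pb_chart {S : Set ℂ} {ψ : ℂ → ℂ} {ρ δ : ℝ} (hc : ContinuousOn ψ (pbQ ρ δ))
    (ho : ∀ V ⊆ pbQ ρ δ, IsOpen V → IsOpen (ψ '' V)) {g : ℝ → ℝ} (hg : Continuous g) (hgδ : ∀ x, |g x| < δ)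
    (hS : ∀ z ∈ pbQ ρ δ, ψ z ∈ S ↔ z.im = g z.re) {A B : Set ℂ} (hA : A = ψ '' pbSide ρ δ g 1)
    (hB : B = ψ '' pbSide ρ δ g (-1)) :
    IsPreconnected A ∧ IsPreconnected B ∧ A ⊆ Sᶜ ∧ B ⊆ Sᶜ ∧ ∀ z ∈ pbQ ρ δ, A ∪ B ∪ S ∈ 𝓝 (ψ z) ∧
      ∀ᶠ q' in 𝓝 (ψ z), q' ∈ S → q' ∈ closure A ∧ q' ∈ closure B := by
  have hsub : ∀ e, pbSide ρ δ g e ⊆ pbQ ρ δ := fun e z hz => hz.1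
  have hdis : ∀ e, ψ '' pbSide ρ δ g e ⊆ Sᶜ := by
    rintro e _ ⟨z, hz, rfl⟩ hzS
    have := (hS z hz.1).1 hzS
    have h2 := hz.2
    rw [this, sub_self, mul_zero] at h2
    exact lt_irrefl _ h2
  have hcl : ∀ e, (e = 1 ∨ e = -1) → ∀ z ∈ pbQ ρ δ, z.im = g z.re → ψ z ∈ closure (ψ '' pbSide ρ δ g e) := by
    intro e he z hz hzg
    have hline : Tendsto (fun s : ℝ => z + ((e * s : ℝ) : ℂ) * Complex.I) (𝓝[>] 0) (𝓝 z) := by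
      have : Continuous (fun s : ℝ => z + ((e * s : ℝ) : ℂ) * Complex.I) := by fun_prop
      have := this.tendsto 0
      simp only [mul_zero, Complex.ofReal_zero, zero_mul, add_zero] at this
      exact this.mono_left nhdsWithin_le_nhds
    refine mem_closure_of_tendsto ((hc.continuousAt ((pbQ_open ρ δ).mem_nhds hz)).tendsto.comp hline) ?_
    filter_upwards [hline.eventually ((pbQ_open ρ δ).mem_nhds hz), self_mem_nhdsWithin] with s hs hs0
    refine ⟨_, ⟨hs, ?_⟩, rfl⟩
    simp only [Complex.add_re, Complex.ofReal_re, Complex.mul_re, Complex.I_re,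
        mul_zero, Complex.ofReal_im, Complex.I_im, mul_one, sub_self, add_zero, Complex.add_im, Complex.mul_im]
    rw [hzg]
    have : (0:ℝ) < s := hs0
    rcases he with rfl | rfl <;> linarith
  subst hA hB
  refine ⟨(pbSide_preconn hg hgδ (Or.inl rfl)).image _ (hc.mono (hsub _)),
    (pbSide_preconn hg hgδ (Or.inr rfl)).image _ (hc.mono (hsub _)), hdis _, hdis _, fun z hz => ⟨?_, ?_⟩⟩
  · refine mem_of_superset ((ho _ Subset.rfl (pbQ_open ρ δ)).mem_nhds ⟨z, hz, rfl⟩) ?_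
    rintro _ ⟨y, hy, rfl⟩
    rcases lt_trichotomy (y.im) (g y.re) with h | h | h
    · exact Or.inl (Or.inr ⟨y, ⟨hy, by linarith⟩, rfl⟩)
    · exact Or.inr ((hS y hy).2 h)
    · exact Or.inl (Or.inl ⟨y, ⟨hy, by linarith⟩, rfl⟩)
  · filter_upwards [(ho _ Subset.rfl (pbQ_open ρ δ)).mem_nhds ⟨z, hz, rfl⟩] with q hq hqS
    obtain ⟨y, hy, rfl⟩ := hq
    have := (hS y hy).1 hqS
    exact ⟨hcl 1 (Or.inl rfl) y hy this, hcl (-1) (Or.inr rfl) y hy this⟩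

structure IsBox (F : ℂ → ℂ) (Ω : Set ℂ) (q : ℂ) (R : ℝ) (ψ : ℂ → ℂ) : Prop where
  Rpos : 0 < R
  zero : ψ 0 = q
  hne : F q ≠ 0
  prop : ∀ z ∈ Metric.ball (0:ℂ) R, ψ z ∈ Ω ∧ F (ψ z) ≠ 0 ∧ ‖F (ψ z)‖ ≤ 2 * ‖F q‖ ∧ HasDerivAt ψ (F (ψ z)) z
  est : ∀ x ∈ Metric.ball (0:ℂ) R, ∀ y ∈ Metric.ball (0:ℂ) R,
        ‖ψ x - ψ y - F q * (x - y)‖ ≤ ‖F q‖ / 2 * ‖x - y‖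
  opn : ∀ V ⊆ Metric.ball (0:ℂ) R, IsOpen V → IsOpen (ψ '' V)

lemma pb_exists_box {Ω : Set ℂ} (hΩ : IsOpen Ω) {F : ℂ → ℂ} (hF : DifferentiableOn ℂ F Ω)
    {q : ℂ} (hq : q ∈ Ω) (hFq : F q ≠ 0) : ∃ R ψ, IsBox F Ω q R ψ := by
  obtain ⟨R, hR, ψ, h1, h2, h3, h4⟩ := pb_box hΩ hF hq hFq
  exact ⟨R, ψ, hR, h1, hFq, h2, h3, h4⟩

namespace IsBox
variable {F : ℂ → ℂ} {Ω : Set ℂ} {q : ℂ} {R : ℝ} {ψ : ℂ → ℂ}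

lemma lower (B : IsBox F Ω q R ψ) {x y : ℂ} (hx : x ∈ Metric.ball (0:ℂ) R) (hy : y ∈ Metric.ball (0:ℂ) R) :
    ‖F q‖ / 2 * ‖x - y‖ ≤ ‖ψ x - ψ y‖ := by
  have h1 := B.est x hx y hy
  have h2 := norm_sub_norm_le (F q * (x - y)) (ψ x - ψ y)
  rw [norm_sub_rev (F q * (x - y)), norm_mul] at h2
  linarith

lemma upper (B : IsBox F Ω q R ψ) {x y : ℂ} (hx : x ∈ Metric.ball (0:ℂ) R) (hy : y ∈ Metric.ball (0:ℂ) R) :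
    ‖ψ x - ψ y‖ ≤ 3 / 2 * ‖F q‖ * ‖x - y‖ := by
  have h1 := B.est x hx y hy
  have h2 := norm_sub_norm_le (ψ x - ψ y) (F q * (x - y))
  rw [norm_mul] at h2
  linarith

lemma inj (B : IsBox F Ω q R ψ) {x y : ℂ} (hx : x ∈ Metric.ball (0:ℂ) R) (hy : y ∈ Metric.ball (0:ℂ) R) (h : ψ x = ψ y) : x = y := by
  have h1 := B.lower hx hy
  rw [h, sub_self, norm_zero] at h1
  have h2 : 0 < ‖F q‖ := norm_pos_iff.2 B.hne
  have h3 : ‖x - y‖ ≤ 0 := by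
    by_contra! h4
    have : 0 < ‖F q‖ / 2 * ‖x - y‖ := by positivity
    linarith
  exact sub_eq_zero.1 (norm_le_zero_iff.1 h3)

lemma cont (B : IsBox F Ω q R ψ) : ContinuousOn ψ (Metric.ball (0:ℂ) R) := fun z hz =>
  (B.prop z hz).2.2.2.continuousAt.continuousWithinAt

/-- Inside a flow box the solution is a translation. -/
lemma flow (B : IsBox F Ω q R ψ) (hΩ : IsOpen Ω) (hF : DifferentiableOn ℂ F Ω) {γ : ℝ → ℂ} (hγ : IsSolOn F Ω (Ici 0) γ)
    {t u : ℝ} {z : ℂ} (ht : 0 ≤ t) (htu : 0 ≤ t + u) (hz : z ∈ Metric.ball (0:ℂ) R)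
    (hzu : z + u ∈ Metric.ball (0:ℂ) R) (h : γ t = ψ z) : γ (t + u) = ψ (z + u) := by
  have hsub : Icc (min t (t+u)) (max t (t+u)) ⊆ Ici 0 := fun s hs => (le_min ht htu).trans hs.1
  have key := pb_uniq hΩ hF (a := min t (t+u)) (b := max t (t+u)) (α := γ) (β := fun s => ψ (z + ((s - t : ℝ) : ℂ)))
    (fun s hs => ⟨(hγ s (hsub hs)).1, (hγ s (hsub hs)).2.mono hsub⟩) ?_ (t₀ := t)
    ⟨min_le_left _ _, le_max_left _ _⟩ (by simp [h])
  · have := key (x := t + u) ⟨min_le_right _ _, le_max_right _ _⟩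
    simpa using this
  · intro s hs
    have hmem : z + ((s - t : ℝ) : ℂ) ∈ Metric.ball (0:ℂ) R := by
      rcases eq_or_ne u 0 with rfl | hu
      · have : s = t := le_antisymm (by simpa using hs.2) (by simpa using hs.1)
        simpa [this] using hz
      · have hc := (convex_ball (0:ℂ) R) hz hzu (a := 1 - (s-t)/u) (b := (s-t)/u) ?_ ?_ (by ring)
        · convert hc using 1
          have hu' : (u:ℂ) ≠ 0 := by exact_mod_cast hu
          simp only [Complex.real_smul]
          push_cast
          field_simp
          ring
        · rcases lt_or_gt_of_ne hu with h0 | h0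
          · rw [min_eq_right (by linarith), max_eq_left (by linarith)] at hs
            have : (s-t)/u ≤ 1 := by rw [div_le_one_of_neg h0]; linarith [hs.1]
            linarith
          · rw [min_eq_left (by linarith), max_eq_right (by linarith)] at hs
            have : (s-t)/u ≤ 1 := by rw [div_le_one h0]; linarith [hs.2]
            linarith
        · rcases lt_or_gt_of_ne hu with h0 | h0
          · rw [min_eq_right (by linarith), max_eq_left (by linarith)] at hs
            exact div_nonneg_of_nonpos (by linarith [hs.2]) h0.le
          · rw [min_eq_left (by linarith), max_eq_right (by linarith)] at hs
            exact div_nonneg (by linarith [hs.1]) h0.le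
    have h4 := B.prop _ hmem
    refine ⟨h4.1, ?_⟩
    have h5 : HasDerivAt (fun s : ℝ => z + ((s - t : ℝ) : ℂ)) 1 s := by
      simpa using (((hasDerivAt_id s).sub_const t).ofReal_comp).const_add z
    have h6 := h4.2.2.2.scomp s h5
    rw [one_smul] at h6
    exact h6.hasDerivWithinAt

end IsBox

lemma pbQ_ball {ρ δ R : ℝ} (h : ρ + δ ≤ R) : pbQ ρ δ ⊆ Metric.ball 0 R := by
  intro z hz
  rw [mem_ball_zero_iff]
  linarith [Complex.norm_le_abs_re_add_abs_im z, hz.1, hz.2]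

/-- The standing data: an injective solution returning to a regular point. -/
structure PBData where
  Ω : Set ℂ
  hΩ : IsOpen Ω
  F : ℂ → ℂ
  hF : DifferentiableOn ℂ F Ω
  γ : ℝ → ℂ
  hγ : IsSolOn F Ω (Ici 0) γ
  inj : InjOn γ (Ici 0)
  p : ℂ
  ρ : ℝ
  ψ : ℂ → ℂ
  box : IsBox F Ω p (4 * ρ) ψ
  clus : MapClusterPt p atTop γ
  nez : ∀ t, 0 ≤ t → F (γ t) ≠ 0

namespace PBData
variable (D : PBData)

lemma ρpos : 0 < D.ρ := by have := D.box.Rpos; linarith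

lemma mem_ball {x y : ℝ} (h : |x| + |y| < 4 * D.ρ) : (x : ℂ) + y * Complex.I ∈ Metric.ball (0:ℂ) (4 * D.ρ) := by
  rw [mem_ball_zero_iff]
  have := Complex.norm_le_abs_re_add_abs_im ((x : ℂ) + y * Complex.I)
  simp only [Complex.add_re, Complex.ofReal_re, Complex.mul_re, Complex.I_re,
        mul_zero, Complex.ofReal_im, Complex.I_im, mul_one, sub_self, add_zero, Complex.add_im, Complex.mul_im, zero_add] at this
  linarith

lemma flow' {t x x' y : ℝ} (ht : 0 ≤ t) (ht' : 0 ≤ t + (x' - x)) (h1 : |x| + |y| < 4 * D.ρ) (h2 : |x'| + |y| < 4 * D.ρ)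
    (h : D.γ t = D.ψ (x + y * Complex.I)) : D.γ (t + (x' - x)) = D.ψ (x' + y * Complex.I) := by
  have e : (x : ℂ) + y * Complex.I + ((x' - x : ℝ) : ℂ) = x' + y * Complex.I := by push_cast; ring
  have := D.box.flow D.hΩ D.hF D.hγ (z := x + y * Complex.I) (u := x' - x) ht ht' (D.mem_ball h1) (by rw [e]; exact D.mem_ball h2) h
  rwa [e] at this

/-- crossing at time t with height y -/
def Cross (δ t y : ℝ) : Prop := 0 ≤ t ∧ |y| < δ ∧ D.γ t = D.ψ (y * Complex.I)

lemma inj' {x y x' y' : ℝ} (h1 : |x| + |y| < 4 * D.ρ) (h2 : |x'| + |y'| < 4 * D.ρ)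
    (h : D.ψ (x + y * Complex.I) = D.ψ (x' + y' * Complex.I)) : x = x' ∧ y = y' := by
  have := D.box.inj (D.mem_ball h1) (D.mem_ball h2) h
  have h3 := congrArg Complex.re this
  have h4 := congrArg Complex.im this
  simp at h3 h4
  exact ⟨h3, h4⟩

variable {D}

lemma Cross.flow {δ t y u : ℝ} (hδ : δ ≤ D.ρ) (h : D.Cross δ t y) (hu : |u| < 3 * D.ρ) (htu : 0 ≤ t + u) :
    D.γ (t + u) = D.ψ (u + y * Complex.I) := by
  have hρ := D.ρpos
  have h0 : D.γ t = D.ψ ((0:ℝ) + y * Complex.I) := by rw [h.2.2]; simp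
  have := D.flow' (x := 0) (x' := u) (y := y) h.1 (by simpa using htu)
    (by rw [abs_zero]; linarith [h.2.1]) (by linarith [h.2.1]) h0
  simpa using this

lemma Cross.gap {δ t y t' y' : ℝ} (hδ : δ ≤ D.ρ) (h : D.Cross δ t y) (h' : D.Cross δ t' y') (hlt : t < t') :
    t + 2 * D.ρ ≤ t' := by
  by_contra! hc
  have hρ := D.ρpos
  have hu : |t' - t| < 2 * D.ρ := abs_lt.2 ⟨by linarith, by linarith⟩
  have h1 := h.flow hδ (u := t' - t) (by linarith) (by linarith [h'.1])
  rw [add_sub_cancel, h'.2.2, ← zero_add ((y' : ℂ) * _), ← Complex.ofReal_zero] at h1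
  have := (D.inj' (by rw [abs_zero]; linarith [h'.2.1]) (by linarith [h.2.1]) h1).1
  linarith

lemma Cross.uniq {δ t y y' : ℝ} (hδ : δ ≤ D.ρ) (h : D.Cross δ t y) (h' : D.Cross δ t y') : y = y' := by
  have hρ := D.ρpos
  have h1 := h.2.2.symm.trans h'.2.2
  rw [← zero_add ((y' : ℂ) * _), ← zero_add ((y : ℂ) * _), ← Complex.ofReal_zero] at h1
  exact (D.inj' (by rw [abs_zero]; linarith [h.2.1]) (by rw [abs_zero]; linarith [h'.2.1]) h1).2

lemma visit {δ t : ℝ} (hδ : δ ≤ D.ρ) {z : ℂ} (hz : z ∈ pbQ D.ρ δ) (ht : D.ρ ≤ t) (h : D.γ t = D.ψ z) :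
    D.Cross δ (t - z.re) z.im := by
  have hρ := D.ρpos
  have h1 := abs_lt.1 hz.1
  refine ⟨by linarith, hz.2, ?_⟩
  have := D.flow' (t := t) (x := z.re) (x' := 0) (y := z.im) (by linarith) (by linarith)
    (by linarith [hz.1, hz.2]) (by rw [abs_zero]; linarith [hz.2]) (by rw [Complex.re_add_im]; exact h)
  rw [zero_sub, ← sub_eq_add_neg] at this
  simpa using this

lemma exists_cross {δ : ℝ} (hδ0 : 0 < δ) (hδ : δ ≤ D.ρ) (N : ℝ) : ∃ t y, N ≤ t ∧ D.Cross δ t y := by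
  have hρ := D.ρpos
  have hn : D.ψ '' pbQ D.ρ δ ∈ 𝓝 D.p := by
    refine (D.box.opn _ (pbQ_ball (by linarith)) (pbQ_open _ _)).mem_nhds ⟨0, ?_, D.box.zero⟩
    exact ⟨by simpa using hρ, by simpa using hδ0⟩
  have hf : ∃ᶠ t in atTop, D.γ t ∈ D.ψ '' pbQ D.ρ δ := D.clus.frequently hn
  obtain ⟨t, ⟨z, hz, hzt⟩, ht⟩ := (hf.and_eventually (eventually_ge_atTop (max (N + D.ρ) D.ρ))).exists
  refine ⟨_, _, ?_, visit hδ hz ((le_max_right _ _).trans ht) hzt.symm⟩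
  linarith [(le_max_left _ _).trans ht, (abs_lt.1 hz.1).2]

lemma exists_consec {δ : ℝ} (hδ0 : 0 < δ) (hδ : δ ≤ D.ρ) : ∃ t₁ y₁ t₂ y₂, D.ρ ≤ t₁ ∧ t₁ < t₂ ∧
    D.Cross δ t₁ y₁ ∧ D.Cross δ t₂ y₂ ∧ ∀ t y, D.Cross δ t y → t ≤ t₁ ∨ t₂ ≤ t := by
  have hρ := D.ρpos
  obtain ⟨t₁, y₁, h1, c1⟩ := exists_cross hδ0 hδ D.ρ
  obtain ⟨t₀, y₀, h0, c0⟩ := exists_cross hδ0 hδ (t₁ + 1)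
  let S : Set ℝ := {t | t₁ < t ∧ ∃ y, D.Cross δ t y}
  have hS : S.Nonempty := ⟨t₀, by linarith, y₀, c0⟩
  have hbd : BddBelow S := ⟨t₁, fun t ht => ht.1.le⟩
  obtain ⟨t₂, ⟨h2, y₂, c2⟩, hlt⟩ := exists_lt_of_csInf_lt hS (show sInf S < sInf S + D.ρ by linarith)
  refine ⟨t₁, y₁, t₂, y₂, h1, h2, c1, c2, fun t y c => ?_⟩
  by_contra! hcon
  have := c.gap hδ c2 hcon.2
  have h3 := csInf_le hbd (show t ∈ S from ⟨hcon.1, y, c⟩)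
  linarith

end PBData

/-- Two consecutive crossings. -/
structure PBCross (D : PBData) (δ : ℝ) where
  t₁ : ℝ
  y₁ : ℝ
  t₂ : ℝ
  y₂ : ℝ
  hδ0 : 0 < δ
  hδ : 4 * δ ≤ D.ρ
  h1 : D.ρ ≤ t₁
  hlt : t₁ < t₂
  c1 : D.Cross δ t₁ y₁
  c2 : D.Cross δ t₂ y₂
  cons : ∀ t y, D.Cross δ t y → t ≤ t₁ ∨ t₂ ≤ t

namespace PBCross
variable {D : PBData} {δ : ℝ} (E : PBCross D δ)

noncomputable def lam : ℝ := (E.y₁ - E.y₂) / D.ρ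
noncomputable def m : ℝ := (E.y₁ + E.y₂) / 2
noncomputable def κ : ℂ := 1 + E.lam * Complex.I
noncomputable def conn (x : ℝ) : ℂ := x + ((E.lam * x + E.m : ℝ) : ℂ) * Complex.I
noncomputable def g (x : ℝ) : ℝ := E.lam * max (-(D.ρ / 2)) (min x (D.ρ / 2)) + E.m
noncomputable def σ (t : ℝ) : ℂ := if t ≤ E.t₂ - D.ρ / 2 then D.γ t else D.ψ (E.conn (t - E.t₂))
noncomputable def v (t : ℝ) : ℂ := if t ≤ E.t₂ - D.ρ / 2 then D.F (D.γ t) else E.κ * D.F (D.ψ (E.conn (t - E.t₂)))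

lemma hδ' (E : PBCross D δ) : δ ≤ D.ρ := by linarith [E.hδ, E.hδ0]

lemma gap : E.t₁ + 2 * D.ρ ≤ E.t₂ := E.c1.gap E.hδ' E.c2 E.hlt

lemma lam_le : |E.lam| ≤ 1 / 2 := by
  have hρ := D.ρpos
  have a1 := abs_lt.1 E.c1.2.1
  have a2 := abs_lt.1 E.c2.2.1
  have := E.hδ
  rw [lam, abs_div, abs_of_pos hρ, div_le_iff₀ hρ, abs_le]
  constructor <;> linarith

lemma height {x : ℝ} (hx : |x| ≤ D.ρ / 2) : |E.lam * x + E.m| < δ := by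
  have hρ := D.ρpos
  have a1 := abs_lt.1 E.c1.2.1
  have a2 := abs_lt.1 E.c2.2.1
  have hx' := abs_le.1 hx
  obtain ⟨s, rfl⟩ : ∃ s, x = s * D.ρ := ⟨x / D.ρ, by field_simp⟩
  have e : E.lam * (s * D.ρ) + E.m = (s + 1/2) * E.y₁ + (1/2 - s) * E.y₂ := by
    rw [lam, m]; field_simp; ring
  have s1 : 0 ≤ s + 1/2 := by
    by_contra! h
    nlinarith
  have s2 : 0 ≤ 1/2 - s := by
    by_contra! h
    nlinarith
  rw [e, abs_lt]
  have p1 := mul_le_mul_of_nonneg_left a1.1.le s1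
  have p2 := mul_le_mul_of_nonneg_left a1.2.le s1
  have p3 := mul_le_mul_of_nonneg_left a2.1.le s2
  have p4 := mul_le_mul_of_nonneg_left a2.2.le s2
  rcases s1.eq_or_lt with h0 | h0
  · have hs : s = -(1/2) := by linarith
    subst hs
    constructor <;> linarith
  · have p5 := mul_lt_mul_of_pos_left a1.1 h0
    have p6 := mul_lt_mul_of_pos_left a1.2 h0
    constructor <;> linarith

lemma lam_right : E.lam * (D.ρ / 2) + E.m = E.y₁ := by
  have hρ := D.ρpos
  rw [lam, m]; field_simp; ring

lemma lam_left : E.lam * (-(D.ρ / 2)) + E.m = E.y₂ := by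
  have hρ := D.ρpos
  rw [lam, m]; field_simp; ring

lemma g_cont : Continuous E.g := by unfold g; fun_prop

lemma g_lt (x : ℝ) : |E.g x| < δ := by
  have hρ := D.ρpos
  refine E.height (abs_le.2 ⟨le_max_left _ _, max_le (by linarith) (min_le_right _ _)⟩)

lemma g_mid {x : ℝ} (hx : |x| ≤ D.ρ / 2) : E.g x = E.lam * x + E.m := by
  have := abs_le.1 hx
  rw [g, min_eq_left this.2, max_eq_right this.1]

lemma g_right {x : ℝ} (hx : D.ρ / 2 ≤ x) : E.g x = E.y₁ := by
  have hρ := D.ρpos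
  rw [g, min_eq_right hx, max_eq_right (by linarith), lam_right]

lemma g_left {x : ℝ} (hx : x ≤ -(D.ρ / 2)) : E.g x = E.y₂ := by
  have hρ := D.ρpos
  rw [g, min_eq_left (by linarith), max_eq_left hx, lam_left]

lemma conn_re (x : ℝ) : (E.conn x).re = x := by simp [conn]
lemma conn_im (x : ℝ) : (E.conn x).im = E.lam * x + E.m := by simp [conn]

lemma conn_mem {x : ℝ} (hx : |x| ≤ D.ρ / 2) : E.conn x ∈ pbQ D.ρ δ := by
  have hρ := D.ρpos
  refine ⟨?_, ?_⟩
  · rw [conn_re]; linarith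
  · rw [conn_im]; exact E.height hx

lemma Q_ball (E : PBCross D δ) : pbQ D.ρ δ ⊆ Metric.ball 0 (2 * D.ρ) := pbQ_ball (by linarith [E.hδ'])

lemma Q_ball' (E : PBCross D δ) : pbQ D.ρ δ ⊆ Metric.ball 0 (4 * D.ρ) := pbQ_ball (by linarith [E.hδ', D.ρpos])

lemma conn_deriv (x : ℝ) : HasDerivAt E.conn E.κ x := by
  have h1 : HasDerivAt (fun x : ℝ => E.lam * x + E.m) E.lam x := by
    simpa using ((hasDerivAt_id x).const_mul E.lam).add_const E.m
  have := ((hasDerivAt_id x).ofReal_comp).add ((h1.ofReal_comp).mul_const Complex.I)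
  refine (this.congr_deriv ?_).congr_of_eventuallyEq (Eventually.of_forall fun y => ?_)
  · simp [κ]
  · simp [conn]

lemma gamma_left : D.γ (E.t₂ - D.ρ / 2) = D.ψ (E.conn (-(D.ρ / 2))) := by
  have hρ := D.ρpos
  have := E.c2.flow E.hδ' (u := -(D.ρ / 2)) (by rw [abs_neg, abs_of_pos (by linarith)]; linarith)
    (by linarith [E.gap, E.h1])
  rw [← sub_eq_add_neg] at this
  rw [this, conn, lam_left]

lemma gamma_right : D.γ (E.t₁ + D.ρ / 2) = D.ψ (E.conn (D.ρ / 2)) := by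
  have hρ := D.ρpos
  have := E.c1.flow E.hδ' (u := (D.ρ / 2)) (by rw [abs_of_pos (by linarith)]; linarith)
    (by linarith [E.gap, E.h1])
  rw [this, conn, lam_right]

lemma σ_left {t : ℝ} (ht : t ≤ E.t₂ - D.ρ / 2) : E.σ t = D.γ t := if_pos ht

lemma σ_right {t : ℝ} (ht : E.t₂ - D.ρ / 2 ≤ t) : E.σ t = D.ψ (E.conn (t - E.t₂)) := by
  rcases ht.eq_or_lt with rfl | h
  · rw [E.σ_left le_rfl, gamma_left]
    congr 2; ring
  · exact if_neg (not_le.2 h)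

lemma γ_cont : ContinuousOn D.γ (Ici 0) := fun t ht => (D.hγ t ht).2.continuousWithinAt

lemma ψconn_cont : ContinuousOn (fun t => D.ψ (E.conn (t - E.t₂))) (Icc (E.t₂ - D.ρ / 2) (E.t₂ + D.ρ / 2)) := by
  intro t ht
  have hm := E.Q_ball' (E.conn_mem (x := t - E.t₂) (abs_le.2 ⟨by linarith [ht.1], by linarith [ht.2]⟩))
  have h1 := (D.box.prop _ hm).2.2.2.continuousAt
  have h2 : ContinuousAt (fun t => E.conn (t - E.t₂)) t :=
    ContinuousAt.comp (f := fun t => t - E.t₂) (E.conn_deriv _).continuousAt (by fun_prop)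
  exact (ContinuousAt.comp (f := fun t => E.conn (t - E.t₂)) h1 h2).continuousWithinAt

lemma a_le_c : E.t₁ + D.ρ / 2 ≤ E.t₂ - D.ρ / 2 := by linarith [E.gap, D.ρpos]
lemma c_le_b : E.t₂ - D.ρ / 2 ≤ E.t₂ + D.ρ / 2 := by linarith [E.gap, D.ρpos]

lemma left_sub : Icc (E.t₁ + D.ρ / 2) (E.t₂ - D.ρ / 2) ⊆ Ici 0 := fun t ht => by
  have := ht.1
  have := E.h1
  have := D.ρpos
  rw [mem_Ici]; linarith

lemma σ_cont : ContinuousOn E.σ (Icc (E.t₁ + D.ρ / 2) (E.t₂ + D.ρ / 2)) := by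
  rw [← Icc_union_Icc_eq_Icc E.a_le_c E.c_le_b]
  refine ContinuousOn.union_of_isClosed ?_ ?_ isClosed_Icc isClosed_Icc
  · exact (γ_cont.mono E.left_sub).congr fun t ht => E.σ_left ht.2
  · exact E.ψconn_cont.congr fun t ht => E.σ_right ht.1

lemma Fγ_cont : ContinuousOn (fun t => D.F (D.γ t)) (Ici 0) :=
  D.hF.continuousOn.comp γ_cont fun t ht => (D.hγ t ht).1

lemma ψconn_mem {t : ℝ} (ht : t ∈ Icc (E.t₂ - D.ρ / 2) (E.t₂ + D.ρ / 2)) :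
    E.conn (t - E.t₂) ∈ pbQ D.ρ δ := E.conn_mem (abs_le.2 ⟨by linarith [ht.1], by linarith [ht.2]⟩)

lemma Fψ_cont : ContinuousOn (fun t => E.κ * D.F (D.ψ (E.conn (t - E.t₂)))) (Icc (E.t₂ - D.ρ / 2) (E.t₂ + D.ρ / 2)) :=
  continuousOn_const.mul (D.hF.continuousOn.comp E.ψconn_cont fun t ht =>
    (D.box.prop _ (E.Q_ball' (E.ψconn_mem ht))).1)

lemma v_int : IntervalIntegrable E.v MeasureTheory.volume (E.t₁ + D.ρ / 2) (E.t₂ + D.ρ / 2) := by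
  refine IntervalIntegrable.trans (b := E.t₂ - D.ρ / 2) ?_ ?_
  · have h := ((Fγ_cont (D := D)).mono E.left_sub).intervalIntegrable_of_Icc (μ := MeasureTheory.volume) E.a_le_c
    refine h.congr fun t ht => ?_
    rw [uIoc_of_le E.a_le_c] at ht
    exact (if_pos ht.2).symm
  · have h := E.Fψ_cont.intervalIntegrable_of_Icc (μ := MeasureTheory.volume) E.c_le_b
    refine h.congr fun t ht => ?_
    rw [uIoc_of_le E.c_le_b] at ht
    exact (if_neg (not_le.2 ht.1)).symm

noncomputable def loop : CLoop where
  a := E.t₁ + D.ρ / 2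
  b := E.t₂ + D.ρ / 2
  hab := E.a_le_c.trans E.c_le_b
  σ := E.σ
  v := E.v
  c := E.t₂ - D.ρ / 2
  cont := E.σ_cont
  closed := by
    rw [E.σ_left E.a_le_c, E.σ_right E.c_le_b, gamma_right]
    congr 2; ring
  int := E.v_int
  der := by
    rintro t ⟨ht, hc⟩
    have hρ := D.ρpos
    rcases lt_or_gt_of_ne hc with h | h
    · have h0 : 0 < t := by linarith [ht.1, E.h1]
      have h1 := ((D.hγ t h0.le).2).hasDerivAt (Ici_mem_nhds h0)
      rw [show E.v t = D.F (D.γ t) from if_pos h.le]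
      refine h1.congr_of_eventuallyEq ?_
      filter_upwards [Iio_mem_nhds h] with s hs
      exact E.σ_left (le_of_lt hs)
    · have hm := E.Q_ball' (E.ψconn_mem ⟨h.le, ht.2.le⟩)
      have h1 := (D.box.prop _ hm).2.2.2
      have h2 : HasDerivAt (fun t => E.conn (t - E.t₂)) E.κ t := by
        simpa using HasDerivAt.comp_sub_const t E.t₂ (E.conn_deriv (t - E.t₂))
      have h3 := h1.scomp t h2
      rw [show E.v t = E.κ * D.F (D.ψ (E.conn (t - E.t₂))) from if_neg (not_le.2 h)]
      refine HasDerivAt.congr_of_eventuallyEq h3 ?_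
      filter_upwards [Ioi_mem_nhds h] with s hs
      exact E.σ_right (le_of_lt hs)
  vcont := by
    rintro t ⟨ht, hc⟩
    have hρ := D.ρpos
    rcases lt_or_gt_of_ne hc with h | h
    · have h0 : 0 < t := by linarith [ht.1, E.h1]
      refine ((Fγ_cont (D := D)).continuousAt (Ici_mem_nhds h0)).congr ?_
      filter_upwards [Iio_mem_nhds h] with s hs
      exact (if_pos (le_of_lt hs)).symm
    · refine (E.Fψ_cont.continuousAt (Icc_mem_nhds h ht.2)).congr ?_
      filter_upwards [Ioi_mem_nhds h] with s hs
      exact (if_neg (not_le.2 hs)).symm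

lemma img_cases {q : ℂ} (hq : q ∈ E.loop.img) :
    (∃ t ∈ Icc (E.t₁ + D.ρ / 2) (E.t₂ - D.ρ / 2), D.γ t = q) ∨
    (∃ x, |x| ≤ D.ρ / 2 ∧ D.ψ (E.conn x) = q) := by
  obtain ⟨t, ht, rfl⟩ := hq
  rcases le_total t (E.t₂ - D.ρ / 2) with h | h
  · exact Or.inl ⟨t, ⟨ht.1, h⟩, (E.σ_left h).symm⟩
  · have := ht.2
    exact Or.inr ⟨t - E.t₂, abs_le.2 ⟨by linarith, by
      change t ≤ E.t₂ + D.ρ / 2 at this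
      linarith⟩, (E.σ_right h).symm⟩

lemma mem_img_left {t : ℝ} (ht : t ∈ Icc (E.t₁ + D.ρ / 2) (E.t₂ - D.ρ / 2)) : D.γ t ∈ E.loop.img := by
  rw [← E.σ_left ht.2]
  exact E.loop.mem_img ⟨ht.1, ht.2.trans E.c_le_b⟩

lemma mem_img_conn {x : ℝ} (hx : |x| ≤ D.ρ / 2) : D.ψ (E.conn x) ∈ E.loop.img := by
  have hx' := abs_le.1 hx
  have h := E.σ_right (t := E.t₂ + x) (by linarith)
  rw [add_sub_cancel_left] at h
  rw [← h]
  exact E.loop.mem_img ⟨E.a_le_c.trans (by linarith : E.t₂ - D.ρ/2 ≤ _), (by linarith : _ ≤ E.t₂ + D.ρ/2)⟩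

/-- Inside the big box the loop is a graph. -/
lemma img_box {z : ℂ} (hz : z ∈ pbQ D.ρ δ) : D.ψ z ∈ E.loop.img ↔ z.im = E.g z.re := by
  have hρ := D.ρpos
  have hre := abs_lt.1 hz.1
  have hgap := E.gap
  have hh1 := E.h1
  have hδ := E.hδ'
  constructor
  · intro h
    rcases E.img_cases h with ⟨t, ht, hq⟩ | ⟨x, hx, hq⟩
    · have hc := PBData.visit E.hδ' hz (by linarith [ht.1]) hq
      have hr : t - z.re = E.t₁ ∨ t - z.re = E.t₂ := by
        rcases E.cons _ _ hc with h1 | h1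
        · rcases h1.eq_or_lt with h2 | h2
          · exact Or.inl h2
          · have := hc.gap E.hδ' E.c1 h2
            linarith [ht.1]
        · rcases h1.eq_or_lt with h2 | h2
          · exact Or.inr h2.symm
          · have := E.c2.gap E.hδ' hc h2
            linarith [ht.2]
      rcases hr with hr | hr
      · rw [hr] at hc
        rw [hc.uniq E.hδ' E.c1, E.g_right (by linarith [ht.1])]
      · rw [hr] at hc
        rw [hc.uniq E.hδ' E.c2, E.g_left (by linarith [ht.2])]
    · have := D.box.inj (E.Q_ball' (E.conn_mem hx)) (E.Q_ball' hz) hq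
      rw [← this, conn_re, conn_im, E.g_mid hx]
  · intro h
    have hzz : z = z.re + (E.g z.re : ℝ) * Complex.I := by rw [← h]; exact (Complex.re_add_im z).symm
    rcases le_or_gt |z.re| (D.ρ / 2) with hx | hx
    · have := E.mem_img_conn hx
      rw [conn, ← E.g_mid hx, ← hzz] at this
      exact this
    · rcases lt_abs.1 hx with hx | hx
      · rw [hzz, E.g_right hx.le, ← E.c1.flow E.hδ' (by linarith [hz.1]) (by linarith)]
        exact E.mem_img_left ⟨by linarith, by linarith⟩
      · rw [hzz, E.g_left (by linarith), ← E.c2.flow E.hδ' (by linarith [hz.1]) (by linarith)]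
        exact E.mem_img_left ⟨by linarith, by linarith⟩

end PBCross

lemma pb_arctan_int {a b c ε : ℝ} (hε : 0 < ε) : ∫ t in a..b, 72 * (ε / ((t - c) ^ 2 + ε ^ 2)) ≤ 72 * Real.pi := by
  have hd : ∀ t : ℝ, HasDerivAt (fun t => 72 * Real.arctan ((t - c) / ε)) (72 * (ε / ((t - c) ^ 2 + ε ^ 2))) t := by
    intro t
    have h1 : HasDerivAt (fun t : ℝ => (t - c) / ε) (1 / ε) t := ((hasDerivAt_id t).sub_const c).div_const ε
    refine ((h1.arctan).const_mul 72).congr_deriv ?_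
    field_simp
    ring
  have hcont : Continuous fun t : ℝ => 72 * (ε / ((t - c) ^ 2 + ε ^ 2)) := by
    have : ∀ t : ℝ, (t - c) ^ 2 + ε ^ 2 ≠ 0 := fun t => by positivity
    fun_prop (disch := assumption)
  rw [intervalIntegral.integral_eq_sub_of_hasDerivAt (fun t _ => hd t) (hcont.intervalIntegrable _ _)]
  have h1 := Real.arctan_lt_pi_div_two ((b - c) / ε)
  have h2 := Real.neg_pi_div_two_lt_arctan ((a - c) / ε)
  linarith

namespace PBCross
variable {D : PBData} {δ : ℝ} (E : PBCross D δ)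

lemma hloc : ∀ q ∈ E.loop.img, ∃ A B : Set ℂ, IsPreconnected A ∧ IsPreconnected B ∧ A ⊆ E.loop.imgᶜ ∧
      B ⊆ E.loop.imgᶜ ∧ A ∪ B ∪ E.loop.img ∈ 𝓝 q ∧
      ∀ᶠ q' in 𝓝 q, q' ∈ E.loop.img → q' ∈ closure A ∧ q' ∈ closure B := by
  intro q hq
  have hρ := D.ρpos
  by_cases hQ : q ∈ D.ψ '' pbQ D.ρ δ
  · obtain ⟨z, hz, rfl⟩ := hQ
    obtain ⟨h1, h2, h3, h4, h5⟩ := pb_chart (S := E.loop.img) (D.box.cont.mono E.Q_ball')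
      (fun V hV => D.box.opn V (hV.trans E.Q_ball')) E.g_cont E.g_lt (fun z hz => E.img_box hz) rfl rfl
    exact ⟨_, _, h1, h2, h3, h4, h5 z hz⟩
  · have hconn : ∀ x, |x| ≤ D.ρ / 2 → D.ψ (E.conn x) ≠ q := fun x hx h => hQ ⟨_, E.conn_mem hx, h⟩
    rcases E.img_cases hq with ⟨s, hs, hsq⟩ | ⟨x, hx, h⟩
    swap
    · exact absurd h (hconn x hx)
    have hsa : E.t₁ + D.ρ / 2 < s := by
      refine lt_of_le_of_ne hs.1 fun h => ?_
      refine hconn (D.ρ / 2) (by rw [abs_of_pos (by linarith)]) ?_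
      rw [← gamma_right, h, hsq]
    have hsc : s < E.t₂ - D.ρ / 2 := by
      refine lt_of_le_of_ne hs.2 fun h => ?_
      refine hconn (-(D.ρ / 2)) (by rw [abs_neg, abs_of_pos (by linarith)]) ?_
      rw [← gamma_left, ← h, hsq]
    have hs0 : 0 ≤ s := E.left_sub hs
    obtain ⟨R, φ, B⟩ := pb_exists_box D.hΩ D.hF (D.hγ s hs0).1 (D.nez s hs0)
    have hRpos := B.Rpos
    obtain ⟨r0, hr0, hr0R, hr0a, hr0c⟩ : ∃ r0 > 0, r0 < R ∧ r0 < s - (E.t₁ + D.ρ / 2) ∧ r0 < E.t₂ - D.ρ / 2 - s := by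
      refine ⟨min R (min (s - (E.t₁ + D.ρ / 2)) (E.t₂ - D.ρ / 2 - s)) / 2, ?_, ?_, ?_, ?_⟩
      · have : 0 < min R (min (s - (E.t₁ + D.ρ / 2)) (E.t₂ - D.ρ / 2 - s)) :=
          lt_min hRpos (lt_min (by linarith) (by linarith))
        linarith
      all_goals
        have h1 := min_le_left R (min (s - (E.t₁ + D.ρ / 2)) (E.t₂ - D.ρ / 2 - s))
        have h2 := min_le_right R (min (s - (E.t₁ + D.ρ / 2)) (E.t₂ - D.ρ / 2 - s))
        have h3 := min_le_left (s - (E.t₁ + D.ρ / 2)) (E.t₂ - D.ρ / 2 - s)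
        have h4 := min_le_right (s - (E.t₁ + D.ρ / 2)) (E.t₂ - D.ρ / 2 - s)
        linarith
    let C : Set ℂ := E.σ '' (Icc (E.t₁ + D.ρ / 2) (E.t₂ + D.ρ / 2) \ Ioo (s - r0) (s + r0))
    have hC : IsClosed C := ((isCompact_Icc.diff isOpen_Ioo).image_of_continuousOn
      (E.σ_cont.mono sdiff_subset)).isClosed
    have hqC : q ∉ C := by
      rintro ⟨t, ⟨ht, hts⟩, htq⟩
      rcases le_total t (E.t₂ - D.ρ / 2) with h | h
      · rw [E.σ_left h, ← hsq] at htq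
        have := D.inj (E.left_sub ⟨ht.1, h⟩) hs0 htq
        exact hts (by rw [this]; exact ⟨by linarith, by linarith⟩)
      · rw [E.σ_right h] at htq
        exact hconn _ (abs_le.2 ⟨by linarith, by linarith [ht.2]⟩) htq
    have hcont : ContinuousAt φ 0 := B.cont.continuousAt (Metric.isOpen_ball.mem_nhds (Metric.mem_ball_self hRpos))
    have hnb : φ ⁻¹' Cᶜ ∈ 𝓝 (0:ℂ) := hcont (by rw [B.zero, hsq]; exact hC.isOpen_compl.mem_nhds hqC)
    obtain ⟨r1, hr1, hr1C⟩ := Metric.mem_nhds_iff.1 hnb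
    let r := min r0 r1 / 2
    have hr : 0 < r := half_pos (lt_min hr0 hr1)
    have hrr0 : r + r ≤ r0 := by simp only [r]; linarith [min_le_left r0 r1]
    have hrr1 : r + r ≤ r1 := by simp only [r]; linarith [min_le_right r0 r1]
    have hQR : pbQ r r ⊆ Metric.ball 0 R := pbQ_ball (by linarith)
    have hchar : ∀ z ∈ pbQ r r, φ z ∈ E.loop.img ↔ z.im = (fun _ : ℝ => (0:ℝ)) z.re := by
      intro z hz
      have hzre := abs_lt.1 hz.1
      constructor
      · rintro ⟨t, ht, htz⟩
        have htI : t ∈ Ioo (s - r0) (s + r0) := by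
          by_contra hcon
          exact hr1C (pbQ_ball hrr1 hz) ⟨t, ⟨ht, hcon⟩, htz⟩
        have htz' : D.γ t = φ z := by rw [← htz]; exact (E.σ_left (by linarith [htI.2])).symm
        have hball : (0:ℂ) + ((t - s : ℝ) : ℂ) ∈ Metric.ball (0:ℂ) R := by
          rw [zero_add, mem_ball_zero_iff, Complex.norm_real, Real.norm_eq_abs, abs_lt]
          constructor <;> linarith [htI.1, htI.2]
        have hfl := B.flow D.hΩ D.hF D.hγ (t := s) (u := t - s) (z := 0) hs0
          (by rw [add_sub_cancel]; linarith [ht.1, E.h1, hsa, show E.t₁ + D.ρ/2 ≤ t from ht.1])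
          (Metric.mem_ball_self hRpos) hball B.zero.symm
        rw [add_sub_cancel, htz'] at hfl
        have := B.inj (hQR hz) hball hfl
        rw [this]; simp
      · intro h
        have hz' : z = 0 + ((z.re : ℝ) : ℂ) := by
          apply Complex.ext <;> simp [h]
        have hfl := B.flow D.hΩ D.hF D.hγ (t := s) (u := z.re) (z := 0) hs0
          (by linarith [E.h1]) (Metric.mem_ball_self hRpos) (by rw [← hz']; exact hQR hz) B.zero.symm
        rw [← hz'] at hfl
        rw [← hfl]
        exact E.mem_img_left ⟨by linarith, by linarith⟩
    obtain ⟨h1, h2, h3, h4, h5⟩ := pb_chart (S := E.loop.img) (B.cont.mono hQR)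
      (fun V hV => B.opn V (hV.trans hQR)) continuous_const (fun _ => by simpa using hr) hchar rfl rfl
    refine ⟨_, _, h1, h2, h3, h4, ?_⟩
    have := h5 0 ⟨by simpa using hr, by simpa using hr⟩
    rw [B.zero, hsq] at this
    exact this

lemma integ_split {f : ℂ → ℂ} (hf : ContinuousOn f E.loop.img) : E.loop.integ f =
    (∫ t in (E.t₁ + D.ρ / 2)..(E.t₂ - D.ρ / 2), D.F (D.γ t) * f (D.γ t)) +
    ∫ t in (E.t₂ - D.ρ / 2)..(E.t₂ + D.ρ / 2), E.κ * D.F (D.ψ (E.conn (t - E.t₂))) * f (D.ψ (E.conn (t - E.t₂))) := by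
  have hi := E.loop.integrable hf
  have hi1 : IntervalIntegrable (fun t => E.v t * f (E.σ t)) MeasureTheory.volume (E.t₁ + D.ρ / 2) (E.t₂ - D.ρ / 2) :=
    hi.mono_set (by
      rw [uIcc_of_le E.a_le_c, uIcc_of_le E.loop.hab]
      exact Icc_subset_Icc_right E.c_le_b)
  have hi2 : IntervalIntegrable (fun t => E.v t * f (E.σ t)) MeasureTheory.volume (E.t₂ - D.ρ / 2) (E.t₂ + D.ρ / 2) :=
    hi.mono_set (by
      rw [uIcc_of_le E.c_le_b, uIcc_of_le E.loop.hab]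
      exact Icc_subset_Icc_left E.a_le_c)
  have h := intervalIntegral.integral_add_adjacent_intervals hi1 hi2
  refine h.symm.trans ?_
  congr 1
  · apply intervalIntegral.integral_congr
    intro t ht
    rw [uIcc_of_le E.a_le_c] at ht
    simp only
    rw [E.σ_left ht.2, show E.v t = _ from if_pos ht.2]
  · rw [intervalIntegral.integral_of_le E.c_le_b, intervalIntegral.integral_of_le E.c_le_b]
    refine MeasureTheory.setIntegral_congr_fun measurableSet_Ioc fun t ht => ?_
    beta_reduce
    rw [E.σ_right ht.1.le, show E.v t = _ from if_neg (not_le.2 ht.1)]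

lemma img_sub : E.loop.img ⊆ D.γ '' Ici 0 ∪ D.ψ '' Metric.closedBall 0 (2 * D.ρ) := by
  intro q hq
  rcases E.img_cases hq with ⟨t, ht, rfl⟩ | ⟨x, hx, rfl⟩
  · exact Or.inl ⟨t, E.left_sub ht, rfl⟩
  · exact Or.inr ⟨_, Metric.ball_subset_closedBall (E.Q_ball (E.conn_mem hx)), rfl⟩

lemma img_Ω {q : ℂ} (hq : q ∈ E.loop.img) : q ∈ D.Ω ∧ D.F q ≠ 0 := by
  rcases E.img_cases hq with ⟨t, ht, rfl⟩ | ⟨x, hx, rfl⟩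
  · exact ⟨(D.hγ t (E.left_sub ht)).1, D.nez t (E.left_sub ht)⟩
  · have := D.box.prop _ (E.Q_ball' (E.conn_mem hx))
    exact ⟨this.1, this.2.1⟩

lemma integ_inv : E.loop.integ (fun z => (D.F z)⁻¹) =
    ((E.t₂ - E.t₁ : ℝ) : ℂ) + ((E.y₁ - E.y₂ : ℝ) : ℂ) * Complex.I := by
  have hρ := D.ρpos
  have hρ' : (D.ρ : ℂ) ≠ 0 := by exact_mod_cast hρ.ne'
  rw [E.integ_split]
  · have e1 : (∫ t in (E.t₁ + D.ρ / 2)..(E.t₂ - D.ρ / 2), D.F (D.γ t) * (D.F (D.γ t))⁻¹) =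
        ∫ t in (E.t₁ + D.ρ / 2)..(E.t₂ - D.ρ / 2), (1:ℂ) := by
      apply intervalIntegral.integral_congr
      intro t ht
      rw [uIcc_of_le E.a_le_c] at ht
      exact mul_inv_cancel₀ (D.nez t (E.left_sub ht))
    have e2 : (∫ t in (E.t₂ - D.ρ / 2)..(E.t₂ + D.ρ / 2), E.κ * D.F (D.ψ (E.conn (t - E.t₂))) *
        (D.F (D.ψ (E.conn (t - E.t₂))))⁻¹) = ∫ t in (E.t₂ - D.ρ / 2)..(E.t₂ + D.ρ / 2), E.κ := by
      apply intervalIntegral.integral_congr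
      intro t ht
      rw [uIcc_of_le E.c_le_b] at ht
      simp only
      rw [mul_assoc, mul_inv_cancel₀ (D.box.prop _ (E.Q_ball' (E.ψconn_mem ht))).2.1, mul_one]
    rw [e1, e2, intervalIntegral.integral_const, intervalIntegral.integral_const, κ, lam]
    simp only [Complex.real_smul]
    push_cast
    field_simp
    ring
  · refine ContinuousOn.inv₀ (D.hF.continuousOn.mono fun q hq => (E.img_Ω hq).1) fun q hq => (E.img_Ω hq).2

end PBCross
namespace PBCross
variable {D : PBData} {δ : ℝ} (E : PBCross D δ)

noncomputable def far (w : ℂ) : ℂ := ∫ t in (E.t₁ + D.ρ / 2)..(E.t₂ - D.ρ / 2), D.F (D.γ t) * (D.γ t - w)⁻¹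

lemma far_cont {w : ℂ} (hw : w ∉ D.γ '' Icc (E.t₁ + D.ρ / 2) (E.t₂ - D.ρ / 2)) : ContinuousAt E.far w := by
  have hcont : ContinuousOn D.γ (Icc (E.t₁ + D.ρ / 2) (E.t₂ - D.ρ / 2)) := γ_cont.mono E.left_sub
  have hcomp := isCompact_Icc.image_of_continuousOn hcont
  have hne : ∀ w ∈ (D.γ '' Icc (E.t₁ + D.ρ / 2) (E.t₂ - D.ρ / 2))ᶜ, ∀ t ∈ Icc (E.t₁ + D.ρ / 2) (E.t₂ - D.ρ / 2),
      D.γ t - w ≠ 0 := fun w hw t ht h => hw ⟨t, ht, sub_eq_zero.1 h⟩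
  have hd : DifferentiableOn ℂ E.far (D.γ '' Icc (E.t₁ + D.ρ / 2) (E.t₂ - D.ρ / 2))ᶜ := by
    unfold far
    refine pb_hol E.a_le_c (((Fγ_cont (D := D)).mono E.left_sub).intervalIntegrable_of_Icc E.a_le_c)
      (Φ := fun t w => (D.γ t - w)⁻¹) ?_ ?_ ?_
    · intro t ht w hw
      exact ((differentiableAt_const _).sub differentiableAt_id).inv (hne w hw t ht) |>.differentiableWithinAt
    · intro w hw
      exact (hcont.sub continuousOn_const).inv₀ fun t ht => hne w hw t ht
    · intro w hw
      obtain ⟨r, hr, hb⟩ := Metric.isOpen_iff.1 hcomp.isClosed.isOpen_compl w hw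
      refine ⟨r/2, half_pos hr, (r/2)⁻¹, (Metric.ball_subset_ball (by linarith)).trans hb, fun t ht y hy => ?_⟩
      rw [norm_inv]
      refine inv_anti₀ (half_pos hr) ?_
      by_contra! h
      refine hb (a := D.γ t) ?_ ⟨t, ht, rfl⟩
      rw [Metric.mem_ball] at hy ⊢
      rw [← dist_eq_norm] at h
      linarith [dist_triangle (D.γ t) y w]
  exact hd.continuousOn.continuousAt (hcomp.isClosed.isOpen_compl.mem_nhds hw)

/-- Lower bound for the distance between the connector and a point above or below. -/
lemma conn_dist {x ε e : ℝ} (he : e = 1 ∨ e = -1) (hx : |x| ≤ D.ρ / 2)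
    (hQ : ((E.m + e * ε : ℝ) : ℂ) * Complex.I ∈ pbQ D.ρ δ) :
    ‖D.F D.p‖ ^ 2 / 8 * (x ^ 2 + ε ^ 2) ≤ ‖D.ψ (E.conn x) - D.ψ (((E.m + e * ε : ℝ) : ℂ) * Complex.I)‖ ^ 2 := by
  have h1 := D.box.lower (E.Q_ball' (E.conn_mem hx)) (E.Q_ball' hQ)
  have h2 : ‖E.conn x - ((E.m + e * ε : ℝ) : ℂ) * Complex.I‖ ^ 2 = x ^ 2 + (E.lam * x - e * ε) ^ 2 := by
    rw [← Complex.normSq_eq_norm_sq, Complex.normSq_apply]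
    simp [conn]
    ring
  have h3 : (x ^ 2 + ε ^ 2) / 2 ≤ x ^ 2 + (E.lam * x - e * ε) ^ 2 := by
    have h4 := abs_le.1 E.lam_le
    have h5 : E.lam ^ 2 ≤ 1 / 4 := by nlinarith
    have h6 : (E.lam * x) ^ 2 ≤ 1 / 4 * x ^ 2 := by rw [mul_pow]; exact mul_le_mul_of_nonneg_right h5 (sq_nonneg x)
    have he2 : (e * ε) ^ 2 = ε ^ 2 := by rcases he with rfl | rfl <;> ring
    nlinarith [sq_nonneg (2 * (E.lam * x) - e * ε)]
  have h7 := pow_le_pow_left₀ (by positivity) h1 2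
  rw [mul_pow, h2] at h7
  nlinarith [sq_nonneg (‖D.F D.p‖)]

lemma jump_conn {ε : ℝ} (hε : 0 < ε) (h1 : ((E.m + 1 * ε : ℝ) : ℂ) * Complex.I ∈ pbQ D.ρ δ)
    (h2 : ((E.m + (-1) * ε : ℝ) : ℂ) * Complex.I ∈ pbQ D.ρ δ) :
    ‖(∫ t in (E.t₂ - D.ρ / 2)..(E.t₂ + D.ρ / 2), E.κ * D.F (D.ψ (E.conn (t - E.t₂))) *
        ((D.ψ (E.conn (t - E.t₂)) - D.ψ (((E.m + 1 * ε : ℝ) : ℂ) * Complex.I))⁻¹ -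
          (D.ψ (E.conn (t - E.t₂)) - D.ψ (((E.m + (-1) * ε : ℝ) : ℂ) * Complex.I))⁻¹))‖ ≤ 72 * Real.pi := by
  refine le_trans ?_ (pb_arctan_int (a := E.t₂ - D.ρ / 2) (b := E.t₂ + D.ρ / 2) (c := E.t₂) hε)
  refine intervalIntegral.norm_integral_le_of_norm_le E.c_le_b ?_ ?_
  swap
  · have : ∀ t : ℝ, (t - E.t₂) ^ 2 + ε ^ 2 ≠ 0 := fun t => by positivity
    exact Continuous.intervalIntegrable (by fun_prop (disch := assumption)) _ _
  refine Eventually.of_forall fun t ht => ?_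
  set x := t - E.t₂ with hxdef
  have hx : |x| ≤ D.ρ / 2 := abs_le.2 ⟨by linarith [ht.1], by linarith [ht.2]⟩
  have d1 := E.conn_dist (Or.inl rfl) hx h1
  have d2 := E.conn_dist (Or.inr rfl) hx h2
  set wp := D.ψ (((E.m + 1 * ε : ℝ) : ℂ) * Complex.I)
  set wm := D.ψ (((E.m + (-1) * ε : ℝ) : ℂ) * Complex.I)
  set ζ := D.ψ (E.conn x)
  have hN : 0 < ‖D.F D.p‖ := norm_pos_iff.2 D.box.hne
  set N := ‖D.F D.p‖
  have hq : 0 < x ^ 2 + ε ^ 2 := by positivity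
  have hw : ‖wp - wm‖ ≤ 3 * N * ε := by
    have := D.box.upper (E.Q_ball' h1) (E.Q_ball' h2)
    rw [← sub_mul, norm_mul, Complex.norm_I, mul_one, ← Complex.ofReal_sub, Complex.norm_real, Real.norm_eq_abs,
      show E.m + 1 * ε - (E.m + (-1) * ε) = 2 * ε by ring, abs_of_pos (by linarith)] at this
    linarith
  have hκ : ‖E.κ‖ ≤ 3 / 2 := by
    have := norm_add_le (1:ℂ) (E.lam * Complex.I)
    rw [norm_one, norm_mul, Complex.norm_I, mul_one, Complex.norm_real, Real.norm_eq_abs] at this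
    exact this.trans (by linarith [E.lam_le])
  have hFb : ‖D.F ζ‖ ≤ 2 * N := (D.box.prop _ (E.Q_ball' (E.conn_mem hx))).2.2.1
  have p1 : 0 < ‖ζ - wp‖ := by
    by_contra! h
    have : ‖ζ - wp‖ = 0 := le_antisymm h (norm_nonneg _)
    rw [this] at d1
    have : 0 < N ^ 2 / 8 * (x ^ 2 + ε ^ 2) := by positivity
    linarith
  have p2 : 0 < ‖ζ - wm‖ := by
    by_contra! h
    have : ‖ζ - wm‖ = 0 := le_antisymm h (norm_nonneg _)
    rw [this] at d2
    have : 0 < N ^ 2 / 8 * (x ^ 2 + ε ^ 2) := by positivity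
    linarith
  have hprod : N ^ 2 / 8 * (x ^ 2 + ε ^ 2) ≤ ‖ζ - wp‖ * ‖ζ - wm‖ := by
    refine (pow_le_pow_iff_left₀ (by positivity) (by positivity) (n := 2) (by norm_num)).1 ?_
    rw [mul_pow ‖ζ - wp‖, pow_two (N ^ 2 / 8 * _)]
    exact mul_le_mul d1 d2 (by positivity) (by positivity)
  have hid : (ζ - wp)⁻¹ - (ζ - wm)⁻¹ = (wp - wm) / ((ζ - wp) * (ζ - wm)) := by
    rw [inv_sub_inv (norm_pos_iff.1 p1) (norm_pos_iff.1 p2)]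
    congr 1; ring
  rw [hid, norm_mul, norm_mul, norm_div, norm_mul]
  calc ‖E.κ‖ * ‖D.F ζ‖ * (‖wp - wm‖ / (‖ζ - wp‖ * ‖ζ - wm‖))
      ≤ 3 / 2 * (2 * N) * ((3 * N * ε) / (N ^ 2 / 8 * (x ^ 2 + ε ^ 2))) := by
        gcongr
    _ = 72 * (ε / (x ^ 2 + ε ^ 2)) := by field_simp; ring

lemma num_le {w : ℂ} (hw : w ∉ E.loop.img) : |E.loop.num w| ≤ 37 := by
  have hρ := D.ρpos
  have h00 : |(0:ℝ)| ≤ D.ρ / 2 := by rw [abs_zero]; linarith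
  have hc0 : E.conn 0 = (E.m : ℂ) * Complex.I := by simp [conn]
  have hm : (E.m : ℂ) * Complex.I ∈ pbQ D.ρ δ := hc0 ▸ E.conn_mem h00
  have hg0 : E.g 0 = E.m := by rw [E.g_mid h00]; ring
  have hq0 : D.ψ ((E.m : ℂ) * Complex.I) ∈ E.loop.img := hc0 ▸ E.mem_img_conn h00
  have hfar0 : D.ψ ((E.m : ℂ) * Complex.I) ∉ D.γ '' Icc (E.t₁ + D.ρ / 2) (E.t₂ - D.ρ / 2) := by
    rintro ⟨t, ht, h⟩
    have := PBData.visit E.hδ' hm (by linarith [ht.1, E.h1]) h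
    simp only [Complex.mul_re, Complex.ofReal_re, Complex.I_re, mul_zero, Complex.ofReal_im, Complex.I_im, zero_mul, sub_zero] at this
    rcases E.cons _ _ this with h1 | h1
    · linarith [ht.1]
    · linarith [ht.2]
  have hline : ∀ e : ℝ, Tendsto (fun ε : ℝ => ((E.m + e * ε : ℝ) : ℂ) * Complex.I) (𝓝[>] 0) (𝓝 ((E.m : ℂ) * Complex.I)) := by
    intro e
    have : Continuous (fun ε : ℝ => ((E.m + e * ε : ℝ) : ℂ) * Complex.I) := by fun_prop
    have := this.tendsto 0
    simp only [mul_zero, add_zero] at this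
    exact this.mono_left nhdsWithin_le_nhds
  have hQn := (pbQ_open D.ρ δ).mem_nhds hm
  have hψc : ContinuousAt D.ψ ((E.m : ℂ) * Complex.I) := (D.box.prop _ (E.Q_ball' hm)).2.2.2.continuousAt
  have hft : ∀ e : ℝ, Tendsto (fun ε : ℝ => E.far (D.ψ (((E.m + e * ε : ℝ) : ℂ) * Complex.I))) (𝓝[>] 0)
      (𝓝 (E.far (D.ψ ((E.m : ℂ) * Complex.I)))) := fun e =>
    (E.far_cont hfar0).tendsto.comp (hψc.tendsto.comp (hline e))
  have hdiff := ((hft 1).sub (hft (-1))).norm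
  rw [sub_self, norm_zero] at hdiff
  obtain ⟨ε, ⟨⟨hP, hQ1⟩, hQ2⟩, hε⟩ := (((hdiff.eventually_le_const one_pos).and ((hline 1).eventually hQn)).and
    ((hline (-1)).eventually hQn)).and self_mem_nhdsWithin |>.exists
  replace hε : 0 < ε := hε
  obtain ⟨a1, a2, a3, a4, a5⟩ := pb_chart (S := E.loop.img) (D.box.cont.mono E.Q_ball')
      (fun V hV => D.box.opn V (hV.trans E.Q_ball')) E.g_cont E.g_lt (fun z hz => E.img_box hz) rfl rfl
  have hA : D.ψ (((E.m + 1 * ε : ℝ) : ℂ) * Complex.I) ∈ D.ψ '' pbSide D.ρ δ E.g 1 := by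
    refine ⟨_, ⟨hQ1, ?_⟩, rfl⟩
    simp only [Complex.mul_re, Complex.mul_im, Complex.ofReal_re, Complex.I_re, mul_zero, Complex.ofReal_im, Complex.I_im,
      zero_mul, sub_zero, mul_one, add_zero, hg0]
    linarith
  have hB : D.ψ (((E.m + (-1) * ε : ℝ) : ℂ) * Complex.I) ∈ D.ψ '' pbSide D.ρ δ E.g (-1) := by
    refine ⟨_, ⟨hQ2, ?_⟩, rfl⟩
    simp only [Complex.mul_re, Complex.mul_im, Complex.ofReal_re, Complex.I_re, mul_zero, Complex.ofReal_im, Complex.I_im,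
      zero_mul, sub_zero, mul_one, add_zero, hg0]
    linarith
  refine (E.loop.num_bound E.hloc hq0 a1 a2 a3 a4 (a5 _ hm).1 hA hB hw).trans ?_
  have i1 := a3 hA
  have i2 := a4 hB
  have hj := E.jump_conn hε hQ1 hQ2
  set wp := D.ψ (((E.m + 1 * ε : ℝ) : ℂ) * Complex.I)
  set wm := D.ψ (((E.m + (-1) * ε : ℝ) : ℂ) * Complex.I)
  have hcf : ∀ w, w ∉ E.loop.img → ContinuousOn (fun s : ℂ => (s - w)⁻¹) E.loop.img := fun w hw =>
    (continuousOn_id.sub continuousOn_const).inv₀ fun s hs => E.loop.sub_ne hw hs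
  have hinteg : ∀ w, w ∉ E.loop.img → IntervalIntegrable (fun t => E.κ * D.F (D.ψ (E.conn (t - E.t₂))) *
      (D.ψ (E.conn (t - E.t₂)) - w)⁻¹) MeasureTheory.volume (E.t₂ - D.ρ / 2) (E.t₂ + D.ρ / 2) := by
    intro w hw
    refine ContinuousOn.intervalIntegrable_of_Icc E.c_le_b (E.Fψ_cont.mul ?_)
    refine (E.ψconn_cont.sub continuousOn_const).inv₀ fun t ht => E.loop.sub_ne hw (E.mem_img_conn ?_)
    exact abs_le.2 ⟨by linarith [ht.1], by linarith [ht.2]⟩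
  have hwind : ‖E.loop.wind wp - E.loop.wind wm‖ ≤ 1 + 72 * Real.pi := by
    unfold CLoop.wind
    rw [E.integ_split (hcf _ i1), E.integ_split (hcf _ i2)]
    simp only [mul_sub] at hj
    rw [intervalIntegral.integral_sub (hinteg _ i1) (hinteg _ i2)] at hj
    rw [add_sub_add_comm]
    exact (norm_add_le _ _).trans (add_le_add hP hj)
  rw [E.loop.num_spec i1, E.loop.num_spec i2, ← sub_mul, norm_mul] at hwind
  have hpi := Real.pi_gt_three
  have e1 : ‖(2 * Real.pi * Complex.I : ℂ)‖ = 2 * Real.pi := by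
    simp [abs_of_pos Real.pi_pos]
  have e2 : ‖((E.loop.num wp : ℂ) - (E.loop.num wm : ℂ))‖ = |((E.loop.num wp - E.loop.num wm : ℤ) : ℝ)| := by
    rw [← Int.cast_sub, Complex.norm_intCast]
  rw [e1, e2] at hwind
  have h3 : |((E.loop.num wp - E.loop.num wm : ℤ) : ℝ)| < 38 := by
    by_contra! hcon
    nlinarith
  have h4 : |E.loop.num wp - E.loop.num wm| < 38 := by exact_mod_cast h3
  linarith

end PBCross

lemma pb_preconn {Ω : Set ℂ} (hsc : SimplyConnectedSpace Ω) : IsPreconnected Ω := by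
  have : PathConnectedSpace Ω := inferInstance
  exact isPreconnected_iff_preconnectedSpace.2 inferInstance

lemma pb_no_acc {Ω : Set ℂ} (hΩ : IsOpen Ω) (hsc : SimplyConnectedSpace Ω) {F : ℂ → ℂ} (hF : DifferentiableOn ℂ F Ω)
    (hF0 : ∃ z ∈ Ω, F z ≠ 0) {a : ℂ} (ha : a ∈ Ω) : ∀ᶠ z in 𝓝[≠] a, F z ≠ 0 := by
  by_contra hcon
  have hf : ∃ᶠ z in 𝓝[≠] a, F z = 0 := by
    rw [not_eventually] at hcon
    exact hcon.mono fun z hz => not_not.1 hz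
  obtain ⟨z, hz, hne⟩ := hF0
  exact hne ((hF.analyticOnNhd hΩ).eqOn_zero_of_preconnected_of_frequently_eq_zero (pb_preconn hsc) ha hf hz)

lemma pb_zeros_finite {Ω : Set ℂ} (hΩ : IsOpen Ω) (hsc : SimplyConnectedSpace Ω) {F : ℂ → ℂ} (hF : DifferentiableOn ℂ F Ω)
    (hF0 : ∃ z ∈ Ω, F z ≠ 0) {C : Set ℂ} (hC : IsCompact C) (hCΩ : C ⊆ Ω) : {z | z ∈ C ∧ F z = 0}.Finite := by
  by_contra hinf
  obtain ⟨x, hx, hacc⟩ := Set.Infinite.exists_accPt_of_subset_isCompact hinf hC (fun z hz => hz.1)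
  have h1 := pb_no_acc hΩ hsc hF hF0 (hCΩ hx)
  have h2 := accPt_iff_frequently_nhdsNE.1 hacc
  obtain ⟨z, hz, hz'⟩ := (h2.and_eventually h1).exists
  exact hz' hz.2

lemma pb_contra (D : PBData) (hsc : SimplyConnectedSpace D.Ω) {K : Set ℂ} (hK : IsCompact K) (hKΩ : K ⊆ D.Ω)
    (hγK : ∀ t ∈ Ici (0:ℝ), D.γ t ∈ K) : False := by
  have hρ := D.ρpos
  have hsubball : Metric.closedBall (0:ℂ) (2 * D.ρ) ⊆ Metric.ball 0 (4 * D.ρ) :=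
    Metric.closedBall_subset_ball (by linarith)
  let K' := K ∪ D.ψ '' Metric.closedBall 0 (2 * D.ρ)
  have hK' : IsCompact K' := hK.union ((isCompact_closedBall _ _).image_of_continuousOn (D.box.cont.mono hsubball))
  have hK'Ω : K' ⊆ D.Ω := by
    refine union_subset hKΩ ?_
    rintro _ ⟨z, hz, rfl⟩
    exact (D.box.prop _ (hsubball hz)).1
  have himg : ∀ δ (E : PBCross D δ), E.loop.img ⊆ K' := by
    intro δ E
    refine E.img_sub.trans (union_subset_union_left _ ?_)
    rintro _ ⟨t, ht, rfl⟩
    exact hγK t ht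
  obtain ⟨r, hr, hrΩ⟩ := hK'.exists_thickening_subset_open D.hΩ hK'Ω
  obtain ⟨R0, hR0⟩ := hK'.isBounded.subset_ball (0:ℂ)
  let C := Metric.closedBall (0:ℂ) R0 \ Metric.thickening r D.Ωᶜ
  have hC : IsCompact C := (isCompact_closedBall _ _).diff Metric.isOpen_thickening
  have hCΩ : C ⊆ D.Ω := by
    intro z hz
    by_contra h
    exact hz.2 (Metric.self_subset_thickening hr _ h)
  have hpΩ : D.p ∈ D.Ω := by
    have := (D.box.prop 0 (Metric.mem_ball_self D.box.Rpos)).1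
    rwa [D.box.zero] at this
  have hZ := pb_zeros_finite D.hΩ hsc D.hF ⟨D.p, hpΩ, D.box.hne⟩ hC hCΩ
  set Z := {z | z ∈ C ∧ D.F z = 0} with hZdef
  have hout : ∀ δ (E : PBCross D δ) w, w ∉ C → E.loop.num w = 0 := by
    intro δ E w hw
    have hi := himg δ E
    by_cases hb : w ∈ Metric.ball (0:ℂ) R0
    · have hth : w ∈ Metric.thickening r D.Ωᶜ := by
        by_contra h
        exact hw ⟨Metric.ball_subset_closedBall hb, h⟩
      obtain ⟨b, hbΩ, hwb⟩ := Metric.mem_thickening_iff.1 hth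
      have hball : Metric.ball b r ⊆ E.loop.imgᶜ := by
        intro y hy hyi
        exact hbΩ (hrΩ (Metric.mem_thickening_iff.2 ⟨y, hi hyi, by rw [dist_comm]; exact hy⟩))
      rw [E.loop.num_const (convex_ball b r).isPreconnected hball hwb (Metric.mem_ball_self hr)]
      exact E.loop.num_zero_of_wind (hball (Metric.mem_ball_self hr))
        (E.loop.wind_zero_of_sc D.hΩ hsc (hi.trans hK'Ω) hbΩ)
    · exact E.loop.num_zero_of_wind (fun h => hb (hR0 (hi h))) (E.loop.wind_zero_of_ball (hi.trans hR0) hb)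
  have hex : ∀ n : ℕ, Nonempty (PBCross D (D.ρ / 4 / (n + 1))) := by
    intro n
    have h0 : 0 < D.ρ / 4 / ((n:ℝ) + 1) := by positivity
    have h1 : D.ρ / 4 / ((n:ℝ) + 1) ≤ D.ρ / 4 := div_le_self (by positivity) (by linarith [n.cast_nonneg (α := ℝ)])
    obtain ⟨t₁, y₁, t₂, y₂, a1, a2, a3, a4, a5⟩ := PBData.exists_consec (D := D) h0 (by linarith)
    exact ⟨⟨t₁, y₁, t₂, y₂, h0, by linarith, a1, a2, a3, a4, a5⟩⟩
  let E : ∀ n : ℕ, PBCross D (D.ρ / 4 / (n + 1)) := fun n => (hex n).some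
  have hnot : ∀ n, ∀ z ∈ Z, z ∉ (E n).loop.img := fun n z hz h => ((E n).img_Ω h).2 hz.2
  have : Finite Z := hZ
  let f : ℕ → (Z → Icc (-37 : ℤ) 37) := fun n z => ⟨(E n).loop.num z, abs_le.1 ((E n).num_le (hnot n z z.2))⟩
  obtain ⟨y, hy⟩ := Finite.exists_infinite_fiber f
  have hy' : (f ⁻¹' {y}).Infinite := Set.infinite_coe_iff.1 hy
  obtain ⟨n0, hn0⟩ := hy'.nonempty
  have heq : ∀ n ∈ f ⁻¹' {y}, (E n).y₁ - (E n).y₂ = (E n0).y₁ - (E n0).y₂ := by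
    intro n hn
    have hfn : f n = f n0 := hn.trans hn0.symm
    have hUo : IsOpen {z | z ∈ D.Ω ∧ D.F z ≠ 0} := by
      rw [isOpen_iff_mem_nhds]
      rintro z ⟨hz, hFz⟩
      filter_upwards [D.hΩ.mem_nhds hz, (D.hF.continuousOn.continuousAt (D.hΩ.mem_nhds hz)).eventually_ne hFz] with x h1 h2
      exact ⟨h1, h2⟩
    have hd := CLoop.dixon (E n).loop (E n0).loop hUo (f := fun z => (D.F z)⁻¹)
      ((D.hF.mono fun z hz => hz.1).inv fun z hz => hz.2) (fun q hq => (E n).img_Ω hq) (fun q hq => (E n0).img_Ω hq) ?_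
    · rw [(E n).integ_inv, (E n0).integ_inv] at hd
      have := congrArg Complex.im hd
      simpa using this
    · intro w hw
      by_cases hwC : w ∈ C
      · have hwZ : w ∈ Z := ⟨hwC, by
          by_contra h
          exact hw ⟨hCΩ hwC, h⟩⟩
        exact congrArg Subtype.val (congrFun hfn ⟨w, hwZ⟩)
      · rw [hout _ _ _ hwC, hout _ _ _ hwC]
  have hzero : (E n0).y₁ - (E n0).y₂ = 0 := by
    by_contra hne
    have hpos : 0 < |(E n0).y₁ - (E n0).y₂| := abs_pos.2 hne
    obtain ⟨M, hM⟩ := exists_nat_gt (D.ρ / 4 * 2 / |(E n0).y₁ - (E n0).y₂|)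
    obtain ⟨n, hn, hMn⟩ := hy'.exists_gt M
    have h1 := heq n hn
    have a1 := abs_lt.1 (E n).c1.2.1
    have a2 := abs_lt.1 (E n).c2.2.1
    have h2 : |(E n0).y₁ - (E n0).y₂| < 2 * (D.ρ / 4 / ((n:ℝ) + 1)) := by
      rw [← h1, abs_lt]; constructor <;> linarith
    have hMn' : (M:ℝ) < n := by exact_mod_cast hMn
    have hn0 : (0:ℝ) < (n:ℝ) + 1 := by positivity
    rw [div_lt_iff₀ hpos] at hM
    have h3 : 2 * (D.ρ / 4 / ((n:ℝ) + 1)) * ((n:ℝ) + 1) = D.ρ / 4 * 2 := by field_simp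
    have h4 := mul_lt_mul_of_pos_right h2 hn0
    rw [h3] at h4
    nlinarith
  have hyy : (E n0).y₁ = (E n0).y₂ := sub_eq_zero.1 hzero
  have hγγ : D.γ (E n0).t₁ = D.γ (E n0).t₂ := by rw [(E n0).c1.2.2, (E n0).c2.2.2, hyy]
  have := D.inj (E n0).c1.1 (E n0).c2.1 hγγ
  exact absurd this (E n0).hlt.ne

lemma pb_main (Ω : Set ℂ) (hΩ : IsOpen Ω) (hsc : SimplyConnectedSpace Ω)
    (F : ℂ → ℂ) (hF : DifferentiableOn ℂ F Ω) (hF0 : ∃ z ∈ Ω, F z ≠ 0)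
    (K : Set ℂ) (hK : IsCompact K) (hKΩ : K ⊆ Ω)
    (γ : ℝ → ℂ) (hγ : IsSolOn F Ω (Ici 0) γ) (hγK : ∀ t ∈ Ici (0 : ℝ), γ t ∈ K) :
    (∃ T > 0, ∀ t ∈ Ici (0 : ℝ), γ (t + T) = γ t) ∨
    (∃ a ∈ Ω, F a = 0 ∧ Tendsto γ atTop (nhds a)) := by
  have hcont : ContinuousOn γ (Ici 0) := fun t ht => (hγ t ht).2.continuousWithinAt
  by_cases hinj : InjOn γ (Ici 0)
  swap
  · left
    have : ∃ s t, 0 ≤ s ∧ s < t ∧ γ s = γ t := by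
      simp only [InjOn, not_forall] at hinj
      obtain ⟨s, hs, t, ht, h, hne⟩ := hinj
      rcases lt_or_gt_of_ne hne with h1 | h1
      · exact ⟨s, t, hs, h1, h⟩
      · exact ⟨t, s, ht, h1, h.symm⟩
    obtain ⟨s, t, hs, hst, h⟩ := this
    refine ⟨t - s, sub_pos.2 hst, fun x hx => ?_⟩
    have hsub : Icc (0:ℝ) (max s x) ⊆ Ici 0 := fun u hu => hu.1
    have key := pb_uniq hΩ hF (a := 0) (b := max s x) (α := fun u => γ (u + (t - s))) (β := γ) ?_
      (fun u hu => ⟨(hγ u (hsub hu)).1, (hγ u (hsub hu)).2.mono hsub⟩) (t₀ := s) ⟨hs, le_max_left _ _⟩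
      (by simp [h])
    · exact key ⟨hx, le_max_right _ _⟩
    · intro u hu
      have hu0 : 0 ≤ u + (t - s) := by linarith [hu.1]
      refine ⟨(hγ _ hu0).1, ?_⟩
      have h1 := (hγ _ hu0).2
      have h2 : HasDerivWithinAt (fun u : ℝ => u + (t - s)) 1 (Icc 0 (max s x)) u :=
        ((hasDerivAt_id u).add_const (t - s)).hasDerivWithinAt
      have h3 := h1.scomp u h2 (fun w hw => by rw [mem_Ici]; linarith [hw.1])
      rw [one_smul] at h3
      exact h3
  right
  have hnez : ∀ t, 0 ≤ t → F (γ t) ≠ 0 := by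
    intro t ht h0
    have hsub : Icc t (t+1) ⊆ Ici 0 := fun u hu => ht.trans hu.1
    have key := pb_uniq hΩ hF (a := t) (b := t + 1) (α := γ) (β := fun _ => γ t)
      (fun u hu => ⟨(hγ u (hsub hu)).1, (hγ u (hsub hu)).2.mono hsub⟩)
      (fun u hu => ⟨(hγ t ht).1, by rw [h0]; exact hasDerivWithinAt_const _ _ _⟩) (t₀ := t) ⟨le_rfl, by linarith⟩ rfl
    have h1 : γ (t + 1) = γ t := key ⟨by linarith, le_rfl⟩
    have := hinj (show (0:ℝ) ≤ t + 1 by linarith) ht h1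
    linarith
  have hzero : ∀ p ∈ K, MapClusterPt p atTop γ → F p = 0 := by
    intro p hp hcl
    by_contra hne
    obtain ⟨R, ψ, B⟩ := pb_exists_box hΩ hF (hKΩ hp) hne
    exact pb_contra ⟨Ω, hΩ, F, hF, γ, hγ, hinj, p, R / 4, ψ, by rwa [mul_div_cancel₀ R (by norm_num)], hcl, hnez⟩
      hsc hK hKΩ hγK
  have hev : ∀ᶠ t in atTop, γ t ∈ K := by
    filter_upwards [eventually_ge_atTop (0:ℝ)] with t ht using hγK t ht
  obtain ⟨a, haK, hcl⟩ := hK.exists_mapClusterPt_of_frequently hev.frequently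
  refine ⟨a, hKΩ haK, hzero a haK hcl, ?_⟩
  have hiso := pb_no_acc hΩ hsc hF hF0 (hKΩ haK)
  rw [eventually_nhdsWithin_iff] at hiso
  obtain ⟨r, hr, hrz⟩ := Metric.eventually_nhds_iff.1 hiso
  rw [Metric.tendsto_nhds]
  intro ε' hε'
  let ε := min ε' (r / 2)
  have hε : 0 < ε := lt_min hε' (half_pos hr)
  have hεr : ε < r := (min_le_right _ _).trans_lt (by linarith)
  suffices hs : ∀ᶠ t in atTop, dist (γ t) a < ε by
    filter_upwards [hs] with t ht using ht.trans_le (min_le_left _ _)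
  by_contra hcon
  rw [not_eventually] at hcon
  have hfr : ∃ᶠ t in atTop, γ t ∈ K ∩ Metric.sphere a ε := by
    rw [frequently_atTop]
    intro N
    obtain ⟨t1, ht1, hfar⟩ := (frequently_atTop.1 hcon) (max N 0)
    have hfr2 : ∃ᶠ t in atTop, γ t ∈ Metric.ball a ε := hcl.frequently (Metric.ball_mem_nhds a hε)
    obtain ⟨t2, ht2, hnear⟩ := (frequently_atTop.1 hfr2) t1
    have ht10 : 0 ≤ t1 := (le_max_right _ _).trans ht1
    have hsub2 : Icc t1 t2 ⊆ Ici (0:ℝ) := fun u hu => ht10.trans hu.1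
    have hc : ContinuousOn (fun t => dist (γ t) a) (Icc t1 t2) :=
      continuous_dist.comp_continuousOn (ContinuousOn.prodMk (hcont.mono hsub2) continuousOn_const)
    obtain ⟨t, ht, hte⟩ := intermediate_value_Icc' ht2 hc ⟨le_of_lt hnear, not_lt.1 hfar⟩
    exact ⟨t, (le_max_left _ _).trans (ht1.trans ht.1), hγK t (ht10.trans ht.1), hte⟩
  obtain ⟨b, hb, hbcl⟩ := (hK.inter_right Metric.isClosed_sphere).exists_mapClusterPt_of_frequently hfr
  have hbd : dist b a = ε := hb.2
  refine hrz (y := b) (by rw [hbd]; exact hεr) ?_ (hzero b hb.1 hbcl)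
  intro hba
  rw [mem_singleton_iff.1 hba, dist_self] at hbd
  exact hε.ne hbd

/-- Poincaré–Bendixson for holomorphic flows: if `Ω ⊆ ℂ` is open and simply
connected, `F` holomorphic on `Ω` with `F ≢ 0`, `K ⊆ Ω` compact and `γ : [0,∞) → K` a
solution of `ẋ = F(x)`, then either the orbit is periodic, or `γ` tends to a single
equilibrium `a ∈ Ω`. -/
theorem stmt_15 (Ω : Set ℂ) (hΩ : IsOpen Ω) (hsc : SimplyConnectedSpace Ω)
    (F : ℂ → ℂ) (hF : DifferentiableOn ℂ F Ω) (hF0 : ∃ z ∈ Ω, F z ≠ 0)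
    (K : Set ℂ) (hK : IsCompact K) (hKΩ : K ⊆ Ω)
    (γ : ℝ → ℂ) (hγ : IsSolOn F Ω (Ici 0) γ) (hγK : ∀ t ∈ Ici (0 : ℝ), γ t ∈ K) :
    (∃ T > 0, ∀ t ∈ Ici (0 : ℝ), γ (t + T) = γ t) ∨
    (∃ a ∈ Ω, F a = 0 ∧ Tendsto γ atTop (nhds a)) := by
  exact pb_main Ω hΩ hsc F hF hF0 K hK hKΩ γ hγ hγK
end
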